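/- Let p, q, s be distinct primes with p ≡ 5 (mod 8), q ≡ 3 (mod 8), s ≡ 3 (mod 4), (p/q) = (p/s) = 1. Then the 2-Sylow subgroup of the ideal class group of K = ℚ(√(2pq), √(ps)) is isomorphic to ℤ/2ℤ × ℤ/2ℤ. -/

import Mathlib

open NumberField

/-- The real biquadratic field `K = ℚ(√(2pq), √(ps))`, realized inside `ℂ`. -/
noncomputable def fieldK (p q s : ℕ) : IntermediateField ℚ ℂ :=
  IntermediateField.adjoin ℚ
    {((Real.sqrt (2 * p * q) : ℝ) : ℂ), ((Real.sqrt (p * s) : ℝ) : ℂ)}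

namespace TwoClass

/-- Clearing denominators in a norm equation, prime to a ramified prime. -/
lemma nt0 (l : ℕ) (hl : l.Prime) (d M : ℤ) (hd : (l : ℤ) ∣ d) (hd2 : ¬ (l : ℤ) ^ 2 ∣ d)
    (u v : ℚ) (h : (M : ℚ) = u ^ 2 - d * v ^ 2) :
    ∃ z U V : ℤ, ¬ (l : ℤ) ∣ z ∧ M * z ^ 2 = U ^ 2 - d * V ^ 2 := by
  have hlp : Prime (l : ℤ) := Nat.prime_iff_prime_int.mp hl
  have key : ∀ n : ℕ, 0 < n → ∀ U V : ℤ, M * (n : ℤ) ^ 2 = U ^ 2 - d * V ^ 2 →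
      ∃ z U V : ℤ, ¬ (l : ℤ) ∣ z ∧ M * z ^ 2 = U ^ 2 - d * V ^ 2 := by
    intro n
    induction n using Nat.strong_induction_on with
    | _ n ih =>
      intro hn U V hUV
      by_cases hz : (l : ℤ) ∣ n
      · obtain ⟨k, rfl⟩ := Int.natCast_dvd_natCast.mp hz
        obtain ⟨e, rfl⟩ := hd
        have hU : (l : ℤ) ∣ U := by
          apply hlp.dvd_of_dvd_pow (n := 2)
          refine ⟨M * l * k ^ 2 + e * V ^ 2, ?_⟩
          push_cast at hUV
          linear_combination -hUV
        obtain ⟨U', rfl⟩ := hU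
        have hl0 : (l : ℤ) ≠ 0 := hlp.ne_zero
        have h1 : (l : ℤ) * (M * k ^ 2 - U' ^ 2) = - (e * V ^ 2) := by
          apply mul_left_cancel₀ hl0
          push_cast at hUV
          linear_combination hUV
        have hV : (l : ℤ) ∣ V := by
          have : (l : ℤ) ∣ e * V ^ 2 := by
            rw [← dvd_neg, ← h1]; exact dvd_mul_right _ _
          rcases hlp.dvd_or_dvd this with h2 | h2
          · exact absurd (by rw [pow_two]; exact mul_dvd_mul_left _ h2) hd2
          · exact hlp.dvd_of_dvd_pow h2
        obtain ⟨V', rfl⟩ := hV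
        have hk : 0 < k := Nat.pos_of_mul_pos_left hn
        refine ih k ?_ hk U' V' ?_
        · have := hl.two_le
          nlinarith
        · apply mul_left_cancel₀ hl0
          linear_combination h1
      · exact ⟨n, U, V, hz, hUV⟩
  have hu := Rat.mul_den_eq_num u
  have hv := Rat.mul_den_eq_num v
  refine key (u.den * v.den) (Nat.mul_pos u.den_pos v.den_pos) (u.num * v.den) (v.num * u.den) ?_
  have : (M : ℚ) * (u.den * v.den) ^ 2 = (u.num * v.den) ^ 2 - d * (v.num * u.den) ^ 2 := by
    rw [h, ← hu, ← hv]
    ring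
  exact_mod_cast this

lemma nt1 (l : ℕ) [Fact l.Prime] (d M : ℤ) (hd : (l : ℤ) ∣ d) (hd2 : ¬ (l : ℤ) ^ 2 ∣ d)
    (hM : ¬ (l : ℤ) ∣ M) (u v : ℚ) (h : (M : ℚ) = u ^ 2 - d * v ^ 2) : legendreSym l M = 1 := by
  obtain ⟨z, U, V, hz, e⟩ := nt0 l Fact.out d M hd hd2 u v h
  have hd0 : (d : ZMod l) = 0 := (ZMod.intCast_zmod_eq_zero_iff_dvd d l).2 hd
  have hz0 : (z : ZMod l) ≠ 0 := fun h => hz ((ZMod.intCast_zmod_eq_zero_iff_dvd z l).1 h)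
  have hM0 : (M : ZMod l) ≠ 0 := fun h => hM ((ZMod.intCast_zmod_eq_zero_iff_dvd M l).1 h)
  rw [legendreSym.eq_one_iff l hM0]
  have e' : (M : ZMod l) * z ^ 2 = U ^ 2 := by
    have := congrArg (Int.cast : ℤ → ZMod l) e
    push_cast at this
    rw [this, hd0]; ring
  refine ⟨U / z, ?_⟩
  field_simp
  rw [e']

lemma nt2 (d M : ℤ) (hd : d % 8 = 2) (hM : M % 2 = 1) (u v : ℚ)
    (h : (M : ℚ) = u ^ 2 - d * v ^ 2) : M % 8 = 1 ∨ M % 8 = 7 := by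
  obtain ⟨z, U, V, hz, e⟩ := nt0 2 Nat.prime_two d M (by norm_num; omega) (by norm_num; omega) u v h
  have hz' : z % 2 = 1 := by push_cast at hz; omega
  have h1 : ∀ x : ℤ, x % 2 = 1 → x ^ 2 % 8 = 1 := by
    intro x hx
    have : x % 8 = 1 ∨ x % 8 = 3 ∨ x % 8 = 5 ∨ x % 8 = 7 := by omega
    rcases this with h | h | h | h <;> simp [pow_two, Int.mul_emod, h]
  have hz2 := h1 z hz'
  have e1 : (M * z ^ 2) % 8 = M % 8 := by rw [Int.mul_emod, hz2]; simp
  have e2 : (d * V ^ 2) % 8 = 2 * (V ^ 2 % 8) % 8 := by rw [Int.mul_emod, hd]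
  have hV : V ^ 2 % 8 = 1 ∨ V ^ 2 % 8 = 0 ∨ V ^ 2 % 8 = 4 := by
    have : V % 8 = 0 ∨ V % 8 = 1 ∨ V % 8 = 2 ∨ V % 8 = 3 ∨ V % 8 = 4 ∨ V % 8 = 5 ∨ V % 8 = 6 ∨
      V % 8 = 7 := by omega
    rcases this with h | h | h | h | h | h | h | h <;> simp [pow_two, Int.mul_emod, h]
  have hU : U ^ 2 % 8 = 1 ∨ U ^ 2 % 8 = 0 ∨ U ^ 2 % 8 = 4 := by
    have : U % 8 = 0 ∨ U % 8 = 1 ∨ U % 8 = 2 ∨ U % 8 = 3 ∨ U % 8 = 4 ∨ U % 8 = 5 ∨ U % 8 = 6 ∨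
      U % 8 = 7 := by omega
    rcases this with h | h | h | h | h | h | h | h <;> simp [pow_two, Int.mul_emod, h]
  omega

/-- An integer exactly divisible by a prime is not a rational square. -/
lemma not_sq (l : ℕ) (hl : l.Prime) (N : ℤ) (h1 : (l : ℤ) ∣ N) (h2 : ¬ (l : ℤ) ^ 2 ∣ N) (w : ℚ)
    (h : (N : ℚ) = w ^ 2) : False := by
  have hlp : Prime (l : ℤ) := Nat.prime_iff_prime_int.mp hl
  have : IsSquare N := by
    rw [← Rat.isSquare_intCast_iff]
    exact ⟨w, by rw [h]; ring⟩
  obtain ⟨x, hx⟩ := this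
  have : (l : ℤ) ∣ x := hlp.dvd_of_dvd_pow (n := 2) (by rw [pow_two, ← hx]; exact h1)
  exact h2 (by rw [hx, pow_two]; exact mul_dvd_mul this this)

/-- parity of valuations at primes not dividing `2 d n`. -/
lemma nt3 (l : ℕ) (hl : l.Prime) (hl2 : l ≠ 2) (d : ℤ) (hd : ¬ (l : ℤ) ∣ d) (n : ℕ)
    (hn : ¬ l ∣ n) (X : ℤ) (y w : ℚ) (m : ℕ) (hm : l ∣ m) (hm2 : Squarefree m) (e : ℤ)
    (he : e = 1 ∨ e = -1) (hw : w ≠ 0) (hy : y ≠ 0)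
    (h : ((X : ℚ) / 2) ^ 2 - d * y ^ 2 = n ^ 2) (ht : (X : ℚ) + 2 * n = e * m * w ^ 2) : False := by
  have := Fact.mk hl
  have hlp : Prime (l : ℤ) := Nat.prime_iff_prime_int.mp hl
  have hX1 : (X : ℚ) + 2 * n ≠ 0 := by
    rw [ht]
    have : m ≠ 0 := hm2.ne_zero
    rcases he with rfl | rfl <;> simp [this, hw]
  have hd0 : (d : ℚ) ≠ 0 := by
    intro h0; apply hd; rw [Int.cast_eq_zero] at h0; rw [h0]; exact dvd_zero _
  have hprod : ((X : ℚ) + 2 * n) * ((X : ℚ) - 2 * n) = d * (2 * y) ^ 2 := by linear_combination 4 * h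
  have hX2 : (X : ℚ) - 2 * n ≠ 0 := by
    intro h0; rw [h0, mul_zero] at hprod
    have : (d : ℚ) * (2 * y) ^ 2 ≠ 0 := by positivity
    exact this hprod.symm
  have v1 : padicValRat l ((X : ℚ) + 2 * n) = 1 + 2 * padicValRat l w := by
    have hm0 : (m : ℚ) ≠ 0 := by exact_mod_cast hm2.ne_zero
    have hv : padicValRat l (m : ℚ) = 1 := by
      rw [padicValRat.of_nat]
      have h1 : padicValNat l m ≠ 0 := by
        intro h0
        rw [padicValNat.eq_zero_iff] at h0
        rcases h0 with h0 | h0 | h0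
        · exact hl.ne_one h0
        · exact hm2.ne_zero h0
        · exact h0 hm
      have h2 : ¬ 2 ≤ padicValNat l m := by
        rw [← padicValNat_dvd_iff_le hm2.ne_zero, pow_two]
        intro h3
        exact hl.ne_one (Nat.isUnit_iff.mp (hm2 l h3))
      have : padicValNat l m = 1 := by omega
      simp [this]
    rw [ht]
    have hew : padicValRat l ((e : ℚ) * m * w ^ 2) = padicValRat l ((m : ℚ) * w ^ 2) := by
      rcases he with rfl | rfl
      · simp
      · push_cast
        rw [neg_one_mul, neg_mul, padicValRat.neg]
    rw [hew, padicValRat.mul hm0 (pow_ne_zero 2 hw), hv, padicValRat.pow]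
    simp
  have v2 : padicValRat l ((X : ℚ) + 2 * n) + padicValRat l ((X : ℚ) - 2 * n)
      = 2 * padicValRat l (2 * y) := by
    rw [← padicValRat.mul hX1 hX2, hprod, padicValRat.mul hd0 (pow_ne_zero 2 (by positivity)),
      padicValRat.pow, padicValRat.of_int, padicValInt.eq_zero_of_not_dvd hd]
    simp
  have e1 : (X : ℚ) + 2 * n = ((X + 2 * n : ℤ) : ℚ) := by push_cast; ring
  have e2 : (X : ℚ) - 2 * n = ((X - 2 * n : ℤ) : ℚ) := by push_cast; ring
  have d1 : (l : ℤ) ∣ X + 2 * n := by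
    by_contra h0
    have := padicValInt.eq_zero_of_not_dvd h0
    rw [e1, padicValRat.of_int, this] at v1
    simp at v1; omega
  have d2 : (l : ℤ) ∣ X - 2 * n := by
    by_contra h0
    have := padicValInt.eq_zero_of_not_dvd h0
    rw [e2, padicValRat.of_int, this, v1] at v2
    simp at v2; omega
  have d3 : (l : ℤ) ∣ (2 * 2 * n : ℤ) := by
    have := dvd_sub d1 d2
    have h4 : X + 2 * n - (X - 2 * n) = (2 * 2 * n : ℤ) := by ring
    rwa [h4] at this
  have d4 : l ∣ 2 * 2 * n := by exact_mod_cast d3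
  have hl2' : ¬ l ∣ 2 := fun h => hl2 ((Nat.prime_dvd_prime_iff_eq hl Nat.prime_two).1 h)
  rcases (Nat.Prime.dvd_mul hl).1 d4 with h | h
  · rcases (Nat.Prime.dvd_mul hl).1 h with h | h <;> exact hl2' h
  · exact hn h

end TwoClass

namespace TwoClass

lemma split_coprime (M N d j : ℕ) (hc : Nat.Coprime M N) (hd : Squarefree d)
    (h : M * N = d * j ^ 2) : ∃ a b u v : ℕ, a * b = d ∧ M = a * u ^ 2 ∧ N = b * v ^ 2 := by
  have hd0 : d ≠ 0 := hd.ne_zero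
  obtain ⟨b, hb⟩ := Nat.gcd_dvd_left d M
  obtain ⟨U, hU⟩ := Nat.gcd_dvd_right d M
  set a := Nat.gcd d M with ha
  have ha0 : 0 < a := Nat.gcd_pos_of_pos_left _ (Nat.pos_of_ne_zero hd0)
  have hab : Nat.Coprime a b := Nat.coprime_of_squarefree_mul (hb ▸ hd)
  have e1 : U * N = b * j ^ 2 := by
    apply Nat.eq_of_mul_eq_mul_left ha0
    calc a * (U * N) = (a * U) * N := by ring
      _ = M * N := by rw [← hU]
      _ = d * j ^ 2 := h
      _ = (a * b) * j ^ 2 := by rw [← hb]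
      _ = a * (b * j ^ 2) := by ring
  have hbU : Nat.Coprime b U := by
    have h1 : Nat.gcd b U ∣ a := by
      rw [ha]
      apply Nat.dvd_gcd
      · exact (Nat.gcd_dvd_left b U).trans (hb ▸ dvd_mul_left b a)
      · exact (Nat.gcd_dvd_right b U).trans (hU ▸ dvd_mul_left U a)
    have h2 : Nat.gcd b U ∣ Nat.gcd a b := Nat.dvd_gcd h1 (Nat.gcd_dvd_left b U)
    rw [hab] at h2
    exact Nat.dvd_one.mp h2
  have hbN : b ∣ N := hbU.dvd_of_dvd_mul_left (e1 ▸ dvd_mul_right b (j ^ 2))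
  obtain ⟨V, hV⟩ := hbN
  have hb0 : 0 < b := Nat.pos_of_ne_zero (by rintro rfl; simp at hb; exact hd0 hb)
  have e2 : U * V = j ^ 2 := by
    apply Nat.eq_of_mul_eq_mul_left hb0
    rw [← e1, hV]; ring
  have hUV : Nat.Coprime U V := by
    apply Nat.Coprime.of_dvd _ _ hc
    · rw [hU]; exact dvd_mul_left U a
    · rw [hV]; exact dvd_mul_left V b
  obtain ⟨u, hu⟩ := exists_eq_pow_of_mul_eq_pow (Nat.isUnit_iff.mpr hUV) e2
  obtain ⟨v, hv⟩ := exists_eq_pow_of_mul_eq_pow (Nat.isUnit_iff.mpr hUV.symm)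
    ((mul_comm V U).trans e2)
  exact ⟨a, b, u, v, hb.symm, by rw [← hu]; exact hU, by rw [← hv]; exact hV⟩

lemma pell (d : ℕ) (hd : Squarefree d) (h1 : 1 < d) : ∃ a b u v : ℕ, a * b = d ∧
    ((a ≠ 1 ∧ a * u ^ 2 = b * v ^ 2 + 1) ∨ (d % 2 = 1 ∧ a * u ^ 2 = b * v ^ 2 + 2)) := by
  have hns : ¬ IsSquare (d : ℤ) := by
    rintro ⟨x, hx⟩
    have hx' : d = x.natAbs * x.natAbs := by
      rw [← Int.natAbs_mul, ← hx]; simp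
    have := hd x.natAbs (hx' ▸ dvd_rfl)
    rw [Nat.isUnit_iff] at this
    rw [this] at hx'
    omega
  obtain ⟨f, hf1, hf2, hf3⟩ := Pell.IsFundamental.exists_of_not_isSquare
    (d := (d : ℤ)) (by exact_mod_cast (by omega : 0 < d)) hns
  have hp := f.prop
  obtain ⟨x, hx⟩ := Int.eq_ofNat_of_zero_le (by omega : 0 ≤ f.x)
  obtain ⟨y, hy⟩ := Int.eq_ofNat_of_zero_le (by omega : 0 ≤ f.y)
  rw [hx, hy] at hp
  rw [hx] at hf1
  have hx1 : 1 < x := by omega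
  have hp' : x ^ 2 = d * y ^ 2 + 1 := by
    have : (x : ℤ) ^ 2 = d * y ^ 2 + 1 := by linear_combination hp
    exact_mod_cast this
  have hd4 : ¬ 4 ∣ d := by
    intro h
    have := hd 2 h
    rw [Nat.isUnit_iff] at this
    omega
  rcases Nat.even_or_odd' x with ⟨k, rfl | rfl⟩
  · have hodd : (d * y ^ 2) % 2 = 1 := by
      have : (2 * k) ^ 2 = 2 * (2 * k ^ 2) := by ring
      omega
    have hdo : d % 2 = 1 := by
      have := Nat.odd_mul.1 (Nat.odd_iff.2 hodd)
      exact Nat.odd_iff.1 this.1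
    have hk : 1 ≤ k := by omega
    obtain ⟨j, rfl⟩ := Nat.exists_eq_add_of_le hk
    obtain ⟨a, b, u, v, hab, hM, hN⟩ := split_coprime (2 * j + 1 + 2) (2 * j + 1) d y (by
      rw [Nat.coprime_self_add_left]
      exact Nat.coprime_two_left.2 ⟨j, rfl⟩) hd (by
      have : (2 * (1 + j)) ^ 2 = (2 * j + 1 + 2) * (2 * j + 1) + 1 := by ring
      omega)
    exact ⟨a, b, u, v, hab, Or.inr ⟨hdo, by omega⟩⟩
  · have hy2 : y % 2 = 0 := by
      by_contra hy2
      have hyo : y % 2 = 1 := by omega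
      have h8 : y ^ 2 % 4 = 1 := by
        have : y % 4 = 1 ∨ y % 4 = 3 := by omega
        rcases this with h | h <;> simp [pow_two, Nat.mul_mod, h]
      have h9 : d * y ^ 2 % 4 = d % 4 := by rw [Nat.mul_mod, h8]; simp
      have : (2 * k + 1) ^ 2 = 4 * (k ^ 2 + k) + 1 := by ring
      omega
    obtain ⟨j, rfl⟩ : ∃ j, y = 2 * j := ⟨y / 2, by omega⟩
    obtain ⟨a, b, u, v, hab, hM, hN⟩ := split_coprime (k + 1) k d j (by simp) hd (by
      have e1 : (2 * k + 1) ^ 2 = 4 * ((k + 1) * k) + 1 := by ring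
      have e2 : d * (2 * j) ^ 2 = 4 * (d * j ^ 2) := by ring
      omega)
    refine ⟨a, b, u, v, hab, Or.inl ⟨?_, by omega⟩⟩
    rintro rfl
    rw [one_mul] at hab hM
    subst hab
    have hs : (u : ℤ) ^ 2 - b * (v : ℤ) ^ 2 = 1 := by
      have : u ^ 2 = b * v ^ 2 + 1 := by omega
      have : (u : ℤ) ^ 2 = b * v ^ 2 + 1 := by exact_mod_cast this
      linear_combination this
    have hu1 : 1 < u := by
      by_contra hu
      have : u ^ 2 ≤ 1 := by
        have : u ≤ 1 := by omega
        calc u ^ 2 ≤ 1 ^ 2 := Nat.pow_le_pow_left this 2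
          _ = 1 := rfl
      omega
    have := hf3 (b := Pell.Solution₁.mk (u : ℤ) (v : ℤ) hs) (by
      rw [Pell.Solution₁.x_mk]; exact_mod_cast hu1)
    rw [Pell.Solution₁.x_mk, hx] at this
    have h3 : 2 * k + 1 ≤ u := by exact_mod_cast this
    nlinarith

/-- The arithmetic hypotheses. -/
structure Hyp (p q s : ℕ) [Fact p.Prime] [Fact q.Prime] [Fact s.Prime] : Prop where
  pq : p ≠ q
  ps : p ≠ s
  qs : q ≠ s
  p8 : p % 8 = 5
  q8 : q % 8 = 3
  s4 : s % 4 = 3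
  sqq : IsSquare (p : ZMod q)
  sqs : IsSquare (p : ZMod s)

end TwoClass

namespace TwoClass

lemma prime_ne0 (l m : ℕ) [hl : Fact l.Prime] [hm : Fact m.Prime] (h : l ≠ m) :
    ((m : ℤ) : ZMod l) ≠ 0 := by
  intro h0
  rw [ZMod.intCast_zmod_eq_zero_iff_dvd] at h0
  exact h ((Nat.prime_dvd_prime_iff_eq hl.out hm.out).1 (by exact_mod_cast h0))

/-- A solution of `a u² = b v² + c` gives a Legendre symbol identity modulo a divisor of `b`. -/
lemma leg_left (l : ℕ) [Fact l.Prime] (a b u v c : ℤ) (h : a * u ^ 2 = b * v ^ 2 + c)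
    (hb : (l : ℤ) ∣ b) (hc : ¬ (l : ℤ) ∣ c) : legendreSym l a = legendreSym l c := by
  have hb0 : (b : ZMod l) = 0 := (ZMod.intCast_zmod_eq_zero_iff_dvd b l).2 hb
  have hc0 : (c : ZMod l) ≠ 0 := fun h => hc ((ZMod.intCast_zmod_eq_zero_iff_dvd c l).1 h)
  have e : ((a * u ^ 2 : ℤ) : ZMod l) = (c : ZMod l) := by
    rw [h]; push_cast; rw [hb0]; ring
  have hu0 : (u : ZMod l) ≠ 0 := by
    intro h0; apply hc0; rw [← e]; push_cast; rw [h0]; ring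
  have h1 : legendreSym l (a * u ^ 2) = legendreSym l c := by
    unfold legendreSym; rw [e]
  rw [← h1, legendreSym.mul, legendreSym.sq_one' l hu0, mul_one]

lemma leg_right (l : ℕ) [Fact l.Prime] (a b u v c : ℤ) (h : a * u ^ 2 = b * v ^ 2 + c)
    (ha : (l : ℤ) ∣ a) (hc : ¬ (l : ℤ) ∣ c) : legendreSym l (-b) = legendreSym l c :=
  leg_left l (-b) (-a) v u c (by linear_combination h) ((dvd_neg).2 ha) hc

section
variable {p q s : ℕ} [Fact p.Prime] [Fact q.Prime] [Fact s.Prime]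

lemma Hyp.p2 (H : Hyp p q s) : p ≠ 2 := by have := H.p8; omega
lemma Hyp.q2 (H : Hyp p q s) : q ≠ 2 := by have := H.q8; omega
lemma Hyp.s2 (H : Hyp p q s) : s ≠ 2 := by have := H.s4; omega

lemma Hyp.lp2 (H : Hyp p q s) : legendreSym p 2 = -1 := by
  rw [legendreSym.at_two H.p2, ZMod.χ₈_nat_eq_if_mod_eight]
  have := H.p8
  simp [this]
  omega

lemma Hyp.lpn (H : Hyp p q s) : legendreSym p (-1) = 1 := by
  rw [legendreSym.at_neg_one H.p2, ZMod.χ₄_nat_one_mod_four]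
  have := H.p8
  omega

lemma Hyp.lq2 (H : Hyp p q s) : legendreSym q 2 = -1 := by
  rw [legendreSym.at_two H.q2, ZMod.χ₈_nat_eq_if_mod_eight]
  have := H.q8
  simp [this]
  omega

lemma Hyp.lqn (H : Hyp p q s) : legendreSym q (-1) = -1 := by
  rw [legendreSym.at_neg_one H.q2, ZMod.χ₄_nat_three_mod_four]
  have := H.q8
  omega

lemma Hyp.lsn (H : Hyp p q s) : legendreSym s (-1) = -1 := by
  rw [legendreSym.at_neg_one H.s2, ZMod.χ₄_nat_three_mod_four H.s4]

lemma Hyp.ls2 (H : Hyp p q s) : legendreSym s 2 = if s % 8 = 7 then 1 else -1 := by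
  rw [legendreSym.at_two H.s2, ZMod.χ₈_nat_eq_if_mod_eight]
  have := H.s4
  have h1 : s % 2 = 1 := by omega
  have : s % 8 = 3 ∨ s % 8 = 7 := by omega
  rcases this with h | h <;> simp [h, h1]

lemma Hyp.lqp (H : Hyp p q s) : legendreSym q p = 1 := by
  rw [legendreSym.eq_one_iff q (prime_ne0 q p H.pq.symm)]
  exact_mod_cast H.sqq

lemma Hyp.lsp (H : Hyp p q s) : legendreSym s p = 1 := by
  rw [legendreSym.eq_one_iff s (prime_ne0 s p H.ps.symm)]
  exact_mod_cast H.sqs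

lemma Hyp.lpq (H : Hyp p q s) : legendreSym p q = 1 := by
  rw [← legendreSym.quadratic_reciprocity_one_mod_four (by have := H.p8; omega) H.q2, H.lqp]

lemma Hyp.lps (H : Hyp p q s) : legendreSym p s = 1 := by
  rw [← legendreSym.quadratic_reciprocity_one_mod_four (by have := H.p8; omega) H.s2, H.lsp]

lemma Hyp.lqs (H : Hyp p q s) : legendreSym q s = - legendreSym s q :=
  legendreSym.quadratic_reciprocity_three_mod_four H.s4 (by have := H.q8; omega)

lemma Hyp.lsq (H : Hyp p q s) : legendreSym s q = 1 ∨ legendreSym s q = -1 :=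
  legendreSym.eq_one_or_neg_one s (prime_ne0 s q H.qs.symm)

lemma not_dvd_one (l : ℕ) [hl : Fact l.Prime] : ¬ (l : ℤ) ∣ 1 := by
  intro h
  have : l ∣ 1 := by exact_mod_cast h
  exact hl.out.one_lt.ne' (Nat.dvd_one.1 this)

lemma not_dvd_two (l : ℕ) [hl : Fact l.Prime] (h2 : l ≠ 2) : ¬ (l : ℤ) ∣ 2 := by
  intro h
  have : l ∣ 2 := by exact_mod_cast h
  exact h2 ((Nat.prime_dvd_prime_iff_eq hl.out Nat.prime_two).1 this)

lemma coprime_of_ne (l m : ℕ) [hl : Fact l.Prime] [hm : Fact m.Prime] (h : l ≠ m) :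
    Nat.Coprime l m := (Nat.coprime_primes hl.out hm.out).2 h

lemma coprime_two (l : ℕ) [hl : Fact l.Prime] (h : l ≠ 2) :
    Nat.Coprime 2 l := (Nat.coprime_primes Nat.prime_two hl.out).2 h.symm

lemma sqf2 (l m : ℕ) [hl : Fact l.Prime] [hm : Fact m.Prime] (h : l ≠ m) : Squarefree (l * m) :=
  (Nat.squarefree_mul (coprime_of_ne l m h)).2 ⟨hl.out.prime.squarefree, hm.out.prime.squarefree⟩

lemma sqf3 (l m : ℕ) [hl : Fact l.Prime] [hm : Fact m.Prime] (h : l ≠ m) (h1 : l ≠ 2)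
    (h2 : m ≠ 2) : Squarefree (2 * l * m) := by
  rw [mul_assoc, Nat.squarefree_mul (Nat.Coprime.mul_right (coprime_two l h1) (coprime_two m h2))]
  exact ⟨Nat.prime_two.prime.squarefree, sqf2 l m h⟩

lemma dvd_three (a l m : ℕ) [hl : Fact l.Prime] [hm : Fact m.Prime] (h : a ∣ 2 * l * m) :
    a = 1 ∨ a = 2 ∨ a = l ∨ a = m ∨ a = 2 * l ∨ a = 2 * m ∨ a = l * m ∨ a = 2 * l * m := by
  obtain ⟨x, z, hx, hz, rfl⟩ := (Nat.dvd_mul).1 h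
  obtain ⟨x, y, hx', hy, rfl⟩ := (Nat.dvd_mul).1 hx
  rcases (Nat.dvd_prime Nat.prime_two).1 hx' with rfl | rfl <;>
  rcases (Nat.dvd_prime hl.out).1 hy with rfl | rfl <;>
  rcases (Nat.dvd_prime hm.out).1 hz with rfl | rfl <;> simp

/-- `q x² - 2 p y² = 1` is solvable. -/
lemma Hyp.eq1 (H : Hyp p q s) : ∃ u v : ℕ, q * u ^ 2 = 2 * p * v ^ 2 + 1 := by
  have hp0 := (Fact.out : p.Prime).pos
  have hq0 := (Fact.out : q.Prime).pos
  obtain ⟨a, b, u, v, hab, ⟨ha, h⟩ | ⟨h, -⟩⟩ := pell (2 * p * q) (sqf3 p q H.pq H.p2 H.q2)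
    (by nlinarith)
  swap
  · rw [mul_assoc] at h; omega
  have hz : (a : ℤ) * u ^ 2 = b * v ^ 2 + 1 := by exact_mod_cast h
  have lp := fun h1 => leg_left p a b u v 1 hz h1 (not_dvd_one p)
  have rp := fun h1 => leg_right p a b u v 1 hz h1 (not_dvd_one p)
  have lq := fun h1 => leg_left q a b u v 1 hz h1 (not_dvd_one q)
  have rq := fun h1 => leg_right q a b u v 1 hz h1 (not_dvd_one q)
  have e1 := H.lp2
  have e2 := H.lpn
  have e3 := H.lpq
  have f1 := H.lq2
  have f2 := H.lqn
  have f3 := H.lqp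
  have g : ∀ l : ℕ, [Fact l.Prime] → ∀ x : ℤ, legendreSym l (-x) =
      legendreSym l (-1) * legendreSym l x := by
    intro l _ x; rw [← legendreSym.mul]; simp
  rcases dvd_three a p q ⟨b, hab.symm⟩ with rfl | rfl | rfl | rfl | rfl | rfl | rfl | rfl
  · exact absurd rfl ha
  · have hb : b = p * q := Nat.eq_of_mul_eq_mul_left (by positivity) (hab.trans (by ring))
    subst hb
    have := lp (by push_cast; exact dvd_mul_right _ _)
    push_cast at this
    rw [e1] at this; simp at this
  · have hb : b = 2 * q := Nat.eq_of_mul_eq_mul_left (by positivity) (hab.trans (by ring))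
    subst hb
    have := rp (dvd_refl _)
    push_cast at this
    rw [g, legendreSym.mul, e1, e2, e3] at this; simp at this
  · have hb : b = 2 * p := Nat.eq_of_mul_eq_mul_left (by positivity) (hab.trans (by ring))
    subst hb
    exact ⟨u, v, h⟩
  · have hb : b = q := Nat.eq_of_mul_eq_mul_left (by positivity) (hab.trans (by ring))
    subst hb
    have := lq (dvd_refl _)
    push_cast at this
    rw [legendreSym.mul, f1, f3] at this; simp at this
  · have hb : b = p := Nat.eq_of_mul_eq_mul_left (by positivity) (hab.trans (by ring))
    subst hb
    have := lp (dvd_refl _)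
    push_cast at this
    rw [legendreSym.mul, e1, e3] at this; simp at this
  · have hb : b = 2 := Nat.eq_of_mul_eq_mul_left (by positivity) (hab.trans (by ring))
    subst hb
    have := rp (by push_cast; exact dvd_mul_right _ _)
    push_cast at this
    rw [g, e1, e2] at this; simp at this
  · have hb : b = 1 := Nat.eq_of_mul_eq_mul_left (by positivity) (hab.trans (by ring))
    subst hb
    have := rq (by push_cast; exact dvd_mul_left _ _)
    push_cast at this
    rw [f2] at this; simp at this

/-- `p x² - s y² = 1` is solvable. -/
lemma Hyp.eq2 (H : Hyp p q s) : ∃ u v : ℕ, p * u ^ 2 = s * v ^ 2 + 1 := by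
  have hp0 := (Fact.out : p.Prime).pos
  have hs0 := (Fact.out : s.Prime).pos
  have hs1 := (Fact.out : s.Prime).two_le
  obtain ⟨a, b, u, v, hab, h0⟩ := pell (p * s) (sqf2 p s H.ps)
    (by nlinarith)
  have e1 := H.lp2
  have e2 := H.lpn
  have e3 := H.lps
  have f2 := H.lsn
  have f3 := H.lsp
  have g : ∀ l : ℕ, [Fact l.Prime] → ∀ x : ℤ, legendreSym l (-x) =
      legendreSym l (-1) * legendreSym l x := by
    intro l _ x; rw [← legendreSym.mul]; simp
  have ha : a = 1 ∨ a = s ∨ a = p ∨ a = p * s := by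
    have h : a ∣ p * s := ⟨b, hab.symm⟩
    obtain ⟨x, z, hx, hz, rfl⟩ := (Nat.dvd_mul).1 h
    rcases (Nat.dvd_prime (Fact.out : p.Prime)).1 hx with rfl | rfl <;>
    rcases (Nat.dvd_prime (Fact.out : s.Prime)).1 hz with rfl | rfl <;> simp
  rcases h0 with ⟨ha1, h⟩ | ⟨-, h⟩
  · have hz : (a : ℤ) * u ^ 2 = b * v ^ 2 + 1 := by exact_mod_cast h
    have rs := fun h1 => leg_right s a b u v 1 hz h1 (not_dvd_one s)
    rcases ha with rfl | rfl | rfl | rfl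
    · exact absurd rfl ha1
    · have hb : b = p := Nat.eq_of_mul_eq_mul_left (by positivity) (hab.trans (by ring))
      subst hb
      have := rs (dvd_refl _)
      rw [g, f2, f3] at this; simp at this
    · have hb : b = s := Nat.eq_of_mul_eq_mul_left (by positivity) (hab.trans (by ring))
      subst hb
      exact ⟨u, v, h⟩
    · have hb : b = 1 := Nat.eq_of_mul_eq_mul_left (by positivity) (hab.trans (by ring))
      subst hb
      have := rs (by push_cast; exact dvd_mul_left _ _)
      push_cast at this
      rw [f2] at this; simp at this
  · have hz : (a : ℤ) * u ^ 2 = b * v ^ 2 + 2 := by exact_mod_cast h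
    have lp := fun h1 => leg_left p a b u v 2 hz h1 (not_dvd_two p H.p2)
    have rp := fun h1 => leg_right p a b u v 2 hz h1 (not_dvd_two p H.p2)
    exfalso
    rcases ha with rfl | rfl | rfl | rfl
    · have := lp ⟨s, by rw [one_mul] at hab; rw [hab]; push_cast; ring⟩
      push_cast at this
      rw [e1] at this; simp at this
    · have hb : b = p := Nat.eq_of_mul_eq_mul_left (by positivity) (hab.trans (by ring))
      subst hb
      have := lp (dvd_refl _)
      rw [e1, e3] at this; simp at this
    · have hb : b = s := Nat.eq_of_mul_eq_mul_left (by positivity) (hab.trans (by ring))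
      subst hb
      have := rp (dvd_refl _)
      rw [g, e1, e2, e3] at this; simp at this
    · have hb : b = 1 := Nat.eq_of_mul_eq_mul_left (by positivity) (hab.trans (by ring))
      subst hb
      have := rp (by push_cast; exact dvd_mul_right _ _)
      push_cast at this
      rw [e1, e2] at this; simp at this

/-- The third equation. -/
lemma Hyp.eq3 (H : Hyp p q s) :
    (s % 8 = 3 ∧ ∃ u v : ℕ, q * s * u ^ 2 = 2 * v ^ 2 + 1) ∨
    (s % 8 = 7 ∧ ∃ u v : ℕ, ∃ e : ℤ, (e = 1 ∨ e = -1) ∧ (s * u ^ 2 : ℤ) = 2 * q * v ^ 2 + e) := by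
  have hs0 := (Fact.out : s.Prime).pos
  have hq0 := (Fact.out : q.Prime).pos
  obtain ⟨a, b, u, v, hab, ⟨ha, h⟩ | ⟨h, -⟩⟩ := pell (2 * q * s) (sqf3 q s H.qs H.q2 H.s2)
    (by nlinarith)
  swap
  · rw [mul_assoc] at h; omega
  have hz : (a : ℤ) * u ^ 2 = b * v ^ 2 + 1 := by exact_mod_cast h
  have ls := fun h1 => leg_left s a b u v 1 hz h1 (not_dvd_one s)
  have rs := fun h1 => leg_right s a b u v 1 hz h1 (not_dvd_one s)
  have lq := fun h1 => leg_left q a b u v 1 hz h1 (not_dvd_one q)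
  have rq := fun h1 => leg_right q a b u v 1 hz h1 (not_dvd_one q)
  have e1 := H.ls2
  have e2 := H.lsn
  have e3 := H.lsq
  have f1 := H.lq2
  have f2 := H.lqn
  have f3 := H.lqs
  have g : ∀ l : ℕ, [Fact l.Prime] → ∀ x : ℤ, legendreSym l (-x) =
      legendreSym l (-1) * legendreSym l x := by
    intro l _ x; rw [← legendreSym.mul]; simp
  have hs8 : s % 8 = 3 ∨ s % 8 = 7 := by have := H.s4; omega
  rcases dvd_three a q s ⟨b, hab.symm⟩ with rfl | rfl | rfl | rfl | rfl | rfl | rfl | rfl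
  · exact absurd rfl ha
  · have hb : b = q * s := Nat.eq_of_mul_eq_mul_left (by positivity) (hab.trans (by ring))
    subst hb
    have := lq (by push_cast; exact dvd_mul_right _ _)
    push_cast at this
    rw [f1] at this; simp at this
  · have hb : b = 2 * s := Nat.eq_of_mul_eq_mul_left (by positivity) (hab.trans (by ring))
    subst hb
    have h1 := rq (dvd_refl _)
    have h2 := ls (by push_cast; exact dvd_mul_left _ _)
    push_cast at h1 h2
    rw [g, legendreSym.mul, f1, f2, f3, h2] at h1; simp at h1
  · have hb : b = 2 * q := Nat.eq_of_mul_eq_mul_left (by positivity) (hab.trans (by ring))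
    subst hb
    have h1 := rs (dvd_refl _)
    have h2 := lq (by push_cast; exact dvd_mul_left _ _)
    push_cast at h1 h2
    rw [f3] at h2
    have h3 : legendreSym a q = -1 := by simp at h2; linarith
    rw [g, legendreSym.mul, e1, e2, h3] at h1
    rcases hs8 with h8 | h8
    · simp [h8] at h1
    · exact Or.inr ⟨h8, u, v, 1, Or.inl rfl, by push_cast at hz; exact hz⟩
  · have hb : b = s := Nat.eq_of_mul_eq_mul_left (by positivity) (hab.trans (by ring))
    subst hb
    have h1 := rq (by push_cast; exact dvd_mul_left _ _)
    have h2 := ls (dvd_refl _)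
    push_cast at h1 h2
    rw [g, f2, f3] at h1
    have h3 : legendreSym b q = 1 := by simp at h1; exact h1
    rw [legendreSym.mul, e1, h3] at h2
    rcases hs8 with h8 | h8
    · simp [h8] at h2
    · refine Or.inr ⟨h8, v, u, -1, Or.inr rfl, by push_cast at hz; linarith⟩
  · have hb : b = q := Nat.eq_of_mul_eq_mul_left (by positivity) (hab.trans (by ring))
    subst hb
    have h1 := lq (dvd_refl _)
    have h2 := rs (by push_cast; exact dvd_mul_left _ _)
    push_cast at h1 h2
    rw [g, e2] at h2
    have h3 : legendreSym s b = -1 := by simp at h2; linarith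
    rw [legendreSym.mul, f1, f3, h3] at h1
    simp at h1
  · have hb : b = 2 := Nat.eq_of_mul_eq_mul_left (by positivity) (hab.trans (by ring))
    subst hb
    have h1 := rs (by push_cast; exact dvd_mul_left _ _)
    push_cast at h1
    rw [g, e1, e2] at h1
    rcases hs8 with h8 | h8
    · exact Or.inl ⟨h8, u, v, h⟩
    · simp [h8] at h1
  · have hb : b = 1 := Nat.eq_of_mul_eq_mul_left (by positivity) (hab.trans (by ring))
    subst hb
    have := rq (by push_cast; exact ⟨2 * s, by ring⟩)
    push_cast at this
    rw [f2] at this; simp at this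

end
end TwoClass

namespace TwoClass

/-- A real quadratic subfield `ℚ(D)` of `K`, fixed by `φ`, with conjugation induced by `ψ`. -/
structure QD (K : Type*) [Field K] [NumberField K] (d : ℕ) (D : K) (φ ψ : K ≃ₐ[ℚ] K) : Prop where
  hD : D ^ 2 = d
  d0 : d ≠ 0
  φD : φ D = D
  ψD : ψ D = -D
  φφ : ∀ x, φ (φ x) = x
  ψψ : ∀ x, ψ (ψ x) = x
  comm : ∀ x, φ (ψ x) = ψ (φ x)
  fix : ∀ x, φ x = x → ψ x = x → ∃ r : ℚ, x = (r : K)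

variable {K : Type*} [Field K] [NumberField K]

lemma int_of_rat (r : ℚ) (h : IsIntegral ℤ (r : K)) : ∃ z : ℤ, r = z := by
  have h1 : IsIntegral ℤ r := by
    rw [← isIntegral_algebraMap_iff (algebraMap ℚ K).injective]
    simpa using h
  obtain ⟨z, hz⟩ := IsIntegrallyClosed.isIntegral_iff.1 h1
  exact ⟨z, by rw [← hz]; simp⟩

lemma map_integral (φ : K ≃ₐ[ℚ] K) {x : K} (h : IsIntegral ℤ x) : IsIntegral ℤ (φ x) :=
  map_isIntegral_int φ h

lemma QD.D0 {d : ℕ} {D : K} {φ ψ : K ≃ₐ[ℚ] K} (Q : QD K d D φ ψ) : D ≠ 0 := by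
  intro h
  have := Q.hD
  rw [h] at this
  have h0 : (d : K) = 0 := by rw [← this]; ring
  exact Q.d0 (by exact_mod_cast h0)

lemma QD.rep {d : ℕ} {D : K} {φ ψ : K ≃ₐ[ℚ] K} (Q : QD K d D φ ψ) (x : K) (hx : φ x = x) :
    ∃ u v : ℚ, x = u + v * D ∧ ψ x = u - v * D ∧ x * ψ x = ((u ^ 2 - d * v ^ 2 : ℚ) : K) ∧
      x + ψ x = ((2 * u : ℚ) : K) := by
  have hD0 := Q.D0
  obtain ⟨u, hu⟩ := Q.fix ((x + ψ x) / 2) (by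
      rw [map_div₀, map_add, Q.comm, hx, map_ofNat]) (by
      rw [map_div₀, map_add, Q.ψψ, add_comm, map_ofNat])
  obtain ⟨v, hv⟩ := Q.fix ((x - ψ x) / (2 * D)) (by
      rw [map_div₀, map_sub, Q.comm, hx, map_mul, Q.φD, map_ofNat]) (by
      rw [map_div₀, map_sub, Q.ψψ, map_mul, Q.ψD, map_ofNat]; field_simp; ring)
  have e1 : x = u + v * D := by rw [← hu, ← hv]; field_simp; ring
  have e2 : ψ x = u - v * D := by rw [← hu, ← hv]; field_simp; ring
  refine ⟨u, v, e1, e2, ?_, ?_⟩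
  · rw [e2]; nth_rewrite 1 [e1]
    push_cast
    rw [← Q.hD]; ring
  · rw [e2]; nth_rewrite 1 [e1]
    push_cast; ring

lemma QD.core {d : ℕ} {D : K} {φ ψ : K ≃ₐ[ℚ] K} (Q : QD K d D φ ψ) (α : K)
    (hα : IsIntegral ℤ α) (n : ℕ) (hn : n ≠ 0) (hN : α * φ α * ψ α * φ (ψ α) = (n : K) ^ 2) :
    ∃ (m : ℕ) (e : ℤ) (γ : K), Squarefree m ∧ (e = 1 ∨ e = -1) ∧ φ γ = γ ∧
      α * φ α = e * m * γ ^ 2 ∧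
      (∃ (u v : ℚ) (e' : ℤ), (e' = 1 ∨ e' = -1) ∧ ((e' * n * m : ℤ) : ℚ) = u ^ 2 - (d : ℤ) * v ^ 2) ∧
      (∀ l : ℕ, l.Prime → l ≠ 2 → ¬ l ∣ d → ¬ l ∣ n → ¬ l ∣ m) := by
  set δ := α * φ α with hδ
  have hφδ : φ δ = δ := by rw [hδ, map_mul, Q.φφ]; ring
  have hδψ : δ * ψ δ = (n : K) ^ 2 := by
    rw [← hN, hδ, map_mul, Q.comm]; ring
  have hδi : IsIntegral ℤ δ := hα.mul (map_integral φ hα)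
  have hnK : (n : K) ≠ 0 := by exact_mod_cast hn
  have hδ0 : δ ≠ 0 := by
    intro h; rw [h, zero_mul] at hδψ
    exact pow_ne_zero 2 hnK hδψ.symm
  obtain ⟨x, y, h1, h2, h3, h4⟩ := Q.rep δ hφδ
  obtain ⟨X, hX⟩ := int_of_rat (K := K) (2 * x) (by
    rw [← h4]; exact hδi.add (map_integral ψ hδi))
  have hxy : x ^ 2 - d * y ^ 2 = (n : ℚ) ^ 2 := by
    have : ((x ^ 2 - d * y ^ 2 : ℚ) : K) = ((n ^ 2 : ℚ) : K) := by
      rw [← h3, hδψ]; push_cast; rfl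
    exact_mod_cast this
  -- choose the sign
  obtain ⟨N, hNn, hN0, hNc⟩ : ∃ N : ℤ, N ^ 2 = (n : ℤ) ^ 2 ∧ δ + (N : K) ≠ 0 ∧
      (N = n ∨ (δ = -(n : K) ∧ N = -n)) := by
    by_cases h : δ + ((n : ℤ) : K) = 0
    · refine ⟨-n, by ring, ?_, Or.inr ⟨?_, rfl⟩⟩
      · push_cast at h ⊢
        have : δ = -(n : K) := by linear_combination h
        rw [this]
        intro h5
        apply hnK
        have : (2 : K) * n = 0 := by linear_combination -h5
        rcases mul_eq_zero.1 this with h6 | h6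
        · norm_num at h6
        · exact h6
      · push_cast at h; linear_combination h
    · exact ⟨n, rfl, h, Or.inl rfl⟩
  have hX' : δ + ψ δ = (X : K) := by
    rw [h4, hX]; simp
  have hNK : (N : K) ^ 2 = (n : K) ^ 2 := by exact_mod_cast congrArg (Int.cast : ℤ → K) hNn
  have hδt : δ * ((X + 2 * N : ℤ) : K) = (δ + N) ^ 2 := by
    push_cast
    rw [← hX']
    linear_combination hδψ - hNK
  have ht0 : X + 2 * N ≠ 0 := by
    intro h
    rw [h] at hδt
    simp at hδt
    exact hN0 (pow_eq_zero_iff two_ne_zero |>.1 hδt.symm)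
  obtain ⟨m, b, hbm, hm⟩ := Nat.sq_mul_squarefree (X + 2 * N).natAbs
  have hb0 : b ≠ 0 := by
    rintro rfl
    simp at hbm
    exact ht0 (by omega)
  have hm0 : m ≠ 0 := hm.ne_zero
  obtain ⟨e, he, het⟩ : ∃ e : ℤ, (e = 1 ∨ e = -1) ∧ X + 2 * N = e * m * b ^ 2 := by
    have hc : ((X + 2 * N).natAbs : ℤ) = b ^ 2 * m := by rw [← hbm]; push_cast; rfl
    rcases Int.natAbs_eq (X + 2 * N) with h | h
    · exact ⟨1, Or.inl rfl, by rw [h, hc]; ring⟩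
    · exact ⟨-1, Or.inr rfl, by rw [h, hc]; ring⟩
  have hee : (e : K) ^ 2 = 1 := by rcases he with rfl | rfl <;> simp
  have hmK : (m : K) ≠ 0 := by exact_mod_cast hm0
  have hbK : (b : K) ≠ 0 := by exact_mod_cast hb0
  have hδe : δ = e * m * ((δ + N) / (m * b)) ^ 2 := by
    have h5 : δ * (e * m * b ^ 2) = (δ + N) ^ 2 := by
      rw [← hδt, het]; push_cast; ring
    rw [div_pow, ← h5]
    field_simp
    exact hee.symm
  set γ := (δ + N) / (m * b) with hγ
  have hφγ : φ γ = γ := by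
    rw [hγ, map_div₀, map_add, hφδ]; simp
  refine ⟨m, e, γ, hm, he, hφγ, hδe, ?_, ?_⟩
  · obtain ⟨u, v, g1, g2, g3, g4⟩ := Q.rep (m * γ) (by rw [map_mul, hφγ]; simp)
    have h6 : (m * (γ * ψ γ) - n) * (m * (γ * ψ γ) + n) = 0 := by
      have : ψ δ = e * m * (ψ γ) ^ 2 := by rw [hδe]; simp
      have h7 : δ * ψ δ = (m * (γ * ψ γ)) ^ 2 := by
        rw [this]; nth_rewrite 1 [hδe]
        linear_combination (m ^ 2 * γ ^ 2 * (ψ γ) ^ 2) * hee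
      linear_combination hδψ - h7
    have h8 : ∃ e' : ℤ, (e' = 1 ∨ e' = -1) ∧ m * (γ * ψ γ) = e' * n := by
      rcases mul_eq_zero.1 h6 with h | h
      · exact ⟨1, Or.inl rfl, by push_cast; linear_combination h⟩
      · exact ⟨-1, Or.inr rfl, by push_cast; linear_combination h⟩
    obtain ⟨e', he', h9⟩ := h8
    refine ⟨u, v, e', he', ?_⟩
    have : (((e' * n * m : ℤ) : ℚ) : K) = ((u ^ 2 - d * v ^ 2 : ℚ) : K) := by
      rw [← g3, map_mul]
      push_cast
      rw [map_natCast]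
      linear_combination (-(m : K)) * h9
    exact_mod_cast this
  · intro l hl hl2 hld hln hlm
    have hlm' : l ∣ (X + 2 * N).natAbs := hbm ▸ hlm.mul_left _
    by_cases hy : y = 0
    · have hx2 : (X + 2 * N) ∣ 4 * n := by
        subst hy
        have hx1 : (X : ℤ) ^ 2 = (2 * n) ^ 2 := by
          have : (X : ℚ) ^ 2 = (2 * n) ^ 2 := by
            rw [← hX]; linear_combination 4 * hxy
          exact_mod_cast this
        have hN1 : N = n ∨ N = -n := by
          rcases hNc with h | h
          · exact Or.inl h
          · exact Or.inr h.2
        rcases sq_eq_sq_iff_eq_or_eq_neg.1 hx1 with h | h <;> rcases hN1 with h' | h' <;>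
          rw [h, h'] at ht0 ⊢
        · exact ⟨1, by ring⟩
        · exact absurd (by ring) ht0
        · exact absurd (by ring) ht0
        · exact ⟨-1, by ring⟩
      have : l ∣ 4 * n := by
        have h10 := (Int.natAbs_dvd_natAbs.2 hx2)
        have h11 : (4 * (n : ℤ)).natAbs = 4 * n := by
          rw [Int.natAbs_mul]; simp
        rw [h11] at h10
        exact hlm'.trans h10
      rcases (Nat.Prime.dvd_mul hl).1 this with h | h
      · have : l ∣ 2 := hl.dvd_of_dvd_pow (n := 2) (by simpa using h)
        exact hl2 ((Nat.prime_dvd_prime_iff_eq hl Nat.prime_two).1 this)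
      · exact hln h
    · have hNn' : N = n := by
        rcases hNc with h | ⟨h, -⟩
        · exact h
        · exfalso
          have h12 : ψ δ = δ := by rw [h]; simp
          have : (2 : K) * y * D = 0 := by linear_combination h2 - h1 - h12
          have hy' : (y : K) ≠ 0 := by exact_mod_cast hy
          simp [hy', Q.D0] at this
      refine nt3 l hl hl2 d (by exact_mod_cast hld) n hln X y b m hlm hm e he
        (by exact_mod_cast hb0) hy ?_ ?_
      · rw [← hX]; push_cast; linear_combination hxy
      · have := congrArg (Int.cast : ℤ → ℚ) het
        rw [hNn'] at this
        push_cast at this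
        exact this

end TwoClass

namespace TwoClass

/-- A biquadratic field `ℚ(A, B)` with `A ^ 2 = 2pq`, `B ^ 2 = ps` and generators of its Galois
group. -/
structure BQ (K : Type*) [Field K] [NumberField K] (p q s : ℕ) (A B : K) (σ τ : K ≃ₐ[ℚ] K) :
    Prop where
  p0 : p ≠ 0
  q0 : q ≠ 0
  s0 : s ≠ 0
  hA : A ^ 2 = 2 * p * q
  hB : B ^ 2 = p * s
  σA : σ A = A
  σB : σ B = -B
  τA : τ A = -A
  τB : τ B = B
  σσ : ∀ x, σ (σ x) = x
  ττ : ∀ x, τ (τ x) = x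
  comm : ∀ x, σ (τ x) = τ (σ x)
  fix : ∀ x, σ x = x → τ x = x → ∃ r : ℚ, x = (r : K)
  norm : ∀ x, ((Algebra.norm ℚ x : ℚ) : K) = x * σ x * τ x * σ (τ x)

variable {K : Type*} [Field K] [NumberField K] {p q s : ℕ} {A B : K} {σ τ : K ≃ₐ[ℚ] K}

lemma BQ.k1 (Q : BQ K p q s A B σ τ) : QD K (2 * p * q) A σ τ where
  hD := by rw [Q.hA]; push_cast; ring
  d0 := by have := Q.p0; have := Q.q0; positivity
  φD := Q.σA
  ψD := Q.τA
  φφ := Q.σσ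
  ψψ := Q.ττ
  comm := Q.comm
  fix := Q.fix

lemma BQ.k2 (Q : BQ K p q s A B σ τ) : QD K (p * s) B τ σ where
  hD := by rw [Q.hB]; push_cast; ring
  d0 := by have := Q.p0; have := Q.s0; positivity
  φD := Q.τB
  ψD := Q.σB
  φφ := Q.ττ
  ψψ := Q.σσ
  comm := fun x => (Q.comm x).symm
  fix := fun x h1 h2 => Q.fix x h2 h1

lemma BQ.k3 (Q : BQ K p q s A B σ τ) : QD K (2 * q * s) (A * B / p) (σ * τ) σ where
  hD := by
    have : (p : K) ≠ 0 := by exact_mod_cast Q.p0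
    rw [div_pow, mul_pow, Q.hA, Q.hB]; push_cast; field_simp
  d0 := by have := Q.s0; have := Q.q0; positivity
  φD := by
    rw [AlgEquiv.mul_apply, map_div₀, map_mul, Q.τA, Q.τB, map_div₀, map_mul, map_neg, Q.σA, Q.σB,
      map_natCast, map_natCast]
    ring
  ψD := by
    rw [map_div₀, map_mul, Q.σA, Q.σB, map_natCast]; ring
  φφ := by intro x; rw [AlgEquiv.mul_apply, AlgEquiv.mul_apply, ← Q.comm, Q.σσ, Q.ττ]
  ψψ := Q.σσ
  comm := by intro x; rw [AlgEquiv.mul_apply, AlgEquiv.mul_apply, ← Q.comm]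
  fix := by
    intro x h1 h2
    rw [AlgEquiv.mul_apply, Q.comm, h2] at h1
    exact Q.fix x h2 h1

lemma BQ.A0 (Q : BQ K p q s A B σ τ) : A ≠ 0 := Q.k1.D0
lemma BQ.B0 (Q : BQ K p q s A B σ τ) : B ≠ 0 := Q.k2.D0

/-- Rational numbers which become squares in `K`. -/
lemma BQ.sq (Q : BQ K p q s A B σ τ) (r : ℚ) (z : K) (h : (r : K) = z ^ 2) :
    ∃ w : ℚ, r = w ^ 2 ∨ 2 * p * q * r = w ^ 2 ∨ p * s * r = w ^ 2 ∨
      2 * p * q * (p * s) * r = w ^ 2 := by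
  have sg : ∀ φ : K ≃ₐ[ℚ] K, φ z = z ∨ φ z = -z := by
    intro φ
    apply sq_eq_sq_iff_eq_or_eq_neg.1
    rw [← map_pow, ← h]; simp
  have key : ∀ D : K, ∀ d : ℚ, D ^ 2 = (d : K) → σ (D * z) = D * z → τ (D * z) = D * z →
      ∃ w : ℚ, d * r = w ^ 2 := by
    intro D d hD h1 h2
    obtain ⟨w, hw⟩ := Q.fix _ h1 h2
    refine ⟨w, ?_⟩
    have : ((d * r : ℚ) : K) = ((w ^ 2 : ℚ) : K) := by
      push_cast; rw [← hw, h, ← hD]; ring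
    exact_mod_cast this
  rcases sg σ with h1 | h1 <;> rcases sg τ with h2 | h2
  · obtain ⟨w, hw⟩ := key 1 1 (by simp) (by simp [h1]) (by simp [h2])
    exact ⟨w, Or.inl (by simpa using hw)⟩
  · obtain ⟨w, hw⟩ := key A (2 * p * q) (by rw [Q.hA]; push_cast; ring) (by simp [h1, Q.σA])
      (by simp [h2, Q.τA])
    exact ⟨w, Or.inr (Or.inl hw)⟩
  · obtain ⟨w, hw⟩ := key B (p * s) (by rw [Q.hB]; push_cast; ring) (by simp [h1, Q.σB])
      (by simp [h2, Q.τB])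
    exact ⟨w, Or.inr (Or.inr (Or.inl hw))⟩
  · obtain ⟨w, hw⟩ := key (A * B) (2 * p * q * (p * s))
      (by rw [mul_pow, Q.hA, Q.hB]; push_cast; ring) (by simp [h1, Q.σA, Q.σB])
      (by simp [h2, Q.τA, Q.τB])
    exact ⟨w, Or.inr (Or.inr (Or.inr hw))⟩

variable [Fact p.Prime] [Fact q.Prime] [Fact s.Prime]

lemma BQ.sqK (Q : BQ K p q s A B σ τ) (H : Hyp p q s) (N : ℤ) (hN2 : ¬ (2 : ℤ) ∣ N)
    (hNp : ¬ (p : ℤ) ∣ N) (z : K) (h : (N : K) = z ^ 2) : ∃ w : ℚ, (N : ℚ) = w ^ 2 := by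
  have hp : Prime (p : ℤ) := Nat.prime_iff_prime_int.1 Fact.out
  have h2 : Prime (2 : ℤ) := Int.prime_two
  have pq : ¬ (p : ℤ) ∣ q := by
    intro h
    have h' : p ∣ q := by exact_mod_cast h
    exact H.pq ((Nat.prime_dvd_prime_iff_eq Fact.out Fact.out).1 h')
  have ps : ¬ (p : ℤ) ∣ s := by
    intro h
    have h' : p ∣ s := by exact_mod_cast h
    exact H.ps ((Nat.prime_dvd_prime_iff_eq Fact.out Fact.out).1 h')
  have p2 : ¬ (p : ℤ) ∣ 2 := by
    intro h
    have h' : p ∣ 2 := by exact_mod_cast h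
    exact H.p2 ((Nat.prime_dvd_prime_iff_eq Fact.out Nat.prime_two).1 h')
  have q2 : ¬ (2 : ℤ) ∣ q := by have := H.q8; omega
  have s2 : ¬ (2 : ℤ) ∣ s := by have := H.s4; omega
  have aux : ∀ l M : ℤ, Prime l → ¬ l ∣ M → ¬ l ^ 2 ∣ l * M := by
    intro l M hl h1 h3
    rw [pow_two] at h3
    exact h1 ((mul_dvd_mul_iff_left hl.ne_zero).1 h3)
  obtain ⟨w, h | h | h | h⟩ := Q.sq N z (by exact_mod_cast h)
  · exact ⟨w, h⟩
  · exfalso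
    refine not_sq p Fact.out (p * (2 * q * N)) (dvd_mul_right _ _) (aux _ _ hp ?_) w ?_
    · intro h3
      rcases hp.dvd_or_dvd h3 with h3 | h3
      · exact (hp.dvd_or_dvd h3).elim p2 pq
      · exact hNp h3
    · rw [← h]; push_cast; ring
  · exfalso
    refine not_sq p Fact.out (p * (s * N)) (dvd_mul_right _ _) (aux _ _ hp ?_) w ?_
    · intro h3
      exact (hp.dvd_or_dvd h3).elim ps hNp
    · rw [← h]; push_cast; ring
  · exfalso
    have hp0 : (p : ℚ) ≠ 0 := by exact_mod_cast Q.p0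
    refine not_sq 2 Nat.prime_two (2 * (q * s * N)) (dvd_mul_right _ _) (aux _ _ h2 ?_) (w / p) ?_
    · intro h3
      rcases h2.dvd_or_dvd h3 with h3 | h3
      · exact (h2.dvd_or_dvd h3).elim q2 s2
      · exact hN2 h3
    · rw [div_pow, ← h]; push_cast; field_simp

/-- The only one of `±1, ±q, ±s, ±qs` which is a square in `K` is `1`. -/
lemma BQ.sq_one (Q : BQ K p q s A B σ τ) (H : Hyp p q s) (e : ℤ) (he : e = 1 ∨ e = -1) (M : ℕ)
    (hM : M = 1 ∨ M = q ∨ M = s ∨ M = q * s) (z : K) (h : (e : K) * M = z ^ 2) :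
    e = 1 ∧ M = 1 := by
  have hp : Nat.Prime p := Fact.out
  have hq : Nat.Prime q := Fact.out
  have hs : Nat.Prime s := Fact.out
  have pq : ¬ p ∣ q := fun h => H.pq ((Nat.prime_dvd_prime_iff_eq hp hq).1 h)
  have ps : ¬ p ∣ s := fun h => H.ps ((Nat.prime_dvd_prime_iff_eq hp hs).1 h)
  have qs : ¬ q ∣ s := fun h => H.qs ((Nat.prime_dvd_prime_iff_eq hq hs).1 h)
  have hpM : ¬ p ∣ M := by
    rcases hM with rfl | rfl | rfl | rfl
    · exact hp.one_lt.ne' ∘ Nat.dvd_one.1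
    · exact pq
    · exact ps
    · intro h; exact (hp.dvd_mul.1 h).elim pq ps
  have h2M : ¬ 2 ∣ M := by
    have h1 := H.q8
    have h2 := H.s4
    rcases hM with rfl | rfl | rfl | rfl
    · omega
    · omega
    · omega
    · intro h; rcases Nat.prime_two.dvd_mul.1 h with h | h <;> omega
  have dv : ∀ l : ℕ, (l : ℤ) ∣ e * M ↔ l ∣ M := by
    intro l
    rcases he with rfl | rfl
    · rw [one_mul]; exact Int.natCast_dvd_natCast
    · rw [neg_one_mul, dvd_neg]; exact Int.natCast_dvd_natCast
  obtain ⟨w, hw⟩ := Q.sqK H (e * M) (fun h => h2M ((dv 2).1 (by exact_mod_cast h)))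
    (fun h => hpM ((dv p).1 h)) z (by push_cast; exact h)
  have fin : ∀ l : ℕ, l.Prime → l ∣ M → ¬ l ^ 2 ∣ M → False := by
    intro l hl h1 h2
    exact not_sq l hl (e * M) ((dv l).2 h1)
      (fun h => h2 ((dv (l ^ 2)).1 (by exact_mod_cast h))) w hw
  have hM1 : M = 1 := by
    rcases hM with rfl | rfl | rfl | rfl
    · rfl
    · refine (fin M hq dvd_rfl ?_).elim
      intro h; rw [pow_two] at h
      have := Nat.le_of_dvd hq.pos h
      nlinarith [hq.two_le]
    · refine (fin M hs dvd_rfl ?_).elim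
      intro h; rw [pow_two] at h
      have := Nat.le_of_dvd hs.pos h
      nlinarith [hs.two_le]
    · refine (fin q hq (dvd_mul_right _ _) ?_).elim
      intro h; rw [pow_two] at h
      exact qs ((mul_dvd_mul_iff_left hq.ne_zero).1 h)
  refine ⟨?_, hM1⟩
  rcases he with rfl | rfl
  · rfl
  · exfalso
    rw [hM1] at hw
    push_cast at hw
    nlinarith [sq_nonneg w]

end TwoClass

namespace TwoClass

variable {K : Type*} [Field K] [NumberField K] {p q s : ℕ} {A B : K} {σ τ : K ≃ₐ[ℚ] K}

/-- The action of an automorphism on the ring of integers. -/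
noncomputable def act (φ : K ≃ₐ[ℚ] K) : 𝓞 K →+* 𝓞 K := RingOfIntegers.mapRingHom (φ : K →+* K)

lemma act_coe (φ : K ≃ₐ[ℚ] K) (x : 𝓞 K) : ((act φ x : 𝓞 K) : K) = φ x := rfl

lemma int_dvd (a b : ℤ) (ha : a ≠ 0) (y : 𝓞 K) (h : (b : 𝓞 K) = a * y) : a ∣ b := by
  have haK : (a : K) ≠ 0 := by exact_mod_cast ha
  have h1 : (b : K) = a * (y : K) := by
    have := congrArg (fun t : 𝓞 K => (t : K)) h
    simpa using this
  obtain ⟨z, hz⟩ := int_of_rat (K := K) ((b : ℚ) / a) (by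
    have : (((b : ℚ) / a : ℚ) : K) = (y : K) := by
      push_cast; rw [h1]; field_simp
    rw [this]; exact y.isIntegral_coe)
  refine ⟨z, ?_⟩
  have haQ : (a : ℚ) ≠ 0 := by exact_mod_cast ha
  rw [div_eq_iff haQ] at hz
  have : b = z * a := by exact_mod_cast hz
  rw [this, mul_comm]

lemma BQ.Aint (Q : BQ K p q s A B σ τ) : IsIntegral ℤ A := by
  refine IsIntegral.of_pow (n := 2) (by norm_num) ?_
  rw [Q.hA]
  exact_mod_cast isIntegral_intCast (R := ℤ) (B := K) (2 * p * q : ℤ)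

lemma BQ.Bint (Q : BQ K p q s A B σ τ) : IsIntegral ℤ B := by
  refine IsIntegral.of_pow (n := 2) (by norm_num) ?_
  rw [Q.hB]
  exact_mod_cast isIntegral_intCast (R := ℤ) (B := K) (p * s : ℤ)

/-- Coordinates of an integer of `K`. -/
lemma BQ.decomp (Q : BQ K p q s A B σ τ) (x : 𝓞 K) : ∃ a b : 𝓞 K, (a : K) = A ∧ (b : K) = B ∧
    ∃ t0 t1 t2 t3 : ℤ, (t0 : 𝓞 K) = x + act σ x + act τ x + act σ (act τ x) ∧
    (t1 : 𝓞 K) = a * (x + act σ x - act τ x - act σ (act τ x)) ∧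
    (t2 : 𝓞 K) = b * (x - act σ x + act τ x - act σ (act τ x)) ∧
    (t3 : 𝓞 K) = a * b * (x - act σ x - act τ x + act σ (act τ x)) ∧
    ((4 * (2 * p * q) * (p * s) : ℤ) : 𝓞 K) * x = (2 * p * q) * (p * s) * t0 + p * s * a * t1 +
      2 * p * q * b * t2 + a * b * t3 := by
  have fx : ∀ y : 𝓞 K, σ y = y → τ y = y → ∃ t : ℤ, (t : 𝓞 K) = y := by
    intro y h1 h2
    obtain ⟨r, hr⟩ := Q.fix y h1 h2
    obtain ⟨z, hz⟩ := int_of_rat (K := K) r (by rw [← hr]; exact y.isIntegral_coe)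
    refine ⟨z, ?_⟩
    apply RingOfIntegers.ext
    rw [hr, hz]; simp
  set a : 𝓞 K := ⟨A, Q.Aint⟩ with ha
  set b : 𝓞 K := ⟨B, Q.Bint⟩ with hb
  have ha' : (a : K) = A := rfl
  have hb' : (b : K) = B := rfl
  obtain ⟨t0, h0⟩ := fx (x + act σ x + act τ x + act σ (act τ x))
    (by simp only [map_add, act_coe, Q.σσ]; ring)
    (by simp only [map_add, act_coe, Q.ττ, Q.comm]; ring)
  obtain ⟨t1, h1⟩ := fx (a * (x + act σ x - act τ x - act σ (act τ x)))
    (by simp only [map_add, map_sub, map_mul, act_coe, Q.σσ, ha', Q.σA]; ring)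
    (by simp only [map_add, map_sub, map_mul, act_coe, Q.ττ, Q.comm, ha', Q.τA]; ring)
  obtain ⟨t2, h2⟩ := fx (b * (x - act σ x + act τ x - act σ (act τ x)))
    (by simp only [map_add, map_sub, map_mul, act_coe, Q.σσ, hb', Q.σB]; ring)
    (by simp only [map_add, map_sub, map_mul, act_coe, Q.ττ, Q.comm, hb', Q.τB]; ring)
  obtain ⟨t3, h3⟩ := fx (a * b * (x - act σ x - act τ x + act σ (act τ x)))
    (by simp only [map_add, map_sub, map_mul, act_coe, Q.σσ, ha', hb', Q.σA, Q.σB]; ring)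
    (by simp only [map_add, map_sub, map_mul, act_coe, Q.ττ, Q.comm, ha', hb', Q.τA, Q.τB]; ring)
  refine ⟨a, b, rfl, rfl, t0, t1, t2, t3, h0, h1, h2, h3, ?_⟩
  have hA : a ^ 2 = 2 * p * q := by
    apply RingOfIntegers.ext
    change algebraMap (𝓞 K) K (a ^ 2) = algebraMap (𝓞 K) K _
    rw [map_pow, show (algebraMap (𝓞 K) K) a = A from rfl, Q.hA]; simp only [map_mul, map_natCast, map_ofNat]
  have hB : b ^ 2 = p * s := by
    apply RingOfIntegers.ext; simp [hb', Q.hB]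
  rw [h0, h1, h2, h3]
  push_cast
  linear_combination (-(p * s : 𝓞 K) * (x + act σ x - act τ x - act σ (act τ x)) - b ^ 2 * (x - act σ x - act τ x + act σ (act τ x))) * hA - (2 * p * q : 𝓞 K) * (x - act σ x + act τ x - act σ (act τ x) + (x - act σ x - act τ x + act σ (act τ x))) * hB

/-- An integer all of whose conjugates are nilpotent modulo `l` is divisible by `l`. -/
lemma BQ.dvd_of_rad (Q : BQ K p q s A B σ τ) (l : ℕ) (hl : l.Prime) (hl2 : ¬ l ∣ 2 * p * q * s)
    (x : 𝓞 K) (hx : x ∈ (Ideal.span {(l : 𝓞 K)}).radical) : x ∈ Ideal.span {(l : 𝓞 K)} := by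
  have ar : ∀ φ : K ≃ₐ[ℚ] K, ∀ y ∈ (Ideal.span {(l : 𝓞 K)}).radical,
      act φ y ∈ (Ideal.span {(l : 𝓞 K)}).radical := by
    rintro φ y ⟨k, hk⟩
    refine ⟨k, ?_⟩
    rw [Ideal.mem_span_singleton] at hk ⊢
    obtain ⟨z, hz⟩ := hk
    refine ⟨act φ z, ?_⟩
    rw [← map_pow, hz, map_mul, map_natCast]
  have hlZ : Prime (l : ℤ) := Nat.prime_iff_prime_int.1 hl
  have tr : ∀ t : ℤ, (t : 𝓞 K) ∈ (Ideal.span {(l : 𝓞 K)}).radical →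
      (t : 𝓞 K) ∈ Ideal.span {(l : 𝓞 K)} := by
    rintro t ⟨k, hk⟩
    rw [Ideal.mem_span_singleton] at hk ⊢
    obtain ⟨z, hz⟩ := hk
    have h1 := int_dvd (l : ℤ) (t ^ k) hlZ.ne_zero z (by push_cast; exact hz)
    obtain ⟨c, hc⟩ := hlZ.dvd_of_dvd_pow h1
    exact ⟨(c : 𝓞 K), by rw [hc]; push_cast; ring⟩
  obtain ⟨a, b, -, -, t0, t1, t2, t3, h0, h1, h2, h3, hh⟩ := Q.decomp x
  have hs := ar σ x hx
  have ht := ar τ x hx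
  have hst := ar σ _ ht
  have r0 := tr t0 (by
    rw [h0]; exact Ideal.add_mem _ (Ideal.add_mem _ (Ideal.add_mem _ hx hs) ht) hst)
  have r1 := tr t1 (by
    rw [h1]; exact Ideal.mul_mem_left _ _ (Ideal.sub_mem _ (Ideal.sub_mem _ (Ideal.add_mem _ hx hs) ht) hst))
  have r2 := tr t2 (by
    rw [h2]; exact Ideal.mul_mem_left _ _ (Ideal.sub_mem _ (Ideal.add_mem _ (Ideal.sub_mem _ hx hs) ht) hst))
  have r3 := tr t3 (by
    rw [h3]; exact Ideal.mul_mem_left _ _ (Ideal.add_mem _ (Ideal.sub_mem _ (Ideal.sub_mem _ hx hs) ht) hst))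
  have hN : ((4 * (2 * p * q) * (p * s) : ℤ) : 𝓞 K) * x ∈ Ideal.span {(l : 𝓞 K)} := by
    rw [hh]
    exact Ideal.add_mem _ (Ideal.add_mem _ (Ideal.add_mem _ (Ideal.mul_mem_left _ _ r0)
      (Ideal.mul_mem_left _ _ r1)) (Ideal.mul_mem_left _ _ r2)) (Ideal.mul_mem_left _ _ r3)
  have hc : IsCoprime (4 * (2 * p * q) * (p * s) : ℤ) (l : ℤ) := by
    have hcn : Nat.Coprime (4 * (2 * p * q) * (p * s)) l := by
      rw [Nat.coprime_comm, Nat.Prime.coprime_iff_not_dvd hl]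
      intro h
      apply hl2
      have d2 : l ∣ 2 → l ∣ 2 * p * q * s := fun h => ((h.mul_right p).mul_right q).mul_right s
      have dp : l ∣ p → l ∣ 2 * p * q * s := fun h => ((h.mul_left 2).mul_right q).mul_right s
      have dq : l ∣ q → l ∣ 2 * p * q * s := fun h => (h.mul_left _).mul_right s
      have ds : l ∣ s → l ∣ 2 * p * q * s := fun h => h.mul_left _
      rcases hl.dvd_mul.1 h with h | h
      · rcases hl.dvd_mul.1 h with h | h
        · exact d2 (hl.dvd_of_dvd_pow (n := 2) (by simpa using h))
        · exact h.mul_right s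
      · rcases hl.dvd_mul.1 h with h | h
        · exact dp h
        · exact ds h
    have := Nat.isCoprime_iff_coprime.2 hcn
    exact_mod_cast this
  obtain ⟨u, v, huv⟩ := hc
  have : x = (u : 𝓞 K) * (((4 * (2 * p * q) * (p * s) : ℤ) : 𝓞 K) * x) + (v : 𝓞 K) * x * (l : 𝓞 K) := by
    have := congrArg (Int.cast : ℤ → 𝓞 K) huv
    push_cast at this ⊢
    linear_combination (-x) * this
  rw [this]
  exact Ideal.add_mem _ (Ideal.mul_mem_left _ _ hN)
    (Ideal.mul_mem_left _ _ (Ideal.mem_span_singleton_self _))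

lemma BQ.U1 (Q : BQ K p q s A B σ τ) (m : ℕ) (hm : Squarefree m) (e : Ideal (𝓞 K))
    (he : e ^ 2 = Ideal.span {(m : 𝓞 K)}) (l : ℕ) (hl : l.Prime) (hlm : l ∣ m) :
    l ∣ 2 * p * q * s := by
  by_contra hc
  have hle : e ≤ Ideal.span {(l : 𝓞 K)} := by
    intro x hx
    refine Q.dvd_of_rad l hl hc x ⟨2, ?_⟩
    have : x ^ 2 ∈ e ^ 2 := Ideal.pow_mem_pow hx 2
    rw [he, Ideal.mem_span_singleton] at this
    rw [Ideal.mem_span_singleton]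
    exact (Nat.cast_dvd_cast hlm).trans this
  have h1 : e ^ 2 ≤ Ideal.span {(l : 𝓞 K)} ^ 2 := Ideal.pow_right_mono hle 2
  rw [he, Ideal.span_singleton_pow, Ideal.span_singleton_le_span_singleton] at h1
  obtain ⟨y, hy⟩ := h1
  have h2 := int_dvd (l ^ 2 : ℤ) m (by exact_mod_cast pow_ne_zero 2 hl.ne_zero) y
    (by push_cast; exact hy)
  have h3 : l * l ∣ m := by rw [← pow_two]; exact_mod_cast h2
  exact hl.one_lt.ne' (Nat.isUnit_iff.1 (hm l h3))

/-- If `(δ)` is the square of an ideal and `δ = e m γ²` with `m` squarefree then every prime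
factor of `m` divides `2pqs`. -/
lemma BQ.U (Q : BQ K p q s A B σ τ) (m : ℕ) (hm : Squarefree m) (b : Ideal (𝓞 K)) (δ : 𝓞 K)
    (hδ : δ ≠ 0) (hb : b ^ 2 = Ideal.span {δ}) (e : ℤ) (he : e = 1 ∨ e = -1) (γ : K)
    (h : (δ : K) = e * m * γ ^ 2) (l : ℕ) (hl : l.Prime) (hlm : l ∣ m) :
    l ∣ 2 * p * q * s := by
  have hee : (e : K) ^ 2 = 1 := by rcases he with rfl | rfl <;> simp
  have h_integral : IsIntegral ℤ (m * γ) := by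
    refine IsIntegral.of_pow (n := 2) (by norm_num) ?_
    have : (m * γ) ^ 2 = (e : K) * m * (δ : K) := by
      rw [h]; linear_combination (-(m : K) ^ 2 * γ ^ 2) * hee
    rw [this]
    have h1 : IsIntegral ℤ ((e : K)) := isIntegral_intCast (R := ℤ) (B := K) e
    have h2 : IsIntegral ℤ ((m : K)) := isIntegral_natCast (R := ℤ) (B := K) m
    exact (h1.mul h2).mul δ.isIntegral_coe
  set κ : 𝓞 K := ⟨m * γ, h_integral⟩ with hκ
  have hκ2 : κ ^ 2 = (e : 𝓞 K) * m * δ := by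
    apply RingOfIntegers.ext
    have : ((κ : 𝓞 K) : K) = m * γ := rfl
    simp only [map_pow, map_mul, this, map_intCast, map_natCast]
    rw [show (algebraMap (𝓞 K) K) δ = _ from h]; linear_combination (-(m : K) ^ 2 * γ ^ 2) * hee
  have hsp : Ideal.span {κ} ^ 2 = Ideal.span {(m : 𝓞 K)} * b ^ 2 := by
    rw [hb, Ideal.span_singleton_pow, Ideal.span_singleton_mul_span_singleton, hκ2]
    rcases he with rfl | rfl
    · simp
    · rw [show ((-1 : ℤ) : 𝓞 K) * m * δ = -((m : 𝓞 K) * δ) by push_cast; ring, Ideal.span_singleton_neg]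
  have hdv : b ∣ Ideal.span {κ} := by
    rw [← UniqueFactorizationMonoid.pow_dvd_pow_iff_dvd (two_ne_zero), hsp]; exact dvd_mul_left _ _
  obtain ⟨c, hc⟩ := hdv
  have hb0 : b ^ 2 ≠ 0 := by
    rw [hb]
    simpa using hδ
  refine Q.U1 m hm c ?_ l hl hlm
  rw [hc, mul_pow, mul_comm] at hsp
  exact mul_right_cancel₀ hb0 hsp

end TwoClass

namespace TwoClass

set_option linter.unusedSectionVars false

variable {K : Type*} [Field K] [NumberField K] {p q s : ℕ} {A B : K} {σ τ : K ≃ₐ[ℚ] K}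

lemma exists_int {x : K} (hx : IsIntegral ℤ x) : ∃ y : 𝓞 K, (y : K) = x := ⟨⟨x, hx⟩, rfl⟩

lemma mk_unit (x y : K) (hx : IsIntegral ℤ x) (hy : IsIntegral ℤ y) (h : x * y = 1) :
    ∃ η : (𝓞 K)ˣ, ((η : 𝓞 K) : K) = x := by
  obtain ⟨x, rfl⟩ := exists_int hx
  obtain ⟨y, rfl⟩ := exists_int hy
  have h' : x * y = 1 := by
    apply RingOfIntegers.ext; simpa using h
  exact ⟨⟨x, y, h', by rw [mul_comm, h']⟩, rfl⟩

/-- A unit times a square. -/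
def US (x : K) : Prop := ∃ η : (𝓞 K)ˣ, ∃ z : K, x = ((η : 𝓞 K) : K) * z ^ 2

lemma US.mul {x y : K} (hx : US x) (hy : US y) : US (x * y) := by
  obtain ⟨η, z, rfl⟩ := hx
  obtain ⟨η', z', rfl⟩ := hy
  refine ⟨η * η', z * z', ?_⟩
  rw [Units.val_mul]
  change _ = algebraMap (𝓞 K) K (_ * _) * _
  rw [map_mul]
  ring

lemma US.sq (z : K) : US (z ^ 2) := ⟨1, z, by simp⟩

lemma US.neg_one : US (-1 : K) := ⟨-1, 1, by simp⟩

lemma US.inv {x : K} (hx : US x) : US x⁻¹ := by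
  by_cases h : x = 0
  · exact ⟨1, 0, by simp [h]⟩
  · have : x⁻¹ = x * (x⁻¹) ^ 2 := by field_simp
    rw [this]; exact hx.mul (US.sq _)

lemma US.of_sq_eq {l y : K} (hl : l ≠ 0) (h : US (l * y)) (hy : US y) (hy0 : y ≠ 0) : US l := by
  have : l = l * y * y⁻¹ := by field_simp
  rw [this]; exact h.mul hy.inv

/-- Descent from `α = unit * square` to principality. -/
lemma principal_of_US (a : Ideal (𝓞 K)) (α : 𝓞 K) (ha : a ^ 2 = Ideal.span {α})
    (h : US (α : K)) : ∃ z : 𝓞 K, a = Ideal.span {z} := by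
  obtain ⟨η, z, hz⟩ := h
  have hz' : z ^ 2 = (((η⁻¹ : (𝓞 K)ˣ) : 𝓞 K) * α : 𝓞 K) := by
    have h1 : (((η⁻¹ : (𝓞 K)ˣ) : 𝓞 K) : K) * ((η : 𝓞 K) : K) = 1 := by
      rw [← map_mul]; simp
    simp only [map_mul]
    rw [show algebraMap (𝓞 K) K α = _ from hz, ← mul_assoc, h1, one_mul]
  have h_integral : IsIntegral ℤ z := by
    refine IsIntegral.of_pow (n := 2) (by norm_num) ?_
    rw [hz']; exact RingOfIntegers.isIntegral_coe _
  obtain ⟨y, rfl⟩ := exists_int h_integral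
  refine ⟨y, ?_⟩
  have hsq : y ^ 2 = ((η⁻¹ : (𝓞 K)ˣ) : 𝓞 K) * α := by
    apply RingOfIntegers.ext
    rw [← hz']; simp
  have hid : a ^ 2 = Ideal.span {y} ^ 2 := by
    rw [Ideal.span_singleton_pow, hsq, ha, Ideal.span_singleton_mul_left_unit η⁻¹.isUnit]
  exact dvd_antisymm
    ((UniqueFactorizationMonoid.pow_dvd_pow_iff_dvd two_ne_zero).1 hid.dvd)
    ((UniqueFactorizationMonoid.pow_dvd_pow_iff_dvd two_ne_zero).1 hid.symm.dvd)

variable [Fact p.Prime] [Fact q.Prime] [Fact s.Prime]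

/-- The unit `F₁² / q`. -/
lemma BQ.F1 (Q : BQ K p q s A B σ τ) (H : Hyp p q s) : ∃ (F : K) (η : (𝓞 K)ˣ),
    F ^ 2 = q * ((η : 𝓞 K) : K) ∧ σ F = F ∧ F * τ F = q := by
  obtain ⟨u, v, h⟩ := H.eq1
  have hK : (q : K) * u ^ 2 = 2 * p * v ^ 2 + 1 := by exact_mod_cast congrArg (Nat.cast : ℕ → K) h
  have hi : ∀ z w : ℤ, IsIntegral ℤ ((z : K) + w * A) := fun z w =>
    (isIntegral_intCast (R := ℤ) (B := K) z).add
      ((isIntegral_intCast (R := ℤ) (B := K) w).mul Q.Aint)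
  obtain ⟨η, hη⟩ := mk_unit (K := K) _ _ (hi (q * u ^ 2 + 2 * p * v ^ 2) (2 * u * v))
    (hi (q * u ^ 2 + 2 * p * v ^ 2) (-(2 * u * v))) (by
      push_cast
      linear_combination (q * (u : K) ^ 2 - 2 * p * v ^ 2 + 1) * hK - 4 * u ^ 2 * v ^ 2 * Q.hA)
  refine ⟨q * u + v * A, η, ?_, ?_, ?_⟩
  · rw [hη]; push_cast; linear_combination v ^ 2 * Q.hA
  · simp [Q.σA]
  · simp only [map_add, map_mul, map_natCast, Q.τA]
    linear_combination q * hK - v ^ 2 * Q.hA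

/-- The unit `F₂² / p`. -/
lemma BQ.F2 (Q : BQ K p q s A B σ τ) (H : Hyp p q s) : ∃ (F : K) (η : (𝓞 K)ˣ),
    F ^ 2 = p * ((η : 𝓞 K) : K) ∧ τ F = F ∧ F * σ F = p := by
  obtain ⟨u, v, h⟩ := H.eq2
  have hK : (p : K) * u ^ 2 = s * v ^ 2 + 1 := by exact_mod_cast congrArg (Nat.cast : ℕ → K) h
  have hi : ∀ z w : ℤ, IsIntegral ℤ ((z : K) + w * B) := fun z w =>
    (isIntegral_intCast (R := ℤ) (B := K) z).add
      ((isIntegral_intCast (R := ℤ) (B := K) w).mul Q.Bint)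
  obtain ⟨η, hη⟩ := mk_unit (K := K) _ _ (hi (p * u ^ 2 + s * v ^ 2) (2 * u * v))
    (hi (p * u ^ 2 + s * v ^ 2) (-(2 * u * v))) (by
      push_cast
      linear_combination (p * (u : K) ^ 2 - s * v ^ 2 + 1) * hK - 4 * u ^ 2 * v ^ 2 * Q.hB)
  refine ⟨p * u + v * B, η, ?_, ?_, ?_⟩
  · rw [hη]; push_cast; linear_combination v ^ 2 * Q.hB
  · simp [Q.τB]
  · simp only [map_add, map_mul, map_natCast, Q.σB]
    linear_combination p * hK - v ^ 2 * Q.hB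

lemma US.unit (η : (𝓞 K)ˣ) : US ((η : 𝓞 K) : K) := ⟨η, 1, by simp⟩

lemma unit_ne (η : (𝓞 K)ˣ) : ((η : 𝓞 K) : K) ≠ 0 := by
  intro h
  exact η.ne_zero (RingOfIntegers.ext (by simpa using h))

lemma BQ.USq (Q : BQ K p q s A B σ τ) (H : Hyp p q s) : US (q : K) := by
  obtain ⟨F, η, h, -⟩ := Q.F1 H
  exact US.of_sq_eq (by exact_mod_cast Q.q0) (h ▸ US.sq F) (US.unit η) (unit_ne η)

lemma BQ.USp (Q : BQ K p q s A B σ τ) (H : Hyp p q s) : US (p : K) := by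
  obtain ⟨F, η, h, -⟩ := Q.F2 H
  exact US.of_sq_eq (by exact_mod_cast Q.p0) (h ▸ US.sq F) (US.unit η) (unit_ne η)

lemma BQ.USs (Q : BQ K p q s A B σ τ) (H : Hyp p q s) : US (s : K) := by
  refine US.of_sq_eq (y := p) (by exact_mod_cast Q.s0) ?_ (Q.USp H) (by exact_mod_cast Q.p0)
  rw [mul_comm, ← Q.hB]; exact US.sq _

lemma BQ.US2 (Q : BQ K p q s A B σ τ) (H : Hyp p q s) : US (2 : K) := by
  have hp : (p : K) ≠ 0 := by exact_mod_cast Q.p0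
  have hq : (q : K) ≠ 0 := by exact_mod_cast Q.q0
  refine US.of_sq_eq (y := p * q) (by norm_num) ?_ ((Q.USp H).mul (Q.USq H)) (mul_ne_zero hp hq)
  rw [← mul_assoc, ← Q.hA]; exact US.sq _

lemma BQ.USm (Q : BQ K p q s A B σ τ) (H : Hyp p q s) (m : ℕ) (hm0 : m ≠ 0)
    (hm : ∀ l : ℕ, l.Prime → l ∣ m → l ∣ 2 * p * q * s) : US (m : K) := by
  induction m using Nat.recOnMul with
  | zero => exact absurd rfl hm0
  | one => exact ⟨1, 1, by simp⟩
  | prime l hl =>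
    have := hm l hl dvd_rfl
    rcases hl.dvd_mul.1 this with h | h
    · rcases hl.dvd_mul.1 h with h | h
      · rcases hl.dvd_mul.1 h with h | h
        · rw [(Nat.prime_dvd_prime_iff_eq hl Nat.prime_two).1 h]; exact_mod_cast Q.US2 H
        · rw [(Nat.prime_dvd_prime_iff_eq hl Fact.out).1 h]; exact Q.USp H
      · rw [(Nat.prime_dvd_prime_iff_eq hl Fact.out).1 h]; exact Q.USq H
    · rw [(Nat.prime_dvd_prime_iff_eq hl Fact.out).1 h]; exact Q.USs H
  | mul x y hx hy =>
    push_cast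
    refine (hx (by rintro rfl; simp at hm0) fun l hl h => hm l hl (h.mul_right _)).mul
      (hy (by rintro rfl; simp at hm0) fun l hl h => hm l hl (h.mul_left _))

lemma BQ.end1 (Q : BQ K p q s A B σ τ) (H : Hyp p q s) (a : Ideal (𝓞 K)) (α : 𝓞 K) (hα : α ≠ 0)
    (ha : a ^ 2 = Ideal.span {α}) (r : ℚ) (hr : r ≠ 0) (β : K) (h : (r : K) * α = β ^ 2) :
    ∃ z : 𝓞 K, a = Ideal.span {z} := by
  have hαK : (α : K) ≠ 0 := fun h => hα (RingOfIntegers.ext (by simpa using h))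
  obtain ⟨m, b, hbm, hm⟩ := Nat.sq_mul_squarefree (r.num.natAbs * r.den)
  have hnum : r.num ≠ 0 := Rat.num_ne_zero.2 hr
  have hden : (r.den : K) ≠ 0 := by exact_mod_cast r.den_ne_zero
  have hpos : r.num.natAbs * r.den ≠ 0 := mul_ne_zero (by simpa using hnum) r.den_ne_zero
  have hb0 : b ≠ 0 := by rintro rfl; exact hpos (by rw [← hbm]; simp)
  have hm0 := hm.ne_zero
  have hbK : (b : K) ≠ 0 := by exact_mod_cast hb0
  have hmK : (m : K) ≠ 0 := by exact_mod_cast hm0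
  obtain ⟨e, he, hen⟩ : ∃ e : ℤ, (e = 1 ∨ e = -1) ∧ r.num = e * r.num.natAbs := by
    rcases Int.natAbs_eq r.num with h | h
    · exact ⟨1, Or.inl rfl, by rw [one_mul]; exact h⟩
    · exact ⟨-1, Or.inr rfl, by rw [neg_one_mul]; exact h⟩
  have hee : (e : K) ^ 2 = 1 := by rcases he with rfl | rfl <;> simp
  have hrK : (r : K) * r.den ^ 2 = e * m * b ^ 2 := by
    have h1 : (r : K) * r.den = r.num := by
      have := Rat.mul_den_eq_num r
      exact_mod_cast congrArg (Rat.cast : ℚ → K) this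
    have h2 : (r.num : K) = e * (r.num.natAbs : K) := by
      have := congrArg (Int.cast : ℤ → K) hen
      rw [Int.cast_mul, Int.cast_natCast] at this
      exact this
    have h3 : (b : K) ^ 2 * m = r.num.natAbs * r.den := by
      exact_mod_cast congrArg (Nat.cast : ℕ → K) hbm
    linear_combination r.den * h1 + r.den * h2 - e * h3
  have hαe : (α : K) = e * m * (β * r.den / (m * b)) ^ 2 := by
    rw [div_pow, mul_pow, ← h]
    field_simp
    linear_combination (- (e : K)) * hrK - (m : K) * b ^ 2 * hee
  have hl := Q.U m hm a α hα ha e he _ hαe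
  refine principal_of_US a α ha ?_
  rw [hαe]
  refine (US.mul ?_ (Q.USm H m hm0 hl)).mul (US.sq _)
  rcases he with rfl | rfl
  · simpa using US.sq (1 : K)
  · simpa using US.neg_one (K := K)

/-- Hilbert 90 type construction. -/
lemma BQ.hil (Q : BQ K p q s A B σ τ) (α γ1 γ2 γ3 : K) (hα : α ≠ 0)
    (h1 : σ γ1 = γ1) (h2 : τ γ2 = γ2) (a1 : α * σ α = γ1 ^ 2) (a2 : α * τ α = γ2 ^ 2)
    (b1 : α * σ γ3 = γ1 * γ2) (b2 : α * σ γ2 = γ1 * γ3) (b3 : α * τ γ1 = γ2 * γ3)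
    (b4 : α * τ γ3 = γ1 * γ2) : ∃ r : ℚ, (r : K) * α = (α + γ1 + γ2 + γ3) ^ 2 := by
  set β := α + γ1 + γ2 + γ3 with hβ
  have hσα : σ α ≠ 0 := by simpa using hα
  have hτα : τ α ≠ 0 := by simpa using hα
  have c1 : α * σ β = β * γ1 := by
    rw [hβ]; simp only [map_add, h1]; linear_combination a1 + b2 + b1
  have c2 : α * τ β = β * γ2 := by
    rw [hβ]; simp only [map_add, h2]; linear_combination a2 + b3 + b4
  obtain ⟨r, hr⟩ := Q.fix (β ^ 2 / α) (by
      rw [map_div₀, map_pow, div_eq_div_iff hσα hα]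
      apply mul_left_cancel₀ hα
      linear_combination (α * σ β + β * γ1) * c1 - β ^ 2 * a1) (by
      rw [map_div₀, map_pow, div_eq_div_iff hτα hα]
      apply mul_left_cancel₀ hα
      linear_combination (α * τ β + β * γ2) * c2 - β ^ 2 * a2)
  exact ⟨r, by rw [← hr]; field_simp⟩

lemma BQ.end2 (Q : BQ K p q s A B σ τ) (H : Hyp p q s) (a : Ideal (𝓞 K)) (α : 𝓞 K) (hα : α ≠ 0)
    (ha : a ^ 2 = Ideal.span {α}) (γ1 γ2 γ3 : K)
    (h1 : σ γ1 = γ1) (h2 : τ γ2 = γ2) (a1 : α * σ α = γ1 ^ 2) (a2 : α * τ α = γ2 ^ 2)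
    (b1 : α * σ γ3 = γ1 * γ2) (b2 : α * σ γ2 = γ1 * γ3) (b3 : α * τ γ1 = γ2 * γ3)
    (b4 : α * τ γ3 = γ1 * γ2) : ∃ z : 𝓞 K, a = Ideal.span {z} := by
  have hαK : (α : K) ≠ 0 := fun h => hα (RingOfIntegers.ext (by simpa using h))
  have fin : ∀ (β : K), β ≠ 0 → (∃ r : ℚ, (r : K) * α = β ^ 2) → ∃ z : 𝓞 K, a = Ideal.span {z} := by
    rintro β hβ ⟨r, hr⟩
    refine Q.end1 H a α hα ha r ?_ β hr
    rintro rfl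
    simp at hr
    exact hβ (pow_eq_zero_iff two_ne_zero |>.1 hr.symm)
  by_cases c1 : (α : K) + γ1 + γ2 + γ3 = 0
  · by_cases c2 : (α : K) + γ1 + -γ2 + -γ3 = 0
    · by_cases c3 : (α : K) + -γ1 + γ2 + -γ3 = 0
      · refine fin ((α : K) + -γ1 + -γ2 + γ3) ?_ (Q.hil α (-γ1) (-γ2) γ3 hαK (by rw [map_neg, h1])
          (by rw [map_neg, h2])
          (by rw [a1]; ring) (by rw [a2]; ring) (by rw [b1]; ring)
          (by rw [map_neg]; linear_combination -b2) (by rw [map_neg]; linear_combination -b3)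
          (by rw [b4]; ring))
        intro c4
        have : (4 : K) * α = 0 := by linear_combination c1 + c2 + c3 + c4
        simp [hα] at this
      · exact fin _ c3 (Q.hil α (-γ1) γ2 (-γ3) hαK (by rw [map_neg, h1]) h2
          (by rw [a1]; ring) (by rw [a2]) (by rw [map_neg]; linear_combination -b1)
          (by rw [b2]; ring) (by rw [map_neg]; linear_combination -b3)
          (by rw [map_neg]; linear_combination -b4))
    · exact fin _ c2 (Q.hil α γ1 (-γ2) (-γ3) hαK h1 (by rw [map_neg, h2])
          a1 (by rw [a2]; ring) (by rw [map_neg]; linear_combination -b1)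
          (by rw [map_neg]; linear_combination -b2) (by rw [b3]; ring)
          (by rw [map_neg]; linear_combination -b4))
  · exact fin _ c1 (Q.hil α γ1 γ2 γ3 hαK h1 h2 a1 a2 b1 b2 b3 b4)

end TwoClass

namespace TwoClass

set_option linter.unusedSectionVars false

variable {K : Type*} [Field K] [NumberField K] {p q s : ℕ} {A B : K} {σ τ : K ≃ₐ[ℚ] K}
variable [Fact p.Prime] [Fact q.Prime] [Fact s.Prime]

/-- The norm of `γ` from a quadratic subfield is `± n`. -/
lemma QD.nu {d : ℕ} {D : K} {φ ψ : K ≃ₐ[ℚ] K} (Q : QD K d D φ ψ) (α γ : K) (n : ℕ)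
    (hN : α * φ α * ψ α * φ (ψ α) = (n : K) ^ 2) (ρ : ℤ) (hρ : ρ = 1 ∨ ρ = -1) (hγ : φ γ = γ)
    (h : α * φ α = ρ * γ ^ 2) : ∃ ν : ℤ, (ν = 1 ∨ ν = -1) ∧ γ * ψ γ = ν * n ∧
      ∃ u v : ℚ, ((ν * n : ℤ) : ℚ) = u ^ 2 - (d : ℤ) * v ^ 2 := by
  have hρρ : (ρ : K) ^ 2 = 1 := by rcases hρ with rfl | rfl <;> simp
  have h1 : ψ α * φ (ψ α) = ρ * (ψ γ) ^ 2 := by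
    have := congrArg ψ h
    rw [map_mul, map_mul, map_pow, ← Q.comm] at this
    simpa using this
  have h2 : (γ * ψ γ) ^ 2 = (n : K) ^ 2 := by
    linear_combination hN - ψ α * φ (ψ α) * h - ρ * γ ^ 2 * h1 - (γ * ψ γ) ^ 2 * hρρ
  have h3 : ∃ ν : ℤ, (ν = 1 ∨ ν = -1) ∧ γ * ψ γ = ν * n := by
    rcases sq_eq_sq_iff_eq_or_eq_neg.1 h2 with h | h
    · exact ⟨1, Or.inl rfl, by simpa using h⟩
    · exact ⟨-1, Or.inr rfl, by simpa using h⟩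
  obtain ⟨ν, hν, h4⟩ := h3
  obtain ⟨u, v, -, -, h5, -⟩ := Q.rep γ hγ
  refine ⟨ν, hν, h4, u, v, ?_⟩
  rw [h4] at h5
  have : (((ν * n : ℤ) : ℚ) : K) = ((u ^ 2 - (d : ℤ) * v ^ 2 : ℚ) : K) := by
    push_cast at h5 ⊢; exact h5
  exact_mod_cast this

lemma sign_eq (l : ℕ) [Fact l.Prime] (hl : legendreSym l (-1) = -1) (n : ℕ) (ν ν' : ℤ)
    (hν : ν = 1 ∨ ν = -1) (hν' : ν' = 1 ∨ ν' = -1) (h1 : legendreSym l (ν * n) = 1)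
    (h2 : legendreSym l (ν' * n) = 1) : ν = ν' := by
  rw [legendreSym.mul] at h1 h2
  rcases hν with rfl | rfl <;> rcases hν' with rfl | rfl
  · rfl
  · rw [hl] at h2; rw [legendreSym.at_one] at h1; omega
  · rw [hl] at h1; rw [legendreSym.at_one] at h2; omega
  · rfl

lemma dvd_sign (l n : ℕ) (ν : ℤ) (hν : ν = 1 ∨ ν = -1) (h : ¬ l ∣ n) : ¬ (l : ℤ) ∣ ν * n := by
  rcases hν with rfl | rfl
  · rw [one_mul]; exact_mod_cast h
  · rw [neg_one_mul, dvd_neg]; exact_mod_cast h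

lemma sq_ndvd (l M : ℕ) (hl : l.Prime) (h : ¬ l ∣ M) : ¬ (l : ℤ) ^ 2 ∣ ((l * M : ℕ) : ℤ) := by
  intro h1
  apply h
  have : l ^ 2 ∣ l * M := by exact_mod_cast h1
  rw [pow_two] at this
  exact (mul_dvd_mul_iff_left hl.ne_zero).1 this

lemma nd (l m : ℕ) (hl : l.Prime) (hm : m.Prime) (h : l ≠ m) : ¬ l ∣ m :=
  fun h' => h ((Nat.prime_dvd_prime_iff_eq hl hm).1 h')

lemma nd_mul {l a b : ℕ} (hl : l.Prime) (ha : ¬ l ∣ a) (hb : ¬ l ∣ b) : ¬ l ∣ a * b :=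
  fun h => (hl.dvd_mul.1 h).elim ha hb

/-- Residue symbols of norms. -/
lemma nt1' (l M : ℕ) [Fact l.Prime] (hM : ¬ l ∣ M) (d : ℕ) (hd : d = l * M) (N : ℤ)
    (hN : ¬ (l : ℤ) ∣ N) (u v : ℚ) (h : (N : ℚ) = u ^ 2 - (d : ℤ) * v ^ 2) :
    legendreSym l N = 1 := by
  refine nt1 l d N ?_ ?_ hN u v (by exact_mod_cast h)
  · rw [hd]; exact_mod_cast dvd_mul_right l M
  · rw [hd]; exact sq_ndvd l M Fact.out hM

lemma BQ.end3 (Q : BQ K p q s A B σ τ) (H : Hyp p q s) (a : Ideal (𝓞 K)) (α : 𝓞 K) (hα : α ≠ 0)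
    (ha : a ^ 2 = Ideal.span {α}) (n : ℕ) (hqn : ¬ q ∣ n) (hsn : ¬ s ∣ n)
    (hN : (α : K) * σ α * τ α * σ (τ α) = (n : K) ^ 2) (ρ1 ρ2 ρ3 : ℤ)
    (hρ1 : ρ1 = 1 ∨ ρ1 = -1) (hρ2 : ρ2 = 1 ∨ ρ2 = -1) (hρ3 : ρ3 = 1 ∨ ρ3 = -1)
    (γ1 γ2 γ3 : K) (h1 : σ γ1 = γ1) (h2 : τ γ2 = γ2) (h3 : σ (τ γ3) = γ3)
    (e1 : α * σ α = ρ1 * γ1 ^ 2) (e2 : α * τ α = ρ2 * γ2 ^ 2)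
    (e3 : α * σ (τ α) = ρ3 * γ3 ^ 2) : ∃ z : 𝓞 K, a = Ideal.span {z} := by
  have hαK : (α : K) ≠ 0 := fun h => hα (RingOfIntegers.ext (by simpa using h))
  have hp : p.Prime := Fact.out
  have hq : q.Prime := Fact.out
  have hs : s.Prime := Fact.out
  have hn0 : (n : K) ≠ 0 := by
    intro h; apply hqn; have : n = 0 := by exact_mod_cast h
    rw [this]; exact dvd_zero _
  have q2 := nd q 2 hq Nat.prime_two H.q2
  have s2 := nd s 2 hs Nat.prime_two H.s2
  have qp := nd q p hq hp H.pq.symm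
  have sp := nd s p hs hp H.ps.symm
  have qs := nd q s hq hs H.qs
  have sq := nd s q hs hq H.qs.symm
  obtain ⟨ν1, hν1, n1, u1, v1, w1⟩ := Q.k1.nu α γ1 n hN ρ1 hρ1 h1 e1
  obtain ⟨ν2, hν2, n2, u2, v2, w2⟩ := Q.k2.nu α γ2 n (by rw [← Q.comm, ← hN]; ring) ρ2 hρ2 h2 e2
  obtain ⟨ν3, hν3, n3, u3, v3, w3⟩ := Q.k3.nu α γ3 n (by
    simp only [AlgEquiv.mul_apply]
    rw [← Q.comm, Q.σσ, ← hN]; ring) ρ3 hρ3 (by simpa using h3) (by simpa using e3)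
  have e13 : ν1 = ν3 := by
    refine sign_eq q H.lqn n ν1 ν3 hν1 hν3 ?_ ?_
    · exact nt1' q (2 * p) (nd_mul hq q2 qp) _ (by ring) _ (dvd_sign q n _ hν1 hqn) u1 v1 w1
    · exact nt1' q (2 * s) (nd_mul hq q2 qs) _ (by ring) _ (dvd_sign q n _ hν3 hqn) u3 v3 w3
  have e23 : ν2 = ν3 := by
    refine sign_eq s H.lsn n ν2 ν3 hν2 hν3 ?_ ?_
    · exact nt1' s p sp _ (by ring) _ (dvd_sign s n _ hν2 hsn) u2 v2 w2
    · exact nt1' s (2 * q) (nd_mul hs s2 sq) _ (by ring) _ (dvd_sign s n _ hν3 hsn) u3 v3 w3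
  rw [e13] at n1
  rw [e23] at n2
  set ν := ν3
  have hνν : (ν : K) ^ 2 = 1 := by rcases hν3 with h | h <;> rw [h] <;> simp
  have hν0 : (ν : K) ≠ 0 := by intro h; rw [h] at hνν; simp at hνν
  have hνn : (ν : K) * n ≠ 0 := mul_ne_zero hν0 hn0
  have g1 : γ1 ≠ 0 := by rintro rfl; rw [zero_mul] at n1; exact hνn n1.symm
  have g2 : γ2 ≠ 0 := by rintro rfl; rw [zero_mul] at n2; exact hνn n2.symm
  have g3 : γ3 ≠ 0 := by rintro rfl; rw [zero_mul] at n3; exact hνn n3.symm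
  have hσ3 : σ γ3 ≠ 0 := by simpa using g3
  have hτ3 : τ γ3 = σ γ3 := by rw [← Q.σσ (τ γ3), h3]
  have hστ3 : τ (σ γ3) = γ3 := by rw [← Q.comm, h3]
  have r1 : (ρ1 : K) ^ 2 = 1 := by rcases hρ1 with h | h <;> rw [h] <;> simp
  have r2 : (ρ2 : K) ^ 2 = 1 := by rcases hρ2 with h | h <;> rw [h] <;> simp
  have r3 : (ρ3 : K) ^ 2 = 1 := by rcases hρ3 with h | h <;> rw [h] <;> simp
  have hσe3 : σ α * τ α = ρ3 * (σ γ3) ^ 2 := by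
    have := congrArg σ e3
    rw [map_mul, Q.σσ, map_mul, map_pow] at this
    simpa using this
  have hmul : (ρ1 : K) * ρ2 * (γ1 * γ2) ^ 2 = ρ3 * (α * σ γ3) ^ 2 := by
    linear_combination (-(α : K) * τ α) * e1 - ρ1 * γ1 ^ 2 * e2 + α ^ 2 * hσe3
  have hρ : ρ1 * ρ2 * ρ3 = 1 := by
    refine (Q.sq_one H (ρ1 * ρ2 * ρ3) ?_ 1 (Or.inl rfl) (α * σ γ3 / (γ1 * γ2)) ?_).1
    · rcases hρ1 with rfl | rfl <;> rcases hρ2 with rfl | rfl <;> rcases hρ3 with rfl | rfl <;> simp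
    · rw [div_pow, eq_div_iff (pow_ne_zero 2 (mul_ne_zero g1 g2))]
      push_cast
      linear_combination ρ3 * hmul + (α * σ γ3) ^ 2 * r3
  have hρK : (ρ1 : K) * ρ2 * ρ3 = 1 := by exact_mod_cast congrArg (Int.cast : ℤ → K) hρ
  have hsq : (γ1 * γ2) ^ 2 = (α * σ γ3) ^ 2 := by
    linear_combination ρ3 * hmul + (α * σ γ3) ^ 2 * r3 - (γ1 * γ2) ^ 2 * hρK
  have main : ∀ γ : K, τ γ = σ γ → τ (σ γ) = γ → γ * σ γ = ν * n → α * σ γ = γ1 * γ2 →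
      ∃ z : 𝓞 K, a = Ideal.span {z} := by
    intro γ k1 k2 k3 b1
    have s1 : σ α * γ = γ1 * σ γ2 := by
      have := congrArg σ b1
      rwa [map_mul, map_mul, Q.σσ, h1] at this
    have t1 : τ α * γ = τ γ1 * γ2 := by
      have := congrArg τ b1
      rwa [map_mul, map_mul, k2, h2] at this
    have a1 : α * σ α = γ1 ^ 2 := by
      apply mul_left_cancel₀ hνn
      linear_combination (-(α * σ α : K)) * k3 + σ α * γ * b1 + γ1 * γ2 * s1 + γ1 ^ 2 * n2
    have a2 : α * τ α = γ2 ^ 2 := by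
      apply mul_left_cancel₀ hνn
      linear_combination (-(α * τ α : K)) * k3 + τ α * γ * b1 + γ1 * γ2 * t1 + γ2 ^ 2 * n1
    refine Q.end2 H a α hα ha γ1 γ2 γ h1 h2 a1 a2 b1 ?_ ?_ (by rw [k1, b1])
    · apply mul_left_cancel₀ g1
      linear_combination γ * a1 - α * s1
    · apply mul_left_cancel₀ g2
      linear_combination γ * a2 - α * t1
  rcases sq_eq_sq_iff_eq_or_eq_neg.1 hsq with h | h
  · exact main γ3 hτ3 hστ3 n3 h.symm
  · exact main (-γ3) (by rw [map_neg, map_neg, hτ3]) (by rw [map_neg, map_neg, hστ3])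
      (by rw [map_neg, ← n3]; ring) (by rw [map_neg, h]; ring)

end TwoClass

namespace TwoClass

set_option linter.unusedSectionVars false

variable {K : Type*} [Field K] [NumberField K] {p q s : ℕ} {A B : K} {σ τ : K ≃ₐ[ℚ] K}
variable [Fact p.Prime] [Fact q.Prime] [Fact s.Prime]

/-- Multiplication by a suitable unit reduces to `end3`. -/
lemma BQ.end4 (Q : BQ K p q s A B σ τ) (H : Hyp p q s) (a : Ideal (𝓞 K)) (α : 𝓞 K) (hα : α ≠ 0)
    (ha : a ^ 2 = Ideal.span {α}) (n : ℕ) (hqn : ¬ q ∣ n) (hsn : ¬ s ∣ n)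
    (hN : (α : K) * σ α * τ α * σ (τ α) = (n : K) ^ 2) (ρ1 ρ2 ρ3 : ℤ)
    (hρ1 : ρ1 = 1 ∨ ρ1 = -1) (hρ2 : ρ2 = 1 ∨ ρ2 = -1) (hρ3 : ρ3 = 1 ∨ ρ3 = -1)
    (γ1 γ2 γ3 : K) (h1 : σ γ1 = γ1) (h2 : τ γ2 = γ2) (h3 : σ (τ γ3) = γ3) (M1 M2 M3 : ℕ)
    (e1 : α * σ α = ρ1 * M1 * γ1 ^ 2) (e2 : α * τ α = ρ2 * M2 * γ2 ^ 2)
    (e3 : α * σ (τ α) = ρ3 * M3 * γ3 ^ 2)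
    (X : ∃ (ξ : (𝓞 K)ˣ) (x g1 g2 g3 : K) (ε1 ε2 ε3 : ℤ), ((ξ : 𝓞 K) : K) = x ∧
      (ε1 = 1 ∨ ε1 = -1) ∧ (ε2 = 1 ∨ ε2 = -1) ∧ (ε3 = 1 ∨ ε3 = -1) ∧
      σ g1 = g1 ∧ τ g2 = g2 ∧ σ (τ g3) = g3 ∧ x * σ x * τ x * σ (τ x) = 1 ∧
      x * σ x * M1 = ε1 * g1 ^ 2 ∧ x * τ x * M2 = ε2 * g2 ^ 2 ∧
      x * σ (τ x) * M3 = ε3 * g3 ^ 2) : ∃ z : 𝓞 K, a = Ideal.span {z} := by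
  obtain ⟨ξ, x, g1, g2, g3, ε1, ε2, ε3, hx, i1, i2, i3, s1, s2, s3, hx1, f1, f2, f3⟩ := X
  have hc : ((ξ * α : 𝓞 K) : K) = x * α := by rw [← hx]; simp
  have sgn : ∀ a b : ℤ, (a = 1 ∨ a = -1) → (b = 1 ∨ b = -1) → (a * b = 1 ∨ a * b = -1) := by
    rintro a b (rfl | rfl) (rfl | rfl) <;> simp
  refine Q.end3 H a (ξ * α) (mul_ne_zero ξ.ne_zero hα) ?_ n hqn hsn ?_ (ρ1 * ε1) (ρ2 * ε2) (ρ3 * ε3)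
    (sgn _ _ hρ1 i1) (sgn _ _ hρ2 i2) (sgn _ _ hρ3 i3) (γ1 * g1) (γ2 * g2) (γ3 * g3)
    (by rw [map_mul, h1, s1]) (by rw [map_mul, h2, s2]) (by rw [map_mul, map_mul, h3, s3]) ?_ ?_ ?_
  · rw [ha, Ideal.span_singleton_mul_left_unit ξ.isUnit]
  · rw [hc]; simp only [map_mul]
    linear_combination (x * σ x * τ x * σ (τ x)) * hN + (n : K) ^ 2 * hx1
  · rw [hc]; push_cast; simp only [map_mul]
    linear_combination x * σ x * e1 + ρ1 * γ1 ^ 2 * f1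
  · rw [hc]; push_cast; simp only [map_mul]
    linear_combination x * τ x * e2 + ρ2 * γ2 ^ 2 * f2
  · rw [hc]; push_cast; simp only [map_mul]
    linear_combination x * σ (τ x) * e3 + ρ3 * γ3 ^ 2 * f3

lemma BQ.Cint (Q : BQ K p q s A B σ τ) : IsIntegral ℤ (A * B / p) := by
  refine IsIntegral.of_pow (n := 2) (by norm_num) ?_
  rw [Q.k3.hD]
  exact isIntegral_natCast (R := ℤ) (B := K) _

lemma unit_of_sq (x : K) (η : (𝓞 K)ˣ) (h : x ^ 2 = ((η : 𝓞 K) : K)) :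
    ∃ ξ : (𝓞 K)ˣ, ((ξ : 𝓞 K) : K) = x := by
  have hx : IsIntegral ℤ x := by
    refine IsIntegral.of_pow (n := 2) (by norm_num) ?_
    rw [h]; exact RingOfIntegers.isIntegral_coe _
  refine mk_unit x (x * ((η⁻¹ : (𝓞 K)ˣ) : 𝓞 K)) hx (hx.mul (RingOfIntegers.isIntegral_coe _)) ?_
  rw [← mul_assoc, ← pow_two, h]
  rw [← map_mul]; simp

lemma BQ.xi3 (Q : BQ K p q s A B σ τ) (H : Hyp p q s) (u v : ℕ) (h : q * s * u ^ 2 = 2 * v ^ 2 + 1) :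
    ∃ (ξ : (𝓞 K)ˣ) (x g1 g2 g3 : K) (ε1 ε2 ε3 : ℤ), ((ξ : 𝓞 K) : K) = x ∧
      (ε1 = 1 ∨ ε1 = -1) ∧ (ε2 = 1 ∨ ε2 = -1) ∧ (ε3 = 1 ∨ ε3 = -1) ∧
      σ g1 = g1 ∧ τ g2 = g2 ∧ σ (τ g3) = g3 ∧ x * σ x * τ x * σ (τ x) = 1 ∧
      x * σ x * (q : ℕ) = ε1 * g1 ^ 2 ∧ x * τ x * (s : ℕ) = ε2 * g2 ^ 2 ∧
      x * σ (τ x) * (q * s : ℕ) = ε3 * g3 ^ 2 := by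
  obtain ⟨F1, η1, a1, b1, c1⟩ := Q.F1 H
  obtain ⟨F2, η2, a2, b2, c2⟩ := Q.F2 H
  have hp : (p : K) ≠ 0 := by exact_mod_cast Q.p0
  have hq : (q : K) ≠ 0 := by exact_mod_cast Q.q0
  have hA := Q.A0
  have hK : (q : K) * s * u ^ 2 = 2 * v ^ 2 + 1 := by exact_mod_cast congrArg (Nat.cast : ℕ → K) h
  have hC := Q.k3.hD
  have hCφ := Q.k3.φD
  have hCσ := Q.k3.ψD
  have hCi := Q.Cint
  set C := A * B / p
  rw [AlgEquiv.mul_apply] at hCφ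
  push_cast at hC
  have hCτ : τ C = -C := by rw [← Q.σσ (τ C), hCφ, hCσ]
  have hi : ∀ z w : ℤ, IsIntegral ℤ ((z : K) + w * C) := fun z w =>
    (isIntegral_intCast (R := ℤ) (B := K) z).add
      ((isIntegral_intCast (R := ℤ) (B := K) w).mul hCi)
  obtain ⟨η3, hη⟩ := mk_unit (K := K) _ _ (hi (q * s * u ^ 2 + 2 * v ^ 2) (2 * u * v))
    (hi (q * s * u ^ 2 + 2 * v ^ 2) (-(2 * u * v))) (by
      push_cast
      linear_combination (q * s * (u : K) ^ 2 - 2 * v ^ 2 + 1) * hK - 4 * u ^ 2 * v ^ 2 * hC)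
  push_cast at hη
  obtain ⟨F3, hF3⟩ : ∃ F3 : K, F3 = u * C + 2 * v := ⟨_, rfl⟩
  have a3 : F3 ^ 2 = 2 * ((η3 : 𝓞 K) : K) := by
    rw [hη, hF3]; linear_combination u ^ 2 * hC
  have b3 : σ (τ F3) = F3 := by
    rw [hF3]; simp only [map_add, map_mul, map_natCast, map_ofNat, hCφ]
  have c3 : F3 * σ F3 = -2 := by
    rw [hF3]; simp only [map_add, map_mul, map_natCast, map_ofNat, hCσ]
    linear_combination -2 * hK - u ^ 2 * hC
  have d3 : τ F3 = σ F3 := by rw [← Q.σσ (τ F3), b3]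
  obtain ⟨x, hx⟩ : ∃ x : K, x = F1 * F2 * F3 / A := ⟨_, rfl⟩
  have hAA := Q.hA
  obtain ⟨ξ, hξ⟩ := unit_of_sq x (η1 * η2 * η3) (by
    rw [hx, div_pow, mul_pow, mul_pow, a1, a2, a3, Q.hA]
    rw [Units.val_mul, Units.val_mul]
    change _ = algebraMap (𝓞 K) K (_ * _ * _)
    rw [map_mul, map_mul]
    field_simp)
  have hσx : σ x = F1 * σ F2 * σ F3 / A := by rw [hx, map_div₀, map_mul, map_mul, b1, Q.σA]
  have hτx : τ x = -(τ F1 * F2 * σ F3 / A) := by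
    rw [hx, map_div₀, map_mul, map_mul, b2, d3, Q.τA, div_neg]
  have hστF1 : σ (τ F1) = τ F1 := by rw [Q.comm, b1]
  have hστx : σ (τ x) = -(τ F1 * σ F2 * F3 / A) := by
    rw [hτx, map_neg, map_div₀, map_mul, map_mul, Q.σσ, Q.σA, hστF1]
  have n1 : x * σ x * q = -F1 ^ 2 := by
    rw [hσx, hx]; field_simp; rw [hAA]
    linear_combination F1 ^ 2 * q * (F3 * σ F3 * c2 + p * c3)
  have n2 : x * τ x * s = (F2 * B / p) ^ 2 := by
    rw [hτx, hx]; rw [div_pow, mul_pow F2 B, Q.hB]; field_simp; rw [hAA]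
    linear_combination (-F2 ^ 2 * p * s) * (F3 * σ F3 * c1 + q * c3)
  have n3 : x * σ (τ x) * (q * s) = -(F3 * C / 2) ^ 2 := by
    rw [hστx, hx]; rw [div_pow, mul_pow F3 C, hC]; field_simp; rw [hAA]
    linear_combination -2 * s * F3 ^ 2 * (F2 * σ F2 * c1 + q * c2)
  refine ⟨ξ, x, F1, F2 * B / p, F3 * C / 2, -1, 1, -1, hξ, Or.inr rfl, Or.inl rfl, Or.inr rfl, b1,
    ?_, ?_, ?_, ?_, ?_, ?_⟩
  · rw [map_div₀, map_mul, b2, Q.τB, map_natCast]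
  · rw [map_div₀, map_mul, map_div₀, map_mul, b3, hCφ, map_ofNat, map_ofNat]
  · rw [hστx, hτx, hσx, hx]
    field_simp
    rw [show A ^ 4 = (A ^ 2) ^ 2 by ring, hAA]
    linear_combination (F2 * σ F2) ^ 2 * (F3 * σ F3) ^ 2 * (F1 * τ F1 + q) * c1 + q ^ 2 * (F3 * σ F3) ^ 2 * (F2 * σ F2 + p) * c2 + q ^ 2 * p ^ 2 * (F3 * σ F3 - 2) * c3
  · push_cast; rw [n1]; ring
  · push_cast; rw [n2]; ring
  · push_cast; rw [n3]; ring

lemma BQ.xi7 (Q : BQ K p q s A B σ τ) (H : Hyp p q s) (u v : ℕ) (e : ℤ) (he : e = 1 ∨ e = -1)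
    (h : (s * u ^ 2 : ℤ) = 2 * q * v ^ 2 + e) :
    ∃ (ξ : (𝓞 K)ˣ) (x g1 g2 g3 : K) (ε1 ε2 ε3 : ℤ), ((ξ : 𝓞 K) : K) = x ∧
      (ε1 = 1 ∨ ε1 = -1) ∧ (ε2 = 1 ∨ ε2 = -1) ∧ (ε3 = 1 ∨ ε3 = -1) ∧
      σ g1 = g1 ∧ τ g2 = g2 ∧ σ (τ g3) = g3 ∧ x * σ x * τ x * σ (τ x) = 1 ∧
      x * σ x * (1 : ℕ) = ε1 * g1 ^ 2 ∧ x * τ x * (s : ℕ) = ε2 * g2 ^ 2 ∧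
      x * σ (τ x) * (s : ℕ) = ε3 * g3 ^ 2 := by
  obtain ⟨F2, η2, a2, b2, c2⟩ := Q.F2 H
  have hp : (p : K) ≠ 0 := by exact_mod_cast Q.p0
  have hs : (s : K) ≠ 0 := by exact_mod_cast Q.s0
  have hB := Q.B0
  have hK : (s : K) * u ^ 2 = 2 * q * v ^ 2 + e := by exact_mod_cast congrArg (Int.cast : ℤ → K) h
  have hee : (e : K) ^ 2 = 1 := by rcases he with rfl | rfl <;> simp
  have hC := Q.k3.hD
  have hCφ := Q.k3.φD
  have hCσ := Q.k3.ψD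
  have hCi := Q.Cint
  set C := A * B / p
  rw [AlgEquiv.mul_apply] at hCφ
  push_cast at hC
  have hCτ : τ C = -C := by rw [← Q.σσ (τ C), hCφ, hCσ]
  have hi : ∀ z w : ℤ, IsIntegral ℤ ((z : K) + w * C) := fun z w =>
    (isIntegral_intCast (R := ℤ) (B := K) z).add
      ((isIntegral_intCast (R := ℤ) (B := K) w).mul hCi)
  obtain ⟨η3, hη⟩ := mk_unit (K := K) _ _ (hi (s * u ^ 2 + 2 * q * v ^ 2) (2 * u * v))
    (hi (s * u ^ 2 + 2 * q * v ^ 2) (-(2 * u * v))) (by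
      push_cast
      linear_combination (s * (u : K) ^ 2 - 2 * q * v ^ 2 + e) * hK - 4 * u ^ 2 * v ^ 2 * hC + hee)
  push_cast at hη
  obtain ⟨F3, hF3⟩ : ∃ F3 : K, F3 = s * u + v * C := ⟨_, rfl⟩
  have a3 : F3 ^ 2 = s * ((η3 : 𝓞 K) : K) := by
    rw [hη, hF3]; linear_combination v ^ 2 * hC
  have b3 : σ (τ F3) = F3 := by
    rw [hF3]; simp only [map_add, map_mul, map_natCast, hCφ]
  have c3 : F3 * σ F3 = s * e := by
    rw [hF3]; simp only [map_add, map_mul, map_natCast, hCσ]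
    linear_combination s * hK - v ^ 2 * hC
  have d3 : τ F3 = σ F3 := by rw [← Q.σσ (τ F3), b3]
  obtain ⟨x, hx⟩ : ∃ x : K, x = F2 * F3 / B := ⟨_, rfl⟩
  have hBB := Q.hB
  obtain ⟨ξ, hξ⟩ := unit_of_sq x (η2 * η3) (by
    rw [hx, div_pow, mul_pow, a2, a3, Q.hB]
    rw [Units.val_mul]
    change _ = algebraMap (𝓞 K) K (_ * _)
    rw [map_mul]
    field_simp)
  have hσx : σ x = -(σ F2 * σ F3 / B) := by rw [hx, map_div₀, map_mul, Q.σB, div_neg]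
  have hτx : τ x = F2 * σ F3 / B := by
    rw [hx, map_div₀, map_mul, b2, d3, Q.τB]
  have hστx : σ (τ x) = -(σ F2 * F3 / B) := by
    rw [hτx, map_div₀, map_mul, Q.σσ, Q.σB, div_neg]
  have n1 : x * σ x = -e := by
    rw [hσx, hx]; field_simp; rw [hBB]
    linear_combination -(F3 * σ F3 * c2 + p * c3)
  have n2 : x * τ x * s = e * (F2 * B / p) ^ 2 := by
    rw [hτx, hx]; rw [div_pow, mul_pow F2 B, hBB]; field_simp; rw [hBB]
    linear_combination F2 ^ 2 * p * c3
  have n3 : x * σ (τ x) * s = -F3 ^ 2 := by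
    rw [hστx, hx]; field_simp; rw [hBB]
    linear_combination -s * F3 ^ 2 * c2
  refine ⟨ξ, x, 1, F2 * B / p, F3, -e, e, -1, hξ, ?_, he, Or.inr rfl, map_one _,
    ?_, b3, ?_, ?_, ?_, ?_⟩
  · rcases he with rfl | rfl <;> simp
  · rw [map_div₀, map_mul, b2, Q.τB, map_natCast]
  · have t1 : τ x * σ (τ x) = -e := by
      have := congrArg τ n1
      rw [map_mul, ← Q.comm] at this
      simpa using this
    linear_combination τ x * σ (τ x) * n1 - e * t1 + hee
  · push_cast; rw [n1]; ring
  · rw [n2]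
  · push_cast; rw [n3]; ring

end TwoClass

namespace TwoClass

set_option linter.unusedSectionVars false

variable {K : Type*} [Field K] [NumberField K] {p q s : ℕ} {A B : K} {σ τ : K ≃ₐ[ℚ] K}
variable [Fact p.Prime] [Fact q.Prime] [Fact s.Prime]

lemma dvd_of_sqf (m N : ℕ) (hm : Squarefree m) (h : ∀ l : ℕ, l.Prime → l ∣ m → l ∣ N) : m ∣ N := by
  rw [← Nat.prod_primeFactors_of_squarefree hm]
  refine Finset.prod_primes_dvd N ?_ ?_
  · intro l hl; exact (Nat.prime_of_mem_primeFactors hl).prime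
  · intro l hl
    exact h l (Nat.prime_of_mem_primeFactors hl) (Nat.dvd_of_mem_primeFactors hl)

/-- The data attached to `α` and a quadratic subfield. -/
def Data (d : ℕ) (φ : K ≃ₐ[ℚ] K) (α : K) (n m : ℕ) : Prop :=
  ∃ (e : ℤ) (γ : K) (u v : ℚ) (e' : ℤ), (e = 1 ∨ e = -1) ∧ φ γ = γ ∧
      α * φ α = e * m * γ ^ 2 ∧ (e' = 1 ∨ e' = -1) ∧
      ((e' * n * m : ℤ) : ℚ) = u ^ 2 - (d : ℤ) * v ^ 2

lemma BQ.pre (Q' : BQ K p q s A B σ τ) {d : ℕ} {D : K} {φ ψ : K ≃ₐ[ℚ] K} (Q : QD K d D φ ψ)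
    (a : Ideal (𝓞 K)) (α : 𝓞 K) (hα : α ≠ 0)
    (ha : a ^ 2 = Ideal.span {α}) (n : ℕ) (hn : n ≠ 0)
    (hN : (α : K) * φ α * ψ α * φ (ψ α) = (n : K) ^ 2) :
    ∃ m : ℕ, Squarefree m ∧ Data d φ (α : K) n m ∧ (∀ l : ℕ, l.Prime → l ∣ m → l ∣ 2 * p * q * s) ∧
      (∀ l : ℕ, l.Prime → l ≠ 2 → ¬ l ∣ d → ¬ l ∣ n → ¬ l ∣ m) := by
  obtain ⟨m, e, γ, hm, he, hγ, h, ⟨u, v, e', he', h'⟩, hl⟩ :=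
    Q.core (α : K) α.isIntegral_coe n hn hN
  refine ⟨m, hm, ⟨e, γ, u, v, e', he, hγ, h, he', h'⟩, ?_, hl⟩
  have hφα : act φ α ≠ 0 := by
    intro h0
    have : φ (α : K) = 0 := by rw [← act_coe, h0]; simp
    rw [map_eq_zero] at this
    exact hα (RingOfIntegers.ext (by simpa using this))
  refine Q'.U m hm (a * Ideal.map (act φ) a) (α * act φ α) (mul_ne_zero hα hφα) ?_ e he γ ?_
  · rw [mul_pow, ← Ideal.map_pow, ha, Ideal.map_span, Set.image_singleton,
      Ideal.span_singleton_mul_span_singleton]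
  · rw [← h, ← act_coe]; simp

lemma QD.flip {d : ℕ} {D : K} {φ ψ : K ≃ₐ[ℚ] K} (Q : QD K d D φ ψ) (α : K) (n m m' t : ℕ)
    (h : m * m' = d * t ^ 2) (hm : m ≠ 0) (ht : t ≠ 0) (hd : Data d φ α n m) : Data d φ α n m' := by
  obtain ⟨e, γ, u, v, e', he, hγ, h1, he', h2⟩ := hd
  have hD := Q.D0
  have htK : (t : K) ≠ 0 := by exact_mod_cast ht
  have hmK : (m : K) ≠ 0 := by exact_mod_cast hm
  have hmQ : (m : ℚ) ≠ 0 := by exact_mod_cast hm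
  have hK : (m : K) * m' = d * t ^ 2 := by exact_mod_cast congrArg (Nat.cast : ℕ → K) h
  have hQ : (m : ℚ) * m' = d * t ^ 2 := by exact_mod_cast congrArg (Nat.cast : ℕ → ℚ) h
  refine ⟨e, m * γ / (t * D), t * d * v / m, t * u / m, -e', he, ?_, ?_, ?_, ?_⟩
  · rw [map_div₀, map_mul, map_mul, hγ, Q.φD, map_natCast, map_natCast]
  · rw [h1, div_pow, mul_pow, mul_pow, Q.hD]
    have : (d : K) ≠ 0 := by exact_mod_cast Q.d0
    field_simp
    linear_combination (-(e : K) * γ ^ 2) * hK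
  · rcases he' with rfl | rfl <;> simp
  · push_cast at h2 ⊢
    field_simp
    linear_combination (-(d : ℚ) * t ^ 2) * h2 - e' * n * m * hQ

lemma leg_sgn (H : Hyp p q s) (e : ℤ) (he : e = 1 ∨ e = -1) : legendreSym p e = 1 := by
  rcases he with rfl | rfl
  · exact legendreSym.at_one _
  · exact H.lpn

lemma BQ.n1 (Q : BQ K p q s A B σ τ) (H : Hyp p q s) (a : Ideal (𝓞 K)) (α : 𝓞 K) (hα : α ≠ 0)
    (ha : a ^ 2 = Ideal.span {α}) (n : ℕ) (hpn : ¬ p ∣ n) (hsn : ¬ s ∣ n) (hlp : legendreSym p n = 1)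
    (hN : (α : K) * σ α * τ α * σ (τ α) = (n : K) ^ 2) :
    ∃ m, (m = 1 ∨ m = q) ∧ Data (2 * p * q) σ (α : K) n m := by
  have hp : p.Prime := Fact.out
  have hq : q.Prime := Fact.out
  have hs : s.Prime := Fact.out
  have hn0 : n ≠ 0 := by rintro rfl; exact hpn (dvd_zero _)
  have s2 := nd s 2 hs Nat.prime_two H.s2
  have p2 := nd p 2 hp Nat.prime_two H.p2
  have pq := nd p q hp hq H.pq
  have sp := nd s p hs hp H.ps.symm
  have sq := nd s q hs hq H.qs.symm
  obtain ⟨m, hm, D, h1, h2⟩ := Q.pre Q.k1 a α hα ha n hn0 hN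
  have hsm := h2 s hs H.s2 (nd_mul hs (nd_mul hs s2 sp) sq) hsn
  have hmd : m ∣ 2 * p * q := by
    refine dvd_of_sqf m _ hm fun l hl hlm => ?_
    refine (hl.dvd_mul.1 (h1 l hl hlm)).resolve_right fun h => hsm ?_
    rwa [← (Nat.prime_dvd_prime_iff_eq hl hs).1 h]
  have key : ∀ m, Data (2 * p * q) σ (α : K) n m → ¬ p ∣ m → legendreSym p m = 1 := by
    rintro m ⟨e, γ, u, v, e', he, hγ, h1, he', h2⟩ hpm
    have := nt1' p (2 * q) (nd_mul hp p2 pq) (2 * p * q) (by ring) (e' * n * m) (by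
      rw [mul_assoc]; have := dvd_sign p (n * m) e' he' (nd_mul hp hpn hpm); exact_mod_cast this) u v h2
    rwa [legendreSym.mul, legendreSym.mul, hlp, leg_sgn H e' he', one_mul, one_mul] at this
  have l2 : legendreSym p (2 : ℕ) = -1 := by exact_mod_cast H.lp2
  have l2q : legendreSym p (2 * q : ℕ) = -1 := by
    push_cast; rw [legendreSym.mul, H.lp2, H.lpq]; rfl
  have k1 : Data (2 * p * q) σ (α : K) n 2 → False := fun h => by
    have := key 2 h p2; omega
  have k2 : Data (2 * p * q) σ (α : K) n (2 * q) → False := fun h => by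
    have := key _ h (nd_mul hp p2 pq); omega
  have fl := fun m m' h hm D => Q.k1.flip α n m m' 1 h hm one_ne_zero D
  have hp0 := hp.ne_zero
  have hq0 := hq.ne_zero
  rcases dvd_three m p q hmd with rfl | rfl | rfl | rfl | rfl | rfl | rfl | rfl
  · exact ⟨1, Or.inl rfl, D⟩
  · exact (k1 D).elim
  · exact (k2 (fl _ (2 * q) (by ring) (by positivity) D)).elim
  · exact ⟨_, Or.inr rfl, D⟩
  · exact ⟨q, Or.inr rfl, fl _ q (by ring) (by positivity) D⟩
  · exact (k2 D).elim
  · exact (k1 (fl _ 2 (by ring) (by positivity) D)).elim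
  · exact ⟨1, Or.inl rfl, fl _ 1 (by ring) (by positivity) D⟩

lemma BQ.n2 (Q : BQ K p q s A B σ τ) (H : Hyp p q s) (a : Ideal (𝓞 K)) (α : 𝓞 K) (hα : α ≠ 0)
    (ha : a ^ 2 = Ideal.span {α}) (n : ℕ) (hpn : ¬ p ∣ n) (hqn : ¬ q ∣ n) (hlp : legendreSym p n = 1)
    (hN : (α : K) * σ α * τ α * σ (τ α) = (n : K) ^ 2) :
    ∃ m, (m = 1 ∨ m = s) ∧ Data (p * s) τ (α : K) n m := by
  have hp : p.Prime := Fact.out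
  have hq : q.Prime := Fact.out
  have hs : s.Prime := Fact.out
  have hn0 : n ≠ 0 := by rintro rfl; exact hpn (dvd_zero _)
  have p2 := nd p 2 hp Nat.prime_two H.p2
  have ps := nd p s hp hs H.ps
  have qp := nd q p hq hp H.pq.symm
  have qs := nd q s hq hs H.qs
  obtain ⟨m, hm, D, h1, h2⟩ := Q.pre Q.k2 a α hα ha n hn0 (by rw [← hN, Q.comm]; ring)
  have hqm := h2 q hq H.q2 (nd_mul hq qp qs) hqn
  have hmd : m ∣ 2 * p * s := by
    refine dvd_of_sqf m _ hm fun l hl hlm => ?_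
    have h3 := h1 l hl hlm
    rw [show 2 * p * q * s = 2 * p * s * q by ring] at h3
    refine (hl.dvd_mul.1 h3).resolve_right fun h => hqm ?_
    rwa [← (Nat.prime_dvd_prime_iff_eq hl hq).1 h]
  have key : ∀ m, Data (p * s) τ (α : K) n m → ¬ p ∣ m → legendreSym p m = 1 := by
    rintro m ⟨e, γ, u, v, e', he, hγ, h1, he', h2⟩ hpm
    have := nt1' p s ps (p * s) (by ring) (e' * n * m) (by
      rw [mul_assoc]; have := dvd_sign p (n * m) e' he' (nd_mul hp hpn hpm); exact_mod_cast this) u v h2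
    rwa [legendreSym.mul, legendreSym.mul, hlp, leg_sgn H e' he', one_mul, one_mul] at this
  have l2 : legendreSym p (2 : ℕ) = -1 := by exact_mod_cast H.lp2
  have l2q : legendreSym p (2 * s : ℕ) = -1 := by
    push_cast; rw [legendreSym.mul, H.lp2, H.lps]; rfl
  have k1 : Data (p * s) τ (α : K) n 2 → False := fun h => by
    have := key 2 h p2; omega
  have k2 : Data (p * s) τ (α : K) n (2 * s) → False := fun h => by
    have := key _ h (nd_mul hp p2 ps); omega
  have fl := fun m m' t h hm ht D => Q.k2.flip α n m m' t h hm ht D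
  have hp0 := hp.ne_zero
  have hs0 := hs.ne_zero
  rcases dvd_three m p s hmd with rfl | rfl | rfl | rfl | rfl | rfl | rfl | rfl
  · exact ⟨1, Or.inl rfl, D⟩
  · exact (k1 D).elim
  · exact ⟨s, Or.inr rfl, fl _ s 1 (by ring) (by positivity) (by positivity) D⟩
  · exact ⟨_, Or.inr rfl, D⟩
  · exact (k2 (fl _ (2 * s) 2 (by ring) (by positivity) (by positivity) D)).elim
  · exact (k2 D).elim
  · exact ⟨1, Or.inl rfl, fl _ 1 1 (by ring) (by positivity) (by positivity) D⟩
  · exact (k1 (fl _ 2 2 (by ring) (by positivity) (by positivity) D)).elim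

lemma BQ.n3 (Q : BQ K p q s A B σ τ) (H : Hyp p q s) (a : Ideal (𝓞 K)) (α : 𝓞 K) (hα : α ≠ 0)
    (ha : a ^ 2 = Ideal.span {α}) (n : ℕ) (hpn : ¬ p ∣ n) (hn8 : n % 8 = 1 ∨ n % 8 = 7)
    (hN : (α : K) * σ α * τ α * σ (τ α) = (n : K) ^ 2) :
    ∃ m, (m = 1 ∨ (s % 8 = 3 ∧ m = q * s) ∨ (s % 8 = 7 ∧ m = s)) ∧
      Data (2 * q * s) (σ * τ) (α : K) n m := by
  have hp : p.Prime := Fact.out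
  have hq : q.Prime := Fact.out
  have hs : s.Prime := Fact.out
  have hn0 : n ≠ 0 := by rintro rfl; exact hpn (dvd_zero _)
  have p2 := nd p 2 hp Nat.prime_two H.p2
  have ps := nd p s hp hs H.ps
  have pq := nd p q hp hq H.pq
  obtain ⟨m, hm, D, h1, h2⟩ := Q.pre Q.k3 a α hα ha n hn0 (by
    simp only [AlgEquiv.mul_apply]
    rw [← Q.comm, Q.σσ, ← hN]; ring)
  have hpm := h2 p hp H.p2 (nd_mul hp (nd_mul hp p2 pq) ps) hpn
  have hmd : m ∣ 2 * q * s := by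
    refine dvd_of_sqf m _ hm fun l hl hlm => ?_
    have h3 := h1 l hl hlm
    rw [show 2 * p * q * s = 2 * q * s * p by ring] at h3
    refine (hl.dvd_mul.1 h3).resolve_right fun h => hpm ?_
    rwa [← (Nat.prime_dvd_prime_iff_eq hl hp).1 h]
  have h8q := H.q8
  have h4s := H.s4
  have s8 : s % 8 = 3 ∨ s % 8 = 7 := by omega
  have hd8 : (2 * q * s) % 8 = 2 := by
    rcases s8 with h | h <;> simp [Nat.mul_mod, h8q, h]
  have key : ∀ m, Data (2 * q * s) (σ * τ) (α : K) n m → m % 2 = 1 → m % 8 = 1 ∨ m % 8 = 7 := by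
    rintro m ⟨e, γ, u, v, e', he, hγ, h1, he', h2⟩ hm2
    have hnm2 : (n * m) % 2 = 1 := by
      have : n % 2 = 1 := by omega
      simp [Nat.mul_mod, this, hm2]
    have hh := nt2 ((2 * q * s : ℕ) : ℤ) (e' * n * m) (by omega) (by
      rw [mul_assoc]
      have : ((n * m : ℕ) : ℤ) % 2 = 1 := by omega
      push_cast at this
      rcases he' with rfl | rfl <;> omega) u v (by exact_mod_cast h2)
    have h3 : (n * m) % 8 = 1 ∨ (n * m) % 8 = 7 := by
      rw [mul_assoc] at hh
      have h4 : ((n * m : ℕ) : ℤ) = (n : ℤ) * m := by push_cast; rfl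
      rw [← h4] at hh
      rcases he' with rfl | rfl <;> omega
    have hm8 : m % 8 = 1 ∨ m % 8 = 3 ∨ m % 8 = 5 ∨ m % 8 = 7 := by omega
    rcases hn8 with h | h <;> rcases hm8 with h' | h' | h' | h' <;>
      simp [Nat.mul_mod, h, h'] at h3 ⊢
  have hqs8 : s % 8 = 3 → (q * s) % 8 = 1 := fun h => by simp [Nat.mul_mod, h8q, h]
  have hqs8' : s % 8 = 7 → (q * s) % 8 = 5 := fun h => by simp [Nat.mul_mod, h8q, h]
  have k1 : Data (2 * q * s) (σ * τ) (α : K) n q → False := fun h => by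
    have := key q h (by omega); omega
  have k2 : Data (2 * q * s) (σ * τ) (α : K) n s → ∃ m, (m = 1 ∨ (s % 8 = 3 ∧ m = q * s) ∨
      (s % 8 = 7 ∧ m = s)) ∧ Data (2 * q * s) (σ * τ) (α : K) n m := fun h =>
    ⟨s, Or.inr (Or.inr ⟨by have := key s h (by omega); omega, rfl⟩), h⟩
  have k3 : Data (2 * q * s) (σ * τ) (α : K) n (q * s) → ∃ m, (m = 1 ∨ (s % 8 = 3 ∧ m = q * s) ∨
      (s % 8 = 7 ∧ m = s)) ∧ Data (2 * q * s) (σ * τ) (α : K) n m := fun h =>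
    ⟨q * s, Or.inr (Or.inl ⟨by have := key (q * s) h (by omega); omega, rfl⟩), h⟩
  have fl := fun m m' h hm D => Q.k3.flip α n m m' 1 h hm one_ne_zero D
  have hq0 := hq.ne_zero
  have hs0 := hs.ne_zero
  rcases dvd_three m q s hmd with rfl | rfl | rfl | rfl | rfl | rfl | rfl | rfl
  · exact ⟨1, Or.inl rfl, D⟩
  · exact k3 (fl _ (q * s) (by ring) (by positivity) D)
  · exact (k1 D).elim
  · exact k2 D
  · exact k2 (fl _ s (by ring) (by positivity) D)
  · exact (k1 (fl _ q (by ring) (by positivity) D)).elim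
  · exact k3 D
  · exact ⟨1, Or.inl rfl, fl _ 1 (by ring) (by positivity) D⟩

/-- Main theorem on ideals whose square is principal, first form. -/
lemma BQ.main0 (Q : BQ K p q s A B σ τ) (H : Hyp p q s) (a : Ideal (𝓞 K)) (α : 𝓞 K) (hα : α ≠ 0)
    (ha : a ^ 2 = Ideal.span {α}) (n : ℕ) (hpn : ¬ p ∣ n) (hqn : ¬ q ∣ n) (hsn : ¬ s ∣ n)
    (hlp : legendreSym p n = 1) (hn8 : n % 8 = 1 ∨ n % 8 = 7)
    (hN : (α : K) * σ α * τ α * σ (τ α) = (n : K) ^ 2) : ∃ z : 𝓞 K, a = Ideal.span {z} := by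
  have hαK : (α : K) ≠ 0 := fun h => hα (RingOfIntegers.ext (by simpa using h))
  have hq0 : (q : K) ≠ 0 := by exact_mod_cast Q.q0
  have hs0 : (s : K) ≠ 0 := by exact_mod_cast Q.s0
  obtain ⟨m1, hm1, e1, γ1, -, -, -, he1, f1, g1, -⟩ := Q.n1 H a α hα ha n hpn hsn hlp hN
  obtain ⟨m2, hm2, e2, γ2, -, -, -, he2, f2, g2, -⟩ := Q.n2 H a α hα ha n hpn hqn hlp hN
  obtain ⟨m3, hm3, e3, γ3, -, -, -, he3, f3, g3, -⟩ := Q.n3 H a α hα ha n hpn hn8 hN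
  rw [AlgEquiv.mul_apply] at f3 g3
  have hσα : σ (α : K) ≠ 0 := by simpa using hαK
  have hτα : τ (α : K) ≠ 0 := by simpa using hαK
  have γ10 : γ1 ≠ 0 := by
    rintro rfl
    exact mul_ne_zero hαK hσα (by rw [g1]; ring)
  have γ20 : γ2 ≠ 0 := by
    rintro rfl
    exact mul_ne_zero hαK hτα (by rw [g2]; ring)
  have r3 : (e3 : K) ^ 2 = 1 := by rcases he3 with h | h <;> rw [h] <;> simp
  have hσe3 : σ α * τ α = e3 * m3 * (σ γ3) ^ 2 := by
    have := congrArg σ g3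
    rw [map_mul, Q.σσ, map_mul, map_mul, map_pow] at this
    simpa using this
  have hmul : (e1 : K) * m1 * (e2 * m2) * (γ1 * γ2) ^ 2 = e3 * m3 * (α * σ γ3) ^ 2 := by
    linear_combination (-(α : K) * τ α) * g1 - e1 * m1 * γ1 ^ 2 * g2 + α ^ 2 * hσe3
  set e := e1 * e2 * e3 with he
  have hes : e = 1 ∨ e = -1 := by
    rw [he]
    rcases he1 with rfl | rfl <;> rcases he2 with rfl | rfl <;> rcases he3 with rfl | rfl <;> simp
  have hsq : (e : K) * (m1 * m2 * m3) = (m3 * (α * σ γ3) / (γ1 * γ2)) ^ 2 := by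
    rw [div_pow, eq_div_iff (pow_ne_zero 2 (mul_ne_zero γ10 γ20)), he]
    push_cast
    linear_combination e3 * m3 * hmul + m3 ^ 2 * (α * σ γ3) ^ 2 * r3
  obtain ⟨z, hz⟩ : ∃ z, z = m3 * (α * σ γ3) / (γ1 * γ2) := ⟨_, rfl⟩
  rw [← hz] at hsq
  have hq1 : q ≠ 1 := (Fact.out : q.Prime).one_lt.ne'
  have hs1 : s ≠ 1 := (Fact.out : s.Prime).one_lt.ne'
  have no : ∀ (M : ℕ) (w : K), (M = q ∨ M = s ∨ M = q * s) → (e : K) * M = w ^ 2 → False := by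
    intro M w hM h
    have := (Q.sq_one H e hes M (Or.inr hM) w h).2
    rcases hM with h' | h' | h'
    · exact hq1 (h' ▸ this)
    · exact hs1 (h' ▸ this)
    · rw [h'] at this; exact hq1 (Nat.eq_one_of_mul_eq_one_right this)
  have fin := Q.end4 H a α hα ha n hqn hsn hN e1 e2 e3 he1 he2 he3 γ1 γ2 γ3 f1 f2 f3 m1 m2 m3
    g1 g2 g3
  have triv : m1 = 1 → m2 = 1 → m3 = 1 → ∃ z : 𝓞 K, a = Ideal.span {z} := by
    intro h1 h2 h3
    refine fin ⟨1, 1, 1, 1, 1, 1, 1, 1, ?_⟩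
    rw [h1, h2, h3]
    simp
  rcases hm3 with h3 | ⟨s8, h3⟩ | ⟨s8, h3⟩ <;> rcases hm2 with h2 | h2 <;>
    rcases hm1 with h1 | h1 <;> rw [h1, h2, h3] at hsq
  · exact triv h1 h2 h3
  · exact (no q z (by simp) (by rw [← hsq]; push_cast; ring)).elim
  · exact (no s z (by simp) (by rw [← hsq]; push_cast; ring)).elim
  · exact (no (q * s) z (by simp) (by rw [← hsq]; push_cast; ring)).elim
  · exact (no (q * s) z (by simp) (by rw [← hsq]; push_cast; ring)).elim
  · exact (no s (z / q) (by simp) (by rw [div_pow, ← hsq]; push_cast; field_simp)).elim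
  · exact (no q (z / s) (by simp) (by rw [div_pow, ← hsq]; push_cast; field_simp)).elim
  · rcases H.eq3 with ⟨-, u, v, h⟩ | ⟨h, -⟩
    · rw [h1, h2, h3] at fin
      exact fin (Q.xi3 H u v h)
    · omega
  · exact (no s z (by simp) (by rw [← hsq]; push_cast; ring)).elim
  · exact (no (q * s) z (by simp) (by rw [← hsq]; push_cast; ring)).elim
  · rcases H.eq3 with ⟨h, -⟩ | ⟨-, u, v, e, he, h⟩
    · omega
    · rw [h1, h2, h3] at fin
      exact fin (Q.xi7 H u v e he h)
  · exact (no q (z / s) (by simp) (by rw [div_pow, ← hsq]; push_cast; field_simp)).elim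

end TwoClass

namespace TwoClass

set_option linter.unusedSectionVars false
variable {K : Type*} [Field K] [NumberField K] {p q s : ℕ} {A B : K} {σ τ : K ≃ₐ[ℚ] K}
variable [Fact p.Prime] [Fact q.Prime] [Fact s.Prime]

lemma BQ.normZ (Q : BQ K p q s A B σ τ) (x : 𝓞 K) :
    ((Algebra.norm ℤ x : ℤ) : K) = (x : K) * σ x * τ x * σ (τ x) := by
  rw [← Q.norm, ← Algebra.coe_norm_int]
  push_cast
  rfl

lemma QD.form {d : ℕ} {D : K} {φ ψ : K ≃ₐ[ℚ] K} (Q : QD K d D φ ψ) (x : K) (N : ℤ)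
    (h : (N : K) = x * φ x * ψ x * φ (ψ x)) : ∃ u v : ℚ, (N : ℚ) = u ^ 2 - (d : ℤ) * v ^ 2 := by
  obtain ⟨u, v, -, -, h1, -⟩ := Q.rep (x * φ x) (by rw [map_mul, Q.φφ, mul_comm])
  refine ⟨u, v, ?_⟩
  have : ((N : ℚ) : K) = ((u ^ 2 - d * v ^ 2 : ℚ) : K) := by
    rw [← h1, map_mul, ← Q.comm]
    rw [Rat.cast_intCast, h]
    ring
  have h2 := Rat.cast_injective this
  rw [h2]
  push_cast
  ring

lemma absNorm_cases (x : 𝓞 K) : ∃ e : ℤ, (e = 1 ∨ e = -1) ∧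
    Algebra.norm ℤ x = e * (Ideal.absNorm (Ideal.span {x}) : ℕ) := by
  rw [Ideal.absNorm_span_singleton]
  rcases Int.natAbs_eq (Algebra.norm ℤ x) with h | h
  · exact ⟨1, Or.inl rfl, by rw [one_mul]; exact h⟩
  · exact ⟨-1, Or.inr rfl, by rw [neg_one_mul]; exact h⟩

lemma BQ.princ (Q : BQ K p q s A B σ τ) (H : Hyp p q s) (x : 𝓞 K) (n : ℕ)
    (hn : Ideal.absNorm (Ideal.span {x}) = n) (hpn : ¬ p ∣ n) (h2n : ¬ 2 ∣ n) :
    legendreSym p n = 1 ∧ (n % 8 = 1 ∨ n % 8 = 7) := by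
  have hp : p.Prime := Fact.out
  have hq : q.Prime := Fact.out
  have hs : s.Prime := Fact.out
  obtain ⟨e, he, hN⟩ := absNorm_cases x
  rw [hn] at hN
  have hK := Q.normZ x
  rw [hN] at hK
  obtain ⟨u, v, h1⟩ := Q.k1.form (x : K) _ hK
  obtain ⟨u', v', h3⟩ := Q.k3.form (x : K) (e * n) (by
    rw [hK, AlgEquiv.mul_apply, AlgEquiv.mul_apply, ← Q.comm, Q.σσ]; ring)
  constructor
  · have h := nt1' p (2 * q) (nd_mul hp (nd p 2 hp Nat.prime_two H.p2) (nd p q hp hq H.pq))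
      (2 * p * q) (by ring) (e * n) (dvd_sign p n e he hpn) u v h1
    rwa [legendreSym.mul, leg_sgn H e he, one_mul] at h
  · have h8 : ((2 * q * s : ℕ) : ℤ) % 8 = 2 := by
      have e1 := H.q8
      have e2 : s % 8 = 3 ∨ s % 8 = 7 := by have := H.s4; omega
      have : (2 * q * s) % 8 = 2 := by
        rcases e2 with e2 | e2 <;> simp [Nat.mul_mod, e1, e2]
      omega
    have := nt2 ((2 * q * s : ℕ) : ℤ) (e * n) h8 (by rcases he with rfl | rfl <;> omega) u' v' h3
    rcases he with rfl | rfl <;> omega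

lemma BQ.main (Q : BQ K p q s A B σ τ) (H : Hyp p q s) (a : Ideal (𝓞 K)) (α : 𝓞 K) (hα : α ≠ 0)
    (ha : a ^ 2 = Ideal.span {α}) (n : ℕ) (hn : Ideal.absNorm a = n)
    (hpn : ¬ p ∣ n) (hqn : ¬ q ∣ n) (hsn : ¬ s ∣ n)
    (hlp : legendreSym p n = 1) (hn8 : n % 8 = 1 ∨ n % 8 = 7) :
    ∃ z : 𝓞 K, a = Ideal.span {z} := by
  have hp : p.Prime := Fact.out
  have hq : q.Prime := Fact.out
  obtain ⟨e, he, hN⟩ := absNorm_cases α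
  rw [← ha, map_pow, hn] at hN
  have hK := Q.normZ α
  rw [hN] at hK
  have he1 : e = 1 := by
    rcases he with rfl | rfl
    · rfl
    exfalso
    obtain ⟨u, v, h1⟩ := Q.k1.form (α : K) _ hK
    have hqn2 : ¬ q ∣ n ^ 2 := fun h => hqn (hq.dvd_of_dvd_pow h)
    have h := nt1' q (2 * p) (nd_mul hq (nd q 2 hq Nat.prime_two H.q2) (nd q p hq hp H.pq.symm))
      (2 * p * q) (by ring) (-1 * (n ^ 2 : ℕ)) (dvd_sign q (n ^ 2) (-1) (Or.inr rfl) hqn2) u v h1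
    rw [legendreSym.mul, H.lqn] at h
    push_cast at h
    rw [legendreSym.sq_one' q] at h
    · norm_num at h
    · intro h0
      rw [ZMod.intCast_zmod_eq_zero_iff_dvd] at h0
      exact hqn (by exact_mod_cast h0)
  rw [he1] at hK
  exact Q.main0 H a α hα ha n hpn hqn hsn hlp hn8 (by rw [← hK]; push_cast; ring)

end TwoClass

namespace TwoClass

lemma GT {G : Type*} [CommGroup G] [Finite G] (χ : G →* ℤˣ × ℤˣ)
    (hker : ∀ g : G, g ^ 2 = 1 → χ g = 1 → g = 1)
    (x y : G) (hx : χ x = (-1, 1)) (hy : χ y = (1, -1)) (P : Sylow 2 G) :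
    Nonempty ((P : Subgroup G) ≃* (Multiplicative (ZMod 2) × Multiplicative (ZMod 2))) := by
  have hodd : Odd (P : Subgroup G).index := by
    have := P.not_dvd_index
    rw [← Nat.not_even_iff_odd, even_iff_two_dvd]; exact this
  have hpow : ∀ z : ℤˣ × ℤˣ, z ^ (P : Subgroup G).index = z := by
    obtain ⟨k, hk⟩ := hodd
    intro z
    have h2 : z ^ 2 = 1 := by ext <;> simp
    rw [hk, pow_succ, pow_mul, h2, one_pow, one_mul]
  have hinj : Function.Injective (χ.comp (P : Subgroup G).subtype) := by
    rw [injective_iff_map_eq_one]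
    rintro ⟨g, hg⟩ h1
    replace h1 : χ g = 1 := h1
    obtain ⟨k, hk⟩ := P.2 ⟨g, hg⟩
    have hk : g ^ 2 ^ k = 1 := by simpa using congrArg Subtype.val hk
    have : ∀ k : ℕ, g ^ 2 ^ k = 1 → g = 1 := by
      intro k
      induction k with
      | zero => intro h; simpa using h
      | succ k ih =>
        intro h
        apply ih
        apply hker
        · rw [← pow_mul, ← pow_succ]; exact h
        · rw [map_pow, h1, one_pow]
    exact Subtype.ext (this k hk)
  have hsur0 : Function.Surjective χ := by
    rintro ⟨a, b⟩
    rcases Int.units_eq_one_or a with rfl | rfl <;> rcases Int.units_eq_one_or b with rfl | rfl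
    · exact ⟨1, by rw [map_one]; rfl⟩
    · exact ⟨y, hy⟩
    · exact ⟨x, hx⟩
    · exact ⟨x * y, by rw [map_mul, hx, hy]; rfl⟩
  have hsur : Function.Surjective (χ.comp (P : Subgroup G).subtype) := by
    intro z
    obtain ⟨g, rfl⟩ := hsur0 z
    refine ⟨⟨g ^ (P : Subgroup G).index, Subgroup.pow_index_mem _ g⟩, ?_⟩
    change χ (g ^ (P : Subgroup G).index) = χ g
    rw [map_pow, hpow]
  have e0 : ℤˣ ≃* Multiplicative (ZMod 2) :=
    mulEquivOfPrimeCardEq (p := 2) (by simp) (by simp)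
  exact ⟨(MulEquiv.ofBijective _ ⟨hinj, hsur⟩).trans (MulEquiv.prodCongr e0 e0)⟩

variable {K : Type*} [Field K] [NumberField K]

lemma coprime_norm (c : Ideal (𝓞 K)) (hc : c ≠ ⊥) (m l : ℕ) (hl : l.Prime) (hlm : l ∣ m)
    (h : c ⊔ Ideal.span {(m : 𝓞 K)} = ⊤) : ¬ l ∣ Ideal.absNorm c := by
  intro hd
  have : Finite (𝓞 K ⧸ c) := Ideal.finiteQuotientOfFreeOfNeBot c hc
  rw [Ideal.absNorm_apply, Submodule.cardQuot_apply] at hd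
  have := Fact.mk hl
  obtain ⟨x, hx⟩ := exists_prime_addOrderOf_dvd_card' (G := 𝓞 K ⧸ c) l hd
  have h1 : (1 : 𝓞 K) ∈ c ⊔ Ideal.span {(m : 𝓞 K)} := h ▸ Submodule.mem_top
  obtain ⟨y, hy, z, hz, hyz⟩ := Submodule.mem_sup.1 h1
  obtain ⟨w, rfl⟩ := Ideal.mem_span_singleton'.1 hz
  obtain ⟨j, rfl⟩ := hlm
  have h3 : (1 : 𝓞 K ⧸ c) = Ideal.Quotient.mk c w * (l * j) := by
    have := congrArg (Ideal.Quotient.mk c) hyz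
    rw [map_add, Ideal.Quotient.eq_zero_iff_mem.2 hy, zero_add, map_one] at this
    rw [← this]; push_cast; simp
  have h4 : (l : 𝓞 K ⧸ c) * x = 0 := by
    rw [← nsmul_eq_mul, ← hx, addOrderOf_nsmul_eq_zero]
  have h5 : x = 0 := by
    calc x = 1 * x := (one_mul x).symm
      _ = Ideal.Quotient.mk c w * j * (l * x) := by rw [h3]; ring
      _ = 0 := by rw [h4, mul_zero]
  rw [h5, addOrderOf_zero] at hx
  exact hl.one_lt.ne hx

open nonZeroDivisors in
lemma exists_rep (C : ClassGroup (𝓞 K)) (m : ℕ) (hm : 1 < m) :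
    ∃ c : (Ideal (𝓞 K))⁰, ClassGroup.mk0 c = C ∧
      ∀ l : ℕ, l.Prime → l ∣ m → ¬ l ∣ Ideal.absNorm (c : Ideal (𝓞 K)) := by
  obtain ⟨J, hJ⟩ := ClassGroup.mk0_surjective C⁻¹
  have hJ0 : (J : Ideal (𝓞 K)) ≠ 0 := nonZeroDivisors.coe_ne_zero J
  have hm0 : (m : 𝓞 K) ≠ 0 := by
    have : m ≠ 0 := by omega
    exact_mod_cast this
  have hmt : Ideal.span {(m : 𝓞 K)} ≠ ⊤ := by
    rw [Ne, Ideal.span_singleton_eq_top]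
    intro hu
    have : Algebra.norm ℤ (m : 𝓞 K) ∣ 1 := isUnit_iff_dvd_one.1 (hu.map (Algebra.norm ℤ))
    have e : (m : 𝓞 K) = algebraMap ℤ (𝓞 K) (m : ℤ) := by simp
    rw [e, Algebra.norm_algebraMap] at this
    have hr : Module.finrank ℤ (𝓞 K) ≠ 0 := by
      rw [RingOfIntegers.rank]; exact Module.finrank_pos.ne'
    have h2 : (m : ℤ) ∣ 1 := (dvd_pow_self (m : ℤ) hr).trans this
    have h3 : m ∣ 1 := by exact_mod_cast h2
    have := Nat.dvd_one.1 h3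
    omega
  have hm0' : Ideal.span {(m : 𝓞 K)} ≠ 0 := by
    rw [Ne, Ideal.zero_eq_bot, Ideal.span_singleton_eq_bot]; exact hm0
  obtain ⟨a, ha⟩ := IsDedekindDomain.exists_sup_span_eq
    (I := (J : Ideal (𝓞 K)) * Ideal.span {(m : 𝓞 K)}) (J := J) Ideal.mul_le_left
    (mul_ne_zero hJ0 hm0')
  obtain ⟨c, hc⟩ := Ideal.dvd_iff_le.2 (show Ideal.span {a} ≤ (J : Ideal (𝓞 K)) from ha ▸ le_sup_right)
  rw [hc, ← Ideal.mul_sup] at ha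
  have htop : Ideal.span {(m : 𝓞 K)} ⊔ c = ⊤ := by
    apply mul_left_cancel₀ hJ0
    rw [ha, Ideal.mul_top]
  have hc0 : c ≠ 0 := by
    rintro rfl
    rw [Ideal.zero_eq_bot, sup_bot_eq] at htop
    exact hmt htop
  refine ⟨⟨c, mem_nonZeroDivisors_of_ne_zero hc0⟩, ?_, ?_⟩
  · have ha0 : Ideal.span {a} ≠ 0 := by rw [hc]; exact mul_ne_zero hJ0 hc0
    have : ClassGroup.mk0 (J * ⟨c, mem_nonZeroDivisors_of_ne_zero hc0⟩) = 1 := by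
      rw [ClassGroup.mk0_eq_one_iff]
      rw [Submonoid.coe_mul]
      change (((J : Ideal (𝓞 K)) * c)).IsPrincipal
      rw [← hc]
      exact ⟨a, rfl⟩
    rw [map_mul, hJ] at this
    exact (inv_mul_eq_one.1 this).symm
  · intro l hl hlm
    exact coprime_norm c hc0 m l hl hlm (by rw [sup_comm]; exact htop)

end TwoClass

namespace TwoClass

set_option linter.unusedSectionVars false
variable {K : Type*} [Field K] [NumberField K]

/-- The ideals whose norm is prime to `m`. -/
def Cop (m n : ℕ) : Prop := ∀ l : ℕ, l.Prime → l ∣ m → ¬ l ∣ n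

lemma Cop.mul {m n n' : ℕ} (h : Cop m n) (h' : Cop m n') : Cop m (n * n') :=
  fun l hl hm hd => (hl.dvd_mul.1 hd).elim (h l hl hm) (h' l hl hm)

open nonZeroDivisors in
lemma exists_char (m : ℕ) (hm : 1 < m) (f : ℕ →* ℤ)
    (hf : ∀ (x : 𝓞 K) (n : ℕ), Ideal.absNorm (Ideal.span {x}) = n → Cop m n → f n = 1) :
    ∃ χ : ClassGroup (𝓞 K) →* ℤˣ, ∀ c : (Ideal (𝓞 K))⁰, Cop m (Ideal.absNorm (c : Ideal (𝓞 K))) →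
      (χ (ClassGroup.mk0 c) : ℤ) = f (Ideal.absNorm (c : Ideal (𝓞 K))) := by
  choose r hr1 hr2 using fun C : ClassGroup (𝓞 K) => exists_rep C m hm
  have hr2 : ∀ C, Cop m (Ideal.absNorm (r C : Ideal (𝓞 K))) := hr2
  have key : ∀ c d : (Ideal (𝓞 K))⁰, Cop m (Ideal.absNorm (c : Ideal (𝓞 K))) →
      Cop m (Ideal.absNorm (d : Ideal (𝓞 K))) → ClassGroup.mk0 c * ClassGroup.mk0 d = 1 →
      f (Ideal.absNorm (c : Ideal (𝓞 K))) * f (Ideal.absNorm (d : Ideal (𝓞 K))) = 1 := by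
    intro c d hc hd h
    rw [← map_mul] at h
    obtain ⟨x, hx⟩ := (ClassGroup.mk0_eq_one_iff (c * d).2).1 h
    rw [← map_mul]
    apply hf x _ _ (hc.mul hd)
    rw [← map_mul]
    congr 1
    exact hx.symm
  have uniq : ∀ c d : (Ideal (𝓞 K))⁰, Cop m (Ideal.absNorm (c : Ideal (𝓞 K))) →
      Cop m (Ideal.absNorm (d : Ideal (𝓞 K))) → ClassGroup.mk0 c = ClassGroup.mk0 d →
      f (Ideal.absNorm (c : Ideal (𝓞 K))) = f (Ideal.absNorm (d : Ideal (𝓞 K))) := by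
    intro c d hc hd h
    have h1 := key c (r (ClassGroup.mk0 c)⁻¹) hc (hr2 _) (by rw [hr1]; simp)
    have h2 := key d (r (ClassGroup.mk0 c)⁻¹) hd (hr2 _) (by rw [hr1, h]; simp)
    have h3 : f (Ideal.absNorm (r (ClassGroup.mk0 c)⁻¹ : Ideal (𝓞 K))) ≠ 0 := by
      intro h0; rw [h0] at h1; simp at h1
    exact mul_right_cancel₀ h3 (h1.trans h2.symm)
  let g : ClassGroup (𝓞 K) →* ℤ :=
    { toFun := fun C => f (Ideal.absNorm (r C : Ideal (𝓞 K)))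
      map_one' := by
        obtain ⟨x, hx⟩ := (ClassGroup.mk0_eq_one_iff (r 1).2).1 (hr1 1)
        exact hf x _ (by congr 1; exact hx.symm) (hr2 1)
      map_mul' := by
        intro C D
        rw [← map_mul, ← map_mul]
        exact uniq (r (C * D)) (r C * r D) (hr2 _) (by
          rw [Submonoid.coe_mul, map_mul]; exact (hr2 C).mul (hr2 D)) (by
          rw [map_mul, hr1, hr1, hr1]) }
  refine ⟨g.toHomUnits, fun c hc => ?_⟩
  change f (Ideal.absNorm (r (ClassGroup.mk0 c) : Ideal (𝓞 K))) = _
  exact uniq _ _ (hr2 _) hc (hr1 _)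

variable {p q s : ℕ} {A B : K} {σ τ : K ≃ₐ[ℚ] K}
variable [Fact p.Prime] [Fact q.Prime] [Fact s.Prime]

lemma Cop.spec (n : ℕ) (h : Cop (2 * p * q * s) n) : ¬ 2 ∣ n ∧ ¬ p ∣ n ∧ ¬ q ∣ n ∧ ¬ s ∣ n :=
  ⟨h 2 Nat.prime_two ⟨p * q * s, by ring⟩, h p Fact.out ⟨2 * q * s, by ring⟩,
    h q Fact.out ⟨2 * p * s, by ring⟩, h s Fact.out ⟨2 * p * q, by ring⟩⟩

open nonZeroDivisors in
lemma BQ.group (Q : BQ K p q s A B σ τ) (H : Hyp p q s)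
    (I J : (Ideal (𝓞 K))⁰) (hI : Cop (2 * p * q * s) (Ideal.absNorm (I : Ideal (𝓞 K))))
    (hI1 : legendreSym p (Ideal.absNorm (I : Ideal (𝓞 K)) : ℕ) = -1)
    (hI2 : Ideal.absNorm (I : Ideal (𝓞 K)) % 8 = 1)
    (hJ : Cop (2 * p * q * s) (Ideal.absNorm (J : Ideal (𝓞 K))))
    (hJ1 : legendreSym p (Ideal.absNorm (J : Ideal (𝓞 K)) : ℕ) = 1)
    (hJ2 : Ideal.absNorm (J : Ideal (𝓞 K)) % 8 = 5)
    (P : Sylow 2 (ClassGroup (𝓞 K))) :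
    Nonempty ((P : Subgroup (ClassGroup (𝓞 K))) ≃*
      (Multiplicative (ZMod 2) × Multiplicative (ZMod 2))) := by
  have hm : 1 < 2 * p * q * s := by
    have hp := (Fact.out : p.Prime).pos
    have hq := (Fact.out : q.Prime).pos
    have hs := (Fact.out : s.Prime).pos
    have : 0 < p * q * s := by positivity
    nlinarith
  let f1 : ℕ →* ℤ :=
    { toFun := fun n => legendreSym p n
      map_one' := by simp
      map_mul' := fun a b => by rw [Nat.cast_mul, legendreSym.mul] }
  let f2 : ℕ →* ℤ :=
    { toFun := fun n => ZMod.χ₈ n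
      map_one' := by simp
      map_mul' := fun a b => by rw [Nat.cast_mul, map_mul] }
  have h8 : ∀ n : ℕ, ¬ 2 ∣ n → (f2 n = 1 ↔ n % 8 = 1 ∨ n % 8 = 7) := by
    intro n hn
    change ZMod.χ₈ n = 1 ↔ _
    rw [ZMod.χ₈_nat_eq_if_mod_eight, if_neg (by omega)]
    split_ifs with h <;> simp [h]
  obtain ⟨χ1, h1⟩ := exists_char (K := K) _ hm f1 (fun x n hx hn =>
    (Q.princ H x n hx (Cop.spec n hn).2.1 (Cop.spec n hn).1).1)
  obtain ⟨χ2, h2⟩ := exists_char (K := K) _ hm f2 (fun x n hx hn =>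
    (h8 n (Cop.spec n hn).1).2 (Q.princ H x n hx (Cop.spec n hn).2.1 (Cop.spec n hn).1).2)
  refine GT (χ1.prod χ2) ?_ (ClassGroup.mk0 I) (ClassGroup.mk0 J) ?_ ?_ P
  · intro C hC hχ
    obtain ⟨c, rfl, hc⟩ := exists_rep C _ hm
    have hc : Cop (2 * p * q * s) (Ideal.absNorm (c : Ideal (𝓞 K))) := hc
    obtain ⟨c2, cp, cq, cs⟩ := Cop.spec _ hc
    have e1 : χ1 (ClassGroup.mk0 c) = 1 := congrArg Prod.fst hχ
    have e2 : χ2 (ClassGroup.mk0 c) = 1 := congrArg Prod.snd hχ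
    have g1 := h1 c hc
    have g2 := h2 c hc
    rw [e1] at g1
    rw [e2] at g2
    have hcc : c ^ 2 = ⟨(c : Ideal (𝓞 K)) ^ 2, pow_mem c.2 2⟩ := rfl
    rw [← map_pow, hcc, ClassGroup.mk0_eq_one_iff] at hC
    obtain ⟨α, hα⟩ := hC
    replace hα : (c : Ideal (𝓞 K)) ^ 2 = Ideal.span {α} := hα
    have hc0 : (c : Ideal (𝓞 K)) ≠ 0 := nonZeroDivisors.coe_ne_zero c
    have hα0 : α ≠ 0 := by
      rintro rfl
      have : (c : Ideal (𝓞 K)) ^ 2 = 0 := by rw [hα]; simp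
      exact hc0 (pow_eq_zero_iff two_ne_zero |>.1 this)
    obtain ⟨z, hz⟩ := Q.main H c α hα0 hα _ rfl cp cq cs g1.symm ((h8 _ c2).1 g2.symm)
    exact (ClassGroup.mk0_eq_one_iff c.2).2 ⟨z, hz⟩
  · ext
    · change (χ1 (ClassGroup.mk0 I) : ℤ) = -1
      rw [h1 I hI]; exact hI1
    · change (χ2 (ClassGroup.mk0 I) : ℤ) = 1
      rw [h2 I hI, h8 _ (Cop.spec _ hI).1]; exact Or.inl hI2
  · ext
    · change (χ1 (ClassGroup.mk0 J) : ℤ) = 1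
      rw [h1 J hJ]; exact hJ1
    · change (χ2 (ClassGroup.mk0 J) : ℤ) = -1
      rw [h2 J hJ]
      change ZMod.χ₈ _ = -1
      rw [ZMod.χ₈_nat_eq_if_mod_eight]
      rw [if_neg (by omega), if_neg (by omega)]

end TwoClass

namespace TwoClass

set_option linter.unusedSectionVars false
variable {K : Type*} [Field K] [NumberField K] {p q s : ℕ} {A B : K} {σ τ : K ≃ₐ[ℚ] K}
variable [Fact p.Prime] [Fact q.Prime] [Fact s.Prime]

lemma BQ.prime_norm (Q : BQ K p q s A B σ τ) (l : ℕ) (hl : l.Prime) (hd : ¬ l ∣ 4 * (2 * p * q) * (p * s))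
    (u v : ℤ) (hu : (l : ℤ) ∣ u ^ 2 - 2 * p * q) (hv : (l : ℤ) ∣ v ^ 2 - p * s) :
    ∃ P : Ideal (𝓞 K), P ≠ 0 ∧ Ideal.absNorm P = l := by
  have hlu : ¬ IsUnit (l : 𝓞 K) := by
    intro h
    obtain ⟨y, hy⟩ := isUnit_iff_dvd_one.1 h
    have := int_dvd (K := K) (l : ℤ) 1 (by exact_mod_cast hl.ne_zero) y (by push_cast; exact hy)
    have h3 : l ∣ 1 := by exact_mod_cast this
    exact hl.one_lt.ne' (Nat.dvd_one.1 h3)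
  obtain ⟨P, hP, hlP⟩ := exists_max_ideal_of_mem_nonunits hlu
  have hP0 : P ≠ 0 := by
    rintro rfl
    rw [Ideal.zero_eq_bot, Ideal.mem_bot] at hlP
    exact hl.ne_zero (by exact_mod_cast hlP)
  refine ⟨P, hP0, ?_⟩
  have hl0 : (l : 𝓞 K ⧸ P) = 0 := by
    have := Ideal.Quotient.eq_zero_iff_mem.2 hlP
    simpa using this
  have hz0 : ∀ z : ℤ, (l : ℤ) ∣ z → (z : 𝓞 K ⧸ P) = 0 := by
    rintro z ⟨w, rfl⟩
    push_cast; rw [hl0, zero_mul]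
  have hsq : ∀ (x : 𝓞 K) (D w : ℤ), (x ^ 2 = (D : 𝓞 K)) → (l : ℤ) ∣ w ^ 2 - D →
      ∃ z : ℤ, Ideal.Quotient.mk P x = z := by
    intro x D w h1 h2
    have h3 := hz0 _ h2
    have h4 := congrArg (Ideal.Quotient.mk P) h1
    rw [map_pow, map_intCast] at h4
    push_cast at h3
    have h5 : (Ideal.Quotient.mk P x - w) * (Ideal.Quotient.mk P x + w) = 0 := by
      linear_combination h4 - h3
    rcases mul_eq_zero.1 h5 with h | h
    · exact ⟨w, sub_eq_zero.1 h⟩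
    · exact ⟨-w, by push_cast; exact eq_neg_of_add_eq_zero_left h⟩
  have hcop : IsCoprime (l : ℤ) ((4 * (2 * p * q) * (p * s) : ℕ) : ℤ) :=
    Nat.isCoprime_iff_coprime.2 ((Nat.Prime.coprime_iff_not_dvd hl).2 hd)
  obtain ⟨c1, c2, hc⟩ := hcop
  have hsurj : ∀ x : 𝓞 K, ∃ z : ℤ, Ideal.Quotient.mk P x = z := by
    intro x
    obtain ⟨a, b, ha, hb, t0, t1, t2, t3, -, -, -, -, h⟩ := Q.decomp x
    obtain ⟨z1, hz1⟩ := hsq a (2 * p * q) u (by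
      apply RingOfIntegers.ext
      change algebraMap (𝓞 K) K _ = algebraMap (𝓞 K) K _
      rw [map_pow, map_intCast]
      change (a : K) ^ 2 = _
      rw [ha, Q.hA]; push_cast; ring) hu
    obtain ⟨z2, hz2⟩ := hsq b (p * s) v (by
      apply RingOfIntegers.ext
      change algebraMap (𝓞 K) K _ = algebraMap (𝓞 K) K _
      rw [map_pow, map_intCast]
      change (b : K) ^ 2 = _
      rw [hb, Q.hB]; push_cast; ring) hv
    have h1 := congrArg (Ideal.Quotient.mk P) h
    simp only [map_mul, map_add, map_intCast, map_natCast, map_ofNat, hz1, hz2] at h1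
    have h2 := congrArg (Int.cast : ℤ → 𝓞 K ⧸ P) hc
    push_cast at h2 h1
    rw [hl0, mul_zero, zero_add] at h2
    refine ⟨c2 * ((2 * p * q) * (p * s) * t0 + p * s * z1 * t1 +
      2 * p * q * z2 * t2 + z1 * z2 * t3), ?_⟩
    push_cast
    rw [← h1]
    linear_combination (-Ideal.Quotient.mk P x) * h2
  have hch : CharP (𝓞 K ⧸ P) l := (CharP.charP_iff_prime_eq_zero hl).2 hl0
  have : Fact l.Prime := ⟨hl⟩
  rw [Ideal.absNorm_apply, Submodule.cardQuot_apply]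
  have hbij : Function.Bijective (ZMod.castHom (dvd_refl l) (𝓞 K ⧸ P)) := by
    refine ⟨ZMod.castHom_injective _, fun y => ?_⟩
    obtain ⟨x, rfl⟩ := Ideal.Quotient.mk_surjective y
    obtain ⟨z, hz⟩ := hsurj x
    exact ⟨z, by rw [map_intCast, hz]⟩
  rw [← Nat.card_congr (Equiv.ofBijective _ hbij), Nat.card_zmod]

lemma exists_leg (l : ℕ) [Fact l.Prime] (h2 : l ≠ 2) (e : ℤ) (he : e = 1 ∨ e = -1) :
    ∃ a : ℕ, legendreSym l a = e := by
  rcases he with rfl | rfl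
  · exact ⟨1, by simp⟩
  · obtain ⟨x, hx⟩ := FiniteField.exists_nonsquare (F := ZMod l) (by rwa [ZMod.ringChar_zmod_n])
    refine ⟨x.val, ?_⟩
    rw [legendreSym.eq_neg_one_iff]
    simpa using hx

lemma leg_modEq (l a b : ℕ) [Fact l.Prime] (h : a ≡ b [MOD l]) :
    legendreSym l a = legendreSym l b := by
  have : ((a : ℕ) : ZMod l) = b := (ZMod.natCast_eq_natCast_iff _ _ _).2 h
  unfold legendreSym
  push_cast
  rw [this]

lemma cop_of_leg (l a : ℕ) [hl : Fact l.Prime] (e : ℤ) (he : e = 1 ∨ e = -1)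
    (h : legendreSym l a = e) : Nat.Coprime a l := by
  rw [Nat.coprime_comm, Nat.Prime.coprime_iff_not_dvd hl.out]
  intro hd
  have : legendreSym l a = 0 := (legendreSym.eq_zero_iff l _).2 (by
    rw [ZMod.intCast_zmod_eq_zero_iff_dvd]; exact_mod_cast hd)
  rw [this] at h
  rcases he with rfl | rfl <;> simp at h

lemma Hyp.exists_prime (H : Hyp p q s) (r : ℕ) (hr : Nat.Coprime r 8) (e1 e2 e3 : ℤ) (h1 : e1 = 1 ∨ e1 = -1)
    (h2 : e2 = 1 ∨ e2 = -1) (h3 : e3 = 1 ∨ e3 = -1) :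
    ∃ l : ℕ, l.Prime ∧ l % 8 = r % 8 ∧ legendreSym p l = e1 ∧ legendreSym q l = e2 ∧
      legendreSym s l = e3 := by
  obtain ⟨a, ha⟩ := exists_leg p H.p2 e1 h1
  obtain ⟨b, hb⟩ := exists_leg q H.q2 e2 h2
  obtain ⟨c, hc⟩ := exists_leg s H.s2 e3 h3
  have c8 : ∀ l : ℕ, [Fact l.Prime] → l ≠ 2 → Nat.Coprime 8 l := fun l _ h =>
    Nat.Coprime.pow_left 3 (coprime_two l h)
  have k1 : Nat.Coprime 8 p := c8 p H.p2
  have k2 : Nat.Coprime (8 * p) q := Nat.Coprime.mul_left (c8 q H.q2) (coprime_of_ne p q H.pq)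
  have k3 : Nat.Coprime (8 * p * q) s := Nat.Coprime.mul_left (Nat.Coprime.mul_left (c8 s H.s2)
    (coprime_of_ne p s H.ps)) (coprime_of_ne q s H.qs)
  obtain ⟨x, x1, x2⟩ := Nat.chineseRemainder k1 r a
  obtain ⟨y, y1, y2⟩ := Nat.chineseRemainder k2 x b
  obtain ⟨z, z1, z2⟩ := Nat.chineseRemainder k3 y c
  have key : ∀ w : ℕ, w ≡ z [MOD 8 * p * q * s] → w ≡ r [MOD 8] ∧ legendreSym p w = e1 ∧
      legendreSym q w = e2 ∧ legendreSym s w = e3 := by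
    intro w hw
    have ws : w ≡ c [MOD s] := (hw.of_mul_left _).trans z2
    have w3 : w ≡ y [MOD 8 * p * q] := (hw.of_mul_right _).trans z1
    have wq : w ≡ b [MOD q] := (w3.of_mul_left _).trans y2
    have w2 : w ≡ x [MOD 8 * p] := (w3.of_mul_right _).trans y1
    have wp : w ≡ a [MOD p] := (w2.of_mul_left _).trans x2
    have w1 : w ≡ r [MOD 8] := (w2.of_mul_right _).trans x1
    exact ⟨w1, by rw [leg_modEq p w a wp, ha], by rw [leg_modEq q w b wq, hb],
      by rw [leg_modEq s w c ws, hc]⟩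
  obtain ⟨j1, j2, j3, j4⟩ := key z rfl
  have hz : Nat.Coprime z (8 * p * q * s) := by
    refine Nat.Coprime.mul_right (Nat.Coprime.mul_right (Nat.Coprime.mul_right ?_
      (cop_of_leg p z e1 h1 j2)) (cop_of_leg q z e2 h2 j3)) (cop_of_leg s z e3 h3 j4)
    rw [Nat.Coprime, j1.gcd_eq]; exact hr
  have : NeZero (8 * p * q * s) := ⟨by
    have hp := (Fact.out : p.Prime).pos
    have hq := (Fact.out : q.Prime).pos
    have hs := (Fact.out : s.Prime).pos
    positivity⟩
  obtain ⟨l, -, hl, hlz⟩ := Nat.forall_exists_prime_gt_and_eq_mod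
    ((ZMod.isUnit_iff_coprime z (8 * p * q * s)).2 hz) 0
  obtain ⟨i1, i2, i3, i4⟩ := key l ((ZMod.natCast_eq_natCast_iff _ _ _).1 hlz)
  exact ⟨l, hl, i1, i2, i3, i4⟩

lemma sq_of_leg (l : ℕ) [Fact l.Prime] (D : ℤ) (h : legendreSym l D = 1) :
    ∃ u : ℤ, (l : ℤ) ∣ u ^ 2 - D := by
  have h0 : (D : ZMod l) ≠ 0 := by
    intro h0
    rw [(legendreSym.eq_zero_iff l _).2 h0] at h
    simp at h
  obtain ⟨x, hx⟩ := (legendreSym.eq_one_iff l h0).1 h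
  refine ⟨x.val, ?_⟩
  rw [← ZMod.intCast_zmod_eq_zero_iff_dvd]
  push_cast
  rw [hx, ZMod.natCast_zmod_val]; ring

lemma BQ.exists_ideal (Q : BQ K p q s A B σ τ) (H : Hyp p q s) (r : ℕ) (hr : r = 1 ∨ r = 5) (e1 e2 : ℤ)
    (h1 : e1 = 1 ∨ e1 = -1) (h2 : e2 = 1 ∨ e2 = -1)
    (hχ : e1 * e2 * (if r = 1 then 1 else -1) = 1) :
    ∃ P : Ideal (𝓞 K), P ≠ 0 ∧ Cop (2 * p * q * s) (Ideal.absNorm P) ∧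
      legendreSym p (Ideal.absNorm P : ℕ) = e1 ∧ Ideal.absNorm P % 8 = r := by
  obtain ⟨l, hl, l8, lp, lq, ls⟩ := H.exists_prime r (by rcases hr with rfl | rfl <;> decide)
    e1 e2 e1 h1 h2 h1
  have hlF : Fact l.Prime := ⟨hl⟩
  have l4 : l % 4 = 1 := by rcases hr with rfl | rfl <;> omega
  have l2 : l ≠ 2 := by omega
  have np : l ≠ p := by
    rintro rfl; have := cop_of_leg l l e1 h1 lp; simp at this; exact hl.one_lt.ne' this
  have nq : l ≠ q := by
    rintro rfl; have := cop_of_leg l l e2 h2 lq; simp at this; exact hl.one_lt.ne' this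
  have ns : l ≠ s := by
    rintro rfl; have := cop_of_leg l l e1 h1 ls; simp at this; exact hl.one_lt.ne' this
  have r1 : legendreSym l p = e1 := by
    rw [← legendreSym.quadratic_reciprocity_one_mod_four l4 H.p2, lp]
  have r2 : legendreSym l q = e2 := by
    rw [← legendreSym.quadratic_reciprocity_one_mod_four l4 H.q2, lq]
  have r3 : legendreSym l s = e1 := by
    rw [← legendreSym.quadratic_reciprocity_one_mod_four l4 H.s2, ls]
  have r0 : legendreSym l 2 = if r = 1 then 1 else -1 := by
    rw [legendreSym.at_two l2, ZMod.χ₈_nat_eq_if_mod_eight]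
    rcases hr with rfl | rfl
    · rw [if_neg (by omega), if_pos (by omega), if_pos rfl]
    · rw [if_neg (by omega), if_neg (by omega), if_neg (by omega)]
  have hpp : p.Prime := Fact.out
  have hqp : q.Prime := Fact.out
  have hsp : s.Prime := Fact.out
  obtain ⟨u, hu⟩ := sq_of_leg l (2 * p * q) (by
    rw [legendreSym.mul, legendreSym.mul, r0, r1, r2]; refine Eq.trans ?_ hχ; ring)
  obtain ⟨v, hv⟩ := sq_of_leg l (p * s) (by
    rw [legendreSym.mul, r1, r3]; rcases h1 with rfl | rfl <;> rfl)
  have d2 := nd l 2 hl Nat.prime_two l2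
  have dp := nd l p hl hpp np
  have dq := nd l q hl hqp nq
  have ds := nd l s hl hsp ns
  obtain ⟨P, hP, hPl⟩ := Q.prime_norm l hl (nd_mul hl (nd_mul hl (nd_mul hl (a := 2) (b := 2) d2 d2)
    (nd_mul hl (nd_mul hl d2 dp) dq)) (nd_mul hl dp ds)) u v hu hv
  refine ⟨P, hP, ?_, ?_, ?_⟩
  · rw [hPl]
    intro l' hl' hd hdl
    rw [(Nat.prime_dvd_prime_iff_eq hl' hl).1 hdl] at hd
    exact nd_mul hl (nd_mul hl (nd_mul hl d2 dp) dq) ds hd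
  · rw [hPl, lp]
  · rw [hPl, l8]; rcases hr with rfl | rfl <;> rfl

lemma BQ.final (Q : BQ K p q s A B σ τ) (H : Hyp p q s)
    (P : Sylow 2 (ClassGroup (𝓞 K))) :
    Nonempty ((P : Subgroup (ClassGroup (𝓞 K))) ≃*
      (Multiplicative (ZMod 2) × Multiplicative (ZMod 2))) := by
  obtain ⟨I, hI, i1, i2, i3⟩ := Q.exists_ideal H 1 (Or.inl rfl) (-1) (-1) (Or.inr rfl) (Or.inr rfl)
    (by norm_num)
  obtain ⟨J, hJ, j1, j2, j3⟩ := Q.exists_ideal H 5 (Or.inr rfl) 1 (-1) (Or.inl rfl) (Or.inr rfl)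
    (by norm_num)
  exact Q.group H ⟨I, mem_nonZeroDivisors_of_ne_zero hI⟩ ⟨J, mem_nonZeroDivisors_of_ne_zero hJ⟩
    i1 i2 i3 j1 j2 j3 P

end TwoClass

namespace TwoClass

lemma gal_pm {K : Type*} [Field K] [NumberField K] (D : K) (N : ℕ) (hD : D ^ 2 = N)
    (f : K ≃ₐ[ℚ] K) : f D = D ∨ f D = -D := by
  apply sq_eq_sq_iff_eq_or_eq_neg.1
  rw [← map_pow, hD, map_natCast]

lemma gal_move {K : Type*} [Field K] [NumberField K] [IsGalois ℚ K] (D : K) (N l M : ℕ)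
    (hl : l.Prime) (hN : N = l * M) (hM : ¬ l ∣ M) (hD : D ^ 2 = N) :
    ∃ f : K ≃ₐ[ℚ] K, f D = -D := by
  by_contra hc
  push Not at hc
  have : D ∈ (⊥ : IntermediateField ℚ K) := by
    rw [IsGalois.mem_bot_iff_fixed]
    intro f
    exact (gal_pm D N hD f).resolve_right (hc f)
  obtain ⟨r, rfl⟩ := IntermediateField.mem_bot.1 this
  refine not_sq l hl (N : ℤ) ⟨M, by rw [hN]; push_cast; ring⟩ (by
    rw [hN]; exact sq_ndvd l M hl hM) r ?_
  rw [eq_ratCast] at hD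
  exact_mod_cast hD.symm

lemma gal_BQ (K : Type*) [Field K] [NumberField K] [IsGalois ℚ K] (p q s : ℕ)
    [Fact p.Prime] [Fact q.Prime] [Fact s.Prime] (H : Hyp p q s) (A B : K)
    (hA : A ^ 2 = 2 * p * q) (hB : B ^ 2 = p * s)
    (hext : ∀ f g : K ≃ₐ[ℚ] K, f A = g A → f B = g B → f = g) :
    ∃ σ τ : K ≃ₐ[ℚ] K, BQ K p q s A B σ τ := by
  have hp : p.Prime := Fact.out
  have hq : q.Prime := Fact.out
  have hs : s.Prime := Fact.out
  have hpK : (p : K) ≠ 0 := by exact_mod_cast hp.ne_zero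
  have hqK : (q : K) ≠ 0 := by exact_mod_cast hq.ne_zero
  have hsK : (s : K) ≠ 0 := by exact_mod_cast hs.ne_zero
  have hA' : A ^ 2 = (2 * p * q : ℕ) := by rw [hA]; push_cast; ring
  have hB' : B ^ 2 = (p * s : ℕ) := by rw [hB]; push_cast; ring
  have hC' : (A * B / p) ^ 2 = (2 * q * s : ℕ) := by
    rw [div_pow, mul_pow, hA, hB]; push_cast; field_simp
  have hA0 : A ≠ 0 := by
    rintro rfl
    have : (2 : K) * p * q ≠ 0 := mul_ne_zero (mul_ne_zero two_ne_zero hpK) hqK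
    rw [← hA] at this
    simp at this
  have hB0 : B ≠ 0 := by
    rintro rfl
    have : (p : K) * s ≠ 0 := mul_ne_zero hpK hsK
    rw [← hB] at this
    simp at this
  have nA : -A ≠ A := by rw [Ne, neg_eq_self]; exact hA0
  have nB : -B ≠ B := by rw [Ne, neg_eq_self]; exact hB0
  obtain ⟨f1, h1⟩ := gal_move A (2 * p * q) q (2 * p) hq (by ring)
    (nd_mul hq (nd q 2 hq Nat.prime_two H.q2) (nd q p hq hp H.pq.symm)) hA'
  obtain ⟨f2, h2⟩ := gal_move B (p * s) p s hp rfl (nd p s hp hs H.ps) hB'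
  obtain ⟨f3, h3⟩ := gal_move (A * B / p) (2 * q * s) q (2 * s) hq (by ring)
    (nd_mul hq (nd q 2 hq Nat.prime_two H.q2) (nd q s hq hs H.qs)) hC'
  rw [map_div₀, map_mul, map_natCast] at h3
  have h3 : f3 A * f3 B = -(A * B) := by
    field_simp at h3; rw [h3]
  have hAB : A * B ≠ 0 := mul_ne_zero hA0 hB0
  have nAB : A * B ≠ -(A * B) := fun h => by
    have : -(A * B) = A * B := h.symm
    rw [neg_eq_self] at this
    exact hAB this
  have hst : ∃ σ τ : K ≃ₐ[ℚ] K, (σ A = A ∧ σ B = -B) ∧ (τ A = -A ∧ τ B = B) := by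
    rcases gal_pm A _ hA' f3 with a3 | a3 <;> rcases gal_pm B _ hB' f3 with b3 | b3
    · rw [a3, b3] at h3; exact absurd h3 nAB
    · rcases gal_pm B _ hB' f1 with b1 | b1
      · exact ⟨f3, f1, ⟨a3, b3⟩, h1, b1⟩
      · refine ⟨f3, f1 * f3, ⟨a3, b3⟩, ?_, ?_⟩
        · rw [AlgEquiv.mul_apply, a3, h1]
        · rw [AlgEquiv.mul_apply, b3, map_neg, b1, neg_neg]
    · rcases gal_pm A _ hA' f2 with a2 | a2
      · exact ⟨f2, f3, ⟨a2, h2⟩, a3, b3⟩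
      · refine ⟨f2 * f3, f3, ⟨?_, ?_⟩, a3, b3⟩
        · rw [AlgEquiv.mul_apply, a3, map_neg, a2, neg_neg]
        · rw [AlgEquiv.mul_apply, b3, h2]
    · rw [a3, b3, neg_mul_neg] at h3; exact absurd h3 nAB
  obtain ⟨σ, τ, ⟨σA, σB⟩, τA, τB⟩ := hst
  have all : ∀ f : K ≃ₐ[ℚ] K, f = 1 ∨ f = σ ∨ f = τ ∨ f = σ * τ := by
    intro f
    rcases gal_pm A _ hA' f with a | a <;> rcases gal_pm B _ hB' f with b | b
    · exact Or.inl (hext _ _ (by rw [a]; rfl) (by rw [b]; rfl))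
    · exact Or.inr (Or.inl (hext _ _ (by rw [a, σA]) (by rw [b, σB])))
    · exact Or.inr (Or.inr (Or.inl (hext _ _ (by rw [a, τA]) (by rw [b, τB]))))
    · exact Or.inr (Or.inr (Or.inr (hext _ _
        (by rw [a, AlgEquiv.mul_apply, τA, map_neg, σA])
        (by rw [b, AlgEquiv.mul_apply, τB, σB]))))
  have ss : σ * σ = 1 := hext _ _ (by rw [AlgEquiv.mul_apply, σA, σA]; rfl)
    (by rw [AlgEquiv.mul_apply, σB, map_neg, σB, neg_neg]; rfl)
  have tt : τ * τ = 1 := hext _ _ (by rw [AlgEquiv.mul_apply, τA, map_neg, τA, neg_neg]; rfl)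
    (by rw [AlgEquiv.mul_apply, τB, τB]; rfl)
  have st : σ * τ = τ * σ := hext _ _
    (by rw [AlgEquiv.mul_apply, AlgEquiv.mul_apply, τA, map_neg, σA, τA])
    (by rw [AlgEquiv.mul_apply, AlgEquiv.mul_apply, σB, map_neg, τB, σB])
  have d1 : (1 : K ≃ₐ[ℚ] K) ≠ σ := fun h => nB (by rw [← σB, ← h]; rfl)
  have d2 : (1 : K ≃ₐ[ℚ] K) ≠ τ := fun h => nA (by rw [← τA, ← h]; rfl)
  have d4 : σ ≠ τ := fun h => nA (by rw [← τA, ← h, σA])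
  have d3 : (1 : K ≃ₐ[ℚ] K) ≠ σ * τ := fun h => d4 (by
    calc σ = σ * 1 := (mul_one σ).symm
      _ = σ * (σ * τ) := by rw [← h]
      _ = τ := by rw [← mul_assoc, ss, one_mul])
  have d5 : σ ≠ σ * τ := fun h => d2 (by
    apply mul_left_cancel (a := σ); rw [mul_one]; exact h)
  have d6 : τ ≠ σ * τ := fun h => d1 (by
    apply mul_right_cancel (b := τ); rw [one_mul]; exact h)
  classical
  have huniv : (Finset.univ : Finset (K ≃ₐ[ℚ] K)) = {1, σ, τ, σ * τ} := by
    ext f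
    simpa using all f
  refine ⟨σ, τ, hp.ne_zero, hq.ne_zero, hs.ne_zero, hA, hB, σA, σB, τA, τB,
    fun x => DFunLike.congr_fun ss x, fun x => DFunLike.congr_fun tt x,
    fun x => DFunLike.congr_fun st x, ?_, ?_⟩
  · intro x hx1 hx2
    have : x ∈ (⊥ : IntermediateField ℚ K) := by
      rw [IsGalois.mem_bot_iff_fixed]
      intro f
      rcases all f with rfl | rfl | rfl | rfl
      · rfl
      · exact hx1
      · exact hx2
      · rw [AlgEquiv.mul_apply, hx2, hx1]
    obtain ⟨r, hr⟩ := IntermediateField.mem_bot.1 this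
    exact ⟨r, by rw [← hr, eq_ratCast]⟩
  · intro x
    have := Algebra.norm_eq_prod_automorphisms (K := ℚ) (L := K) x
    rw [eq_ratCast] at this
    rw [this, huniv, Finset.prod_insert (by simp [d1, d2, d3]),
      Finset.prod_insert (by simp only [Finset.mem_insert, Finset.mem_singleton]; tauto),
      Finset.prod_insert (by simp only [Finset.mem_singleton]; exact d6), Finset.prod_singleton,
      AlgEquiv.mul_apply, AlgEquiv.one_apply]
    ring

end TwoClass

namespace TwoClass

open Polynomial in
lemma splits_aux (L : Type*) [Field L] [Algebra ℚ L] (x : ℂ) (D : L) (N : ℕ) (hx : x ^ 2 = N)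
    (hD : D ^ 2 = N) : IsIntegral ℚ x ∧ ((minpoly ℚ x).map (algebraMap ℚ L)).Splits := by
  have hr : aeval x (X ^ 2 - C (N : ℚ)) = 0 := by simp [hx]
  refine ⟨⟨X ^ 2 - C (N : ℚ), monic_X_pow_sub_C _ two_ne_zero, by
    rw [← aeval_def]; exact hr⟩, ?_⟩
  have hd := Polynomial.map_dvd (algebraMap ℚ L) (minpoly.dvd ℚ x hr)
  have e : (X ^ 2 - C (N : ℚ)).map (algebraMap ℚ L) = (X - C D) * (X - C (-D)) := by
    have e1 : (C (N : ℚ)).map (algebraMap ℚ L) = C D ^ 2 := by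
      rw [map_C, map_natCast, ← hD, C_pow]
    rw [Polynomial.map_sub, Polynomial.map_pow, map_X, e1, C_neg]
    ring
  rw [e] at hd
  exact Splits.of_dvd ((Splits.X_sub_C D).mul (Splits.X_sub_C (-D)))
    (mul_ne_zero (X_sub_C_ne_zero _) (X_sub_C_ne_zero _)) hd

theorem mainK (p q s : ℕ) [Fact p.Prime] [Fact q.Prime] [Fact s.Prime] (H : Hyp p q s)
    (P : Sylow 2 (ClassGroup (𝓞 (fieldK p q s)))) :
    Nonempty ((P : Subgroup (ClassGroup (𝓞 (fieldK p q s)))) ≃*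
      (Multiplicative (ZMod 2) × Multiplicative (ZMod 2))) := by
  have hAm : ((Real.sqrt (2 * p * q) : ℝ) : ℂ) ∈ fieldK p q s :=
    IntermediateField.subset_adjoin _ _ (by simp)
  have hBm : ((Real.sqrt (p * s) : ℝ) : ℂ) ∈ fieldK p q s :=
    IntermediateField.subset_adjoin _ _ (by simp)
  have hA : ((Real.sqrt (2 * p * q) : ℝ) : ℂ) ^ 2 = (2 * p * q : ℕ) := by
    rw [← Complex.ofReal_pow, Real.sq_sqrt (by positivity)]; push_cast; ring
  have hB : ((Real.sqrt (p * s) : ℝ) : ℂ) ^ 2 = (p * s : ℕ) := by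
    rw [← Complex.ofReal_pow, Real.sq_sqrt (by positivity)]; push_cast; ring
  obtain ⟨A, hA1⟩ : ∃ A : fieldK p q s, (A : ℂ) = ((Real.sqrt (2 * p * q) : ℝ) : ℂ) :=
    ⟨⟨_, hAm⟩, rfl⟩
  obtain ⟨B, hB1⟩ : ∃ B : fieldK p q s, (B : ℂ) = ((Real.sqrt (p * s) : ℝ) : ℂ) :=
    ⟨⟨_, hBm⟩, rfl⟩
  have hA2 : A ^ 2 = (2 * p * q : ℕ) := by
    apply Subtype.ext
    change (A : ℂ) ^ 2 = _
    rw [hA1, hA]; rfl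
  have hB2 : B ^ 2 = (p * s : ℕ) := by
    apply Subtype.ext
    change (B : ℂ) ^ 2 = _
    rw [hB1, hB]; rfl
  have hS : ∀ x ∈ ({((Real.sqrt (2 * p * q) : ℝ) : ℂ), ((Real.sqrt (p * s) : ℝ) : ℂ)} : Set ℂ),
      IsIntegral ℚ x ∧ ((minpoly ℚ x).map (algebraMap ℚ (fieldK p q s))).Splits := by
    intro x hx
    rcases hx with rfl | rfl
    · exact splits_aux _ _ A _ hA hA2
    · exact splits_aux _ _ B _ hB hB2
  have hfd : FiniteDimensional ℚ (fieldK p q s) := by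
    unfold fieldK
    have : Finite ({((Real.sqrt (2 * p * q) : ℝ) : ℂ), ((Real.sqrt (p * s) : ℝ) : ℂ)} : Set ℂ) :=
      Set.toFinite _
    exact IntermediateField.finiteDimensional_adjoin (fun x hx => (hS x hx).1)
  have hnf : NumberField (fieldK p q s) := ⟨⟩
  have hnormal : Normal ℚ (fieldK p q s) := by
    rw [normal_iff]
    intro x
    refine ⟨Algebra.IsIntegral.isIntegral x, ?_⟩
    have h := IntermediateField.splits_of_mem_adjoin ℚ ℂ (L := fieldK p q s) hS x.2
    have e : minpoly ℚ (x : ℂ) = minpoly ℚ x :=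
      minpoly.algebraMap_eq (B := fieldK p q s) (B' := ℂ) (algebraMap (fieldK p q s) ℂ).injective x
    rwa [e] at h
  have hgal : IsGalois ℚ (fieldK p q s) := ⟨⟩
  obtain ⟨σ, τ, Q⟩ := gal_BQ (fieldK p q s) p q s H A B (by rw [hA2]; push_cast; ring)
    (by rw [hB2]; push_cast; ring) (by
      intro f g h1 h2
      have : (f : fieldK p q s →ₐ[ℚ] fieldK p q s) = (g : fieldK p q s →ₐ[ℚ] fieldK p q s) := by
        refine IntermediateField.algHom_ext_of_eq_adjoin (F := ℚ) (E := ℂ) (S := fieldK p q s) rfl ?_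
        intro x hx
        rcases hx with rfl | rfl
        · have e : A = ⟨_, hAm⟩ := Subtype.ext hA1
          rw [e] at h1
          exact h1
        · have e : B = ⟨_, hBm⟩ := Subtype.ext hB1
          rw [e] at h2
          exact h2
      ext x
      exact congrArg Subtype.val (DFunLike.congr_fun this x))
  exact Q.final H P

end TwoClass

theorem two_class_group_of_K
    (p q s : ℕ) (hp : p.Prime) (hq : q.Prime) (hs : s.Prime)
    (hpq : p ≠ q) (hps : p ≠ s) (hqs : q ≠ s)
    (hp8 : p % 8 = 5) (hq8 : q % 8 = 3) (hs4 : s % 4 = 3)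
    (hQRq : IsSquare (p : ZMod q)) (hQRs : IsSquare (p : ZMod s)) :
    ∀ P : Sylow 2 (ClassGroup (𝓞 (fieldK p q s))),
      Nonempty ((P : Subgroup (ClassGroup (𝓞 (fieldK p q s)))) ≃*
        (Multiplicative (ZMod 2) × Multiplicative (ZMod 2))) := by
  have : Fact p.Prime := ⟨hp⟩
  have : Fact q.Prime := ⟨hq⟩
  have : Fact s.Prime := ⟨hs⟩
  exact TwoClass.mainK p q s ⟨hpq, hps, hqs, hp8, hq8, hs4, hQRq, hQRs⟩
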